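/- arXiv:1304.0174 — 2 statements merged into one kernel-verified Lean document; each statement's English description precedes it below -/
import Mathlib

section
/- Let α : F → F be a Plücker transformation of the flag space of a 3-dimensional projective space. Then either there exists a unique order automorphism κ of the lattice of K-subspaces of V such that α(P, g, ε) = (κ P, κ g, κ ε) for every flag (P, g, ε), or there exists a unique order-reversing bijection δ of the lattice of K-subspaces of V such that α(P, g, ε) = (δ ε, δ g, δ P) for every flag (P, g, ε). -/
/-- A flag of a 3-dimensional projective space: a triple `(P, g, ε)` of subspaces of the
underlying 4-dimensional vector space `V` with `finrank P = 1`, `finrank g = 2`,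
`finrank ε = 3` and `P ≤ g ≤ ε`. -/
structure ProjFlag (K : Type*) (V : Type*) [DivisionRing K] [AddCommGroup V]
    [Module K V] where
  pt : Submodule K V
  ln : Submodule K V
  pl : Submodule K V
  finrank_pt : Module.finrank K pt = 1
  finrank_ln : Module.finrank K ln = 2
  finrank_pl : Module.finrank K pl = 3
  pt_le_ln : pt ≤ ln
  ln_le_pl : ln ≤ pl

/-- Two flags are related if they agree in at least two of their three components. -/
def ProjFlag.Related {K V : Type*} [DivisionRing K] [AddCommGroup V] [Module K V]
    (Φ Ψ : ProjFlag K V) : Prop :=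
  (Φ.pt = Ψ.pt ∧ Φ.ln = Ψ.ln) ∨ (Φ.pt = Ψ.pt ∧ Φ.pl = Ψ.pl) ∨ (Φ.ln = Ψ.ln ∧ Φ.pl = Ψ.pl)

namespace PF

open Module

variable {K V : Type*} [DivisionRing K] [AddCommGroup V] [Module K V]

theorem ext_dim [FiniteDimensional K V] {U W Z : Submodule K V} (h1 : U ≤ W) (h2 : U ≤ Z)
    (h3 : ¬ W ≤ Z) :
    ∃ X : Submodule K V, U ≤ X ∧ X ≤ W ∧ ¬ X ≤ Z ∧ finrank K X = finrank K U + 1 := by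
  obtain ⟨v, hvW, hvZ⟩ := Set.not_subset.1 h3
  have hvU : v ∉ U := fun h => hvZ (h2 h)
  have hv0 : v ≠ 0 := fun h => hvU (h ▸ U.zero_mem)
  refine ⟨U ⊔ K ∙ v, le_sup_left, sup_le h1 ?_, ?_, ?_⟩
  · rw [Submodule.span_singleton_le_iff_mem]; exact hvW
  · intro h
    exact hvZ (h (le_sup_right (a := U) (Submodule.mem_span_singleton_self v)))
  · have h := Submodule.finrank_sup_add_finrank_inf_eq U (K ∙ v)
    have hd : U ⊓ (K ∙ v) = ⊥ := by
      rw [← disjoint_iff]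
      exact (Submodule.disjoint_span_singleton' hv0).2 hvU
    rw [hd, finrank_bot, finrank_span_singleton hv0] at h
    simpa using h

theorem grow [FiniteDimensional K V] {U W : Submodule K V} (h1 : U ≤ W)
    (h : finrank K U < finrank K W) :
    ∃ X : Submodule K V, U ≤ X ∧ X ≤ W ∧ finrank K X = finrank K U + 1 := by
  obtain ⟨X, a, b, _, d⟩ := ext_dim h1 le_rfl
    (fun hh => by have := Submodule.finrank_mono (R := K) hh; omega)
  exact ⟨X, a, b, d⟩

theorem sup_eq [FiniteDimensional K V] {A B W : Submodule K V} {n : ℕ} (hA : finrank K A = n)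
    (hB : finrank K B = n) (hW : finrank K W = n + 1) (hne : A ≠ B) (h1 : A ≤ W) (h2 : B ≤ W) :
    A ⊔ B = W := by
  apply Submodule.eq_of_le_of_finrank_le (sup_le h1 h2)
  by_contra hlt
  have h3 : finrank K A ≤ finrank K (A ⊔ B : Submodule K V) :=
    Submodule.finrank_mono le_sup_left
  have e1 : A = A ⊔ B := Submodule.eq_of_le_of_finrank_le le_sup_left (by omega)
  have e2 : B = A ⊔ B := Submodule.eq_of_le_of_finrank_le le_sup_right (by omega)
  exact hne (e1.trans e2.symm)

theorem inf_dim1 [FiniteDimensional K V] {A B : Submodule K V} (hA : finrank K A = 1)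
    (hB : finrank K B = 1) (hne : A ≠ B) : finrank K (A ⊔ B : Submodule K V) = 2 := by
  have h := Submodule.finrank_sup_add_finrank_inf_eq A B
  have : finrank K (A ⊓ B : Submodule K V) < 1 := by
    by_contra hlt
    have e1 : A ⊓ B = A := Submodule.eq_of_le_of_finrank_le inf_le_left (by omega)
    have e2 : A ⊓ B = B := Submodule.eq_of_le_of_finrank_le inf_le_right (by omega)
    exact hne (e1.symm.trans e2)
  omega

theorem inf_dim3 (hV : finrank K V = 4) [FiniteDimensional K V] {A B : Submodule K V}
    (hA : finrank K A = 3)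
    (hB : finrank K B = 3) (hne : A ≠ B) : finrank K (A ⊓ B : Submodule K V) = 2 := by
  have h := Submodule.finrank_sup_add_finrank_inf_eq A B
  have h4 := sup_eq (W := ⊤) hA hB (by rw [finrank_top, hV]) hne le_top le_top
  rw [h4, finrank_top, hV] at h
  omega

theorem flag_ext {Φ Ψ : ProjFlag K V} (h1 : Φ.pt = Ψ.pt) (h2 : Φ.ln = Ψ.ln)
    (h3 : Φ.pl = Ψ.pl) : Φ = Ψ := by
  cases Φ; cases Ψ; simp_all

def A1 (Φ Ψ : ProjFlag K V) : Prop := Φ.pt ≠ Ψ.pt ∧ Φ.ln = Ψ.ln ∧ Φ.pl = Ψ.pl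
def A2 (Φ Ψ : ProjFlag K V) : Prop := Φ.pt = Ψ.pt ∧ Φ.ln ≠ Ψ.ln ∧ Φ.pl = Ψ.pl
def A3 (Φ Ψ : ProjFlag K V) : Prop := Φ.pt = Ψ.pt ∧ Φ.ln = Ψ.ln ∧ Φ.pl ≠ Ψ.pl

theorem rel_iff (Φ Ψ : ProjFlag K V) :
    Φ.Related Ψ ↔ (Φ = Ψ ∨ A1 Φ Ψ ∨ A2 Φ Ψ ∨ A3 Φ Ψ) := by
  constructor
  · intro h
    by_cases e : Φ = Ψ
    · exact Or.inl e
    · have := fun a b c => e (flag_ext a b c)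
      unfold ProjFlag.Related at h
      unfold A1 A2 A3
      tauto
  · rintro (rfl | h | h | h)
    · exact Or.inl ⟨rfl, rfl⟩
    · exact Or.inr (Or.inr h.2)
    · exact Or.inr (Or.inl ⟨h.1, h.2.2⟩)
    · exact Or.inl ⟨h.1, h.2.1⟩

theorem ex_A1 [FiniteDimensional K V] (Φ : ProjFlag K V) : ∃ Ψ, A1 Φ Ψ := by
  obtain ⟨X, _, h2, h3, h4⟩ := ext_dim (U := ⊥) (W := Φ.ln) (Z := Φ.pt) bot_le bot_le
    (fun h => by
      have := Submodule.finrank_mono (R := K) h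
      rw [Φ.finrank_ln, Φ.finrank_pt] at this; omega)
  refine ⟨⟨X, Φ.ln, Φ.pl, by simpa using h4, Φ.finrank_ln, Φ.finrank_pl, h2, Φ.ln_le_pl⟩, ?_, rfl, rfl⟩
  rintro rfl
  exact h3 le_rfl

theorem ex_A3 (hV : finrank K V = 4) [FiniteDimensional K V] (Φ : ProjFlag K V) :
    ∃ Ψ, A3 Φ Ψ := by
  obtain ⟨X, h1, h2, h3, h4⟩ := ext_dim (U := Φ.ln) (W := ⊤) (Z := Φ.pl) le_top Φ.ln_le_pl
    (fun h => by
      have := Submodule.finrank_mono (R := K) h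
      rw [finrank_top, Φ.finrank_pl, hV] at this; omega)
  refine ⟨⟨Φ.pt, Φ.ln, X, Φ.finrank_pt, Φ.finrank_ln, by rw [h4, Φ.finrank_ln], Φ.pt_le_ln, h1⟩,
    rfl, rfl, ?_⟩
  rintro rfl
  exact h3 le_rfl

def Sq (Φ Ψ : ProjFlag K V) : Prop :=
  ∃ X Y : ProjFlag K V, X ≠ Φ ∧ Φ.Related X ∧ ¬ X.Related Ψ ∧ Y ≠ Φ ∧ Y.Related Ψ ∧ Y.Related X

theorem A2_not_Sq [FiniteDimensional K V] {Φ Ψ : ProjFlag K V} (h : A2 Φ Ψ) : ¬ Sq Φ Ψ := by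
  rintro ⟨X, Y, hX, hΦX, hXΨ, hY, hYΨ, hYX⟩
  obtain ⟨a1, a2, a3⟩ := h
  have hY' : ¬ (Y.pt = Φ.pt ∧ Y.ln = Φ.ln ∧ Y.pl = Φ.pl) := fun h => hY (flag_ext h.1 h.2.1 h.2.2)
  rw [rel_iff] at hΦX
  rcases hΦX with e | ⟨b1, b2, b3⟩ | ⟨b1, b2, b3⟩ | ⟨b1, b2, b3⟩
  · exact hX e.symm
  · have key : Y.pt = X.pt ∧ Y.ln = Ψ.ln := by
      unfold ProjFlag.Related at hYΨ hYX
      rw [← a1, ← a3] at hYΨ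
      rw [← b2, ← b3] at hYX
      rcases hYΨ with ⟨c, d⟩ | ⟨c, d⟩ | ⟨c, d⟩ <;> rcases hYX with ⟨e, f⟩ | ⟨e, f⟩ | ⟨e, f⟩ <;>
        simp_all
    have hle : X.pt ≤ Ψ.ln := by rw [← key.1, ← key.2]; exact Y.pt_le_ln
    have e1 := sup_eq Φ.finrank_pt X.finrank_pt Φ.finrank_ln b1 Φ.pt_le_ln (b2 ▸ X.pt_le_ln)
    have e2 := sup_eq Φ.finrank_pt X.finrank_pt Ψ.finrank_ln b1 (a1 ▸ Ψ.pt_le_ln) hle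
    exact a2 (e1.symm.trans e2)
  · exact hXΨ (Or.inr (Or.inl ⟨b1.symm.trans a1, b3.symm.trans a3⟩))
  · have key : Y.ln = Ψ.ln ∧ Y.pl = X.pl := by
      unfold ProjFlag.Related at hYΨ hYX
      rw [← a1, ← a3] at hYΨ
      rw [← b1, ← b2] at hYX
      rcases hYΨ with ⟨c, d⟩ | ⟨c, d⟩ | ⟨c, d⟩ <;> rcases hYX with ⟨e, f⟩ | ⟨e, f⟩ | ⟨e, f⟩ <;>
        simp_all
    have hle : Ψ.ln ≤ X.pl := by rw [← key.1, ← key.2]; exact Y.ln_le_pl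
    have e1 := sup_eq Φ.finrank_ln Ψ.finrank_ln Φ.finrank_pl a2 Φ.ln_le_pl (a3 ▸ Ψ.ln_le_pl)
    have e2 := sup_eq Φ.finrank_ln Ψ.finrank_ln X.finrank_pl a2 (b2 ▸ X.ln_le_pl) hle
    exact b3 (e1.symm.trans e2)

theorem A1_Sq (hV : finrank K V = 4) [FiniteDimensional K V] {Φ Ψ : ProjFlag K V} (h : A1 Φ Ψ) :
    Sq Φ Ψ := by
  obtain ⟨X, x1, x2, x3⟩ := ex_A3 hV Φ
  obtain ⟨a1, a2, a3⟩ := h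
  refine ⟨X, ⟨Ψ.pt, Φ.ln, X.pl, Ψ.finrank_pt, Φ.finrank_ln, X.finrank_pl, a2 ▸ Ψ.pt_le_ln,
    x2 ▸ X.ln_le_pl⟩, ?_, ?_, ?_, ?_, ?_, ?_⟩
  · rintro rfl; exact x3 rfl
  · exact Or.inl ⟨x1, x2⟩
  · rintro (⟨c, d⟩ | ⟨c, d⟩ | ⟨c, d⟩)
    · exact a1 (x1.trans c)
    · exact a1 (x1.trans c)
    · exact x3 (a3.trans d.symm)
  · intro e
    exact x3 (congrArg ProjFlag.pl e).symm
  · exact Or.inl ⟨rfl, a2⟩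
  · exact Or.inr (Or.inr ⟨x2, rfl⟩)

theorem A3_Sq [FiniteDimensional K V] {Φ Ψ : ProjFlag K V} (h : A3 Φ Ψ) :
    Sq Φ Ψ := by
  obtain ⟨X, x1, x2, x3⟩ := ex_A1 Φ
  obtain ⟨a1, a2, a3⟩ := h
  refine ⟨X, ⟨X.pt, Φ.ln, Ψ.pl, X.finrank_pt, Φ.finrank_ln, Ψ.finrank_pl, x2 ▸ X.pt_le_ln,
    a2 ▸ Ψ.ln_le_pl⟩, ?_, ?_, ?_, ?_, ?_, ?_⟩
  · rintro rfl; exact x1 rfl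
  · exact Or.inr (Or.inr ⟨x2, x3⟩)
  · rintro (⟨c, d⟩ | ⟨c, d⟩ | ⟨c, d⟩)
    · exact x1 (a1.trans c.symm)
    · exact x1 (a1.trans c.symm)
    · exact a3 (x3.trans d)
  · intro e
    exact x1 (congrArg ProjFlag.pt e).symm
  · exact Or.inr (Or.inr ⟨a2, rfl⟩)
  · exact Or.inl ⟨rfl, x2⟩

theorem A2_iff (hV : finrank K V = 4) [FiniteDimensional K V] (Φ Ψ : ProjFlag K V) :
    A2 Φ Ψ ↔ (Φ ≠ Ψ ∧ Φ.Related Ψ ∧ ¬ Sq Φ Ψ) := by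
  constructor
  · intro h
    exact ⟨fun e => h.2.1 (by rw [e]), Or.inr (Or.inl ⟨h.1, h.2.2⟩), A2_not_Sq h⟩
  · rintro ⟨h1, h2, h3⟩
    rw [rel_iff] at h2
    rcases h2 with h | h | h | h
    · exact absurd h h1
    · exact absurd (A1_Sq hV h) h3
    · exact h
    · exact absurd (A3_Sq h) h3

/-- Plücker transformations. -/
def Pl (α : ProjFlag K V ≃ ProjFlag K V) : Prop :=
  ∀ Φ Ψ : ProjFlag K V, Φ.Related Ψ ↔ (α Φ).Related (α Ψ)

theorem Pl.symm {α : ProjFlag K V ≃ ProjFlag K V} (h : Pl α) : Pl α.symm := by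
  intro Φ Ψ
  rw [h (α.symm Φ) (α.symm Ψ)]
  simp

theorem Pl.Sq {α : ProjFlag K V ≃ ProjFlag K V} (h : Pl α) {Φ Ψ : ProjFlag K V} (hs : Sq Φ Ψ) :
    Sq (α Φ) (α Ψ) := by
  obtain ⟨X, Y, h1, h2, h3, h4, h5, h6⟩ := hs
  exact ⟨α X, α Y, fun e => h1 (α.injective e), (h _ _).1 h2, fun e => h3 ((h _ _).2 e),
    fun e => h4 (α.injective e), (h _ _).1 h5, (h _ _).1 h6⟩

theorem Pl.A2 (hV : finrank K V = 4) [FiniteDimensional K V]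
    {α : ProjFlag K V ≃ ProjFlag K V} (h : Pl α) {Φ Ψ : ProjFlag K V} (hs : A2 Φ Ψ) :
    A2 (α Φ) (α Ψ) := by
  rw [A2_iff hV] at hs ⊢
  refine ⟨fun e => hs.1 (α.injective e), (h _ _).1 hs.2.1, fun e => hs.2.2 ?_⟩
  simpa using h.symm.Sq e

theorem not_A2_of_A1 {Φ Ψ : ProjFlag K V} (h : A1 Φ Ψ) : ¬ A2 Φ Ψ := fun h' => h.1 h'.1
theorem not_A2_of_A3 {Φ Ψ : ProjFlag K V} (h : A3 Φ Ψ) : ¬ A2 Φ Ψ := fun h' => h'.2.1 h.2.1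

theorem Pl.A13 (hV : finrank K V = 4) [FiniteDimensional K V]
    {α : ProjFlag K V ≃ ProjFlag K V} (h : Pl α) {Φ Ψ : ProjFlag K V} (hs : A1 Φ Ψ ∨ A3 Φ Ψ) :
    A1 (α Φ) (α Ψ) ∨ A3 (α Φ) (α Ψ) := by
  have h1 : (α Φ).Related (α Ψ) := (h _ _).1 ((rel_iff _ _).2 (by tauto))
  have hne : Φ ≠ Ψ := by
    rintro rfl
    rcases hs with hs | hs
    · exact hs.1 rfl
    · exact hs.2.2 rfl
  have hn2 : ¬ PF.A2 Φ Ψ := hs.elim not_A2_of_A1 not_A2_of_A3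
  rw [rel_iff] at h1
  rcases h1 with h1 | h1 | h1 | h1
  · exact absurd (α.injective h1) hne
  · exact Or.inl h1
  · exact absurd (by simpa using h.symm.A2 hV h1) hn2
  · exact Or.inr h1

def G (α : ProjFlag K V ≃ ProjFlag K V) (Φ : ProjFlag K V) : Prop :=
  ∀ Ψ, (A1 Φ Ψ → A1 (α Φ) (α Ψ)) ∧ (A3 Φ Ψ → A3 (α Φ) (α Ψ))

def B (α : ProjFlag K V ≃ ProjFlag K V) (Φ : ProjFlag K V) : Prop :=
  ∀ Ψ, (A1 Φ Ψ → A3 (α Φ) (α Ψ)) ∧ (A3 Φ Ψ → A1 (α Φ) (α Ψ))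

theorem rel_11 {Φ X Y : ProjFlag K V} (h1 : A1 Φ X) (h2 : A1 Φ Y) : X.Related Y :=
  Or.inr (Or.inr ⟨h1.2.1.symm.trans h2.2.1, h1.2.2.symm.trans h2.2.2⟩)
theorem rel_33 {Φ X Y : ProjFlag K V} (h1 : A3 Φ X) (h2 : A3 Φ Y) : X.Related Y :=
  Or.inl ⟨h1.1.symm.trans h2.1, h1.2.1.symm.trans h2.2.1⟩
theorem rel_13 {Φ X Y : ProjFlag K V} (h1 : A1 Φ X) (h2 : A3 Φ Y) : ¬ X.Related Y := by
  obtain ⟨a, b, c⟩ := h1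
  obtain ⟨d, e, f⟩ := h2
  rintro (h | h | h)
  · exact a (d.trans h.1.symm)
  · exact a (d.trans h.1.symm)
  · exact f (c.trans h.2)
theorem rel_31 {Φ X Y : ProjFlag K V} (h1 : A3 Φ X) (h2 : A1 Φ Y) : ¬ X.Related Y := by
  obtain ⟨a, b, c⟩ := h2
  obtain ⟨d, e, f⟩ := h1
  rintro (h | h | h)
  · exact a (d.trans h.1)
  · exact a (d.trans h.1)
  · exact f (c.trans h.2.symm)

theorem GB (hV : finrank K V = 4) [FiniteDimensional K V]
    {α : ProjFlag K V ≃ ProjFlag K V} (h : Pl α) (Φ : ProjFlag K V) : G α Φ ∨ B α Φ := by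
  obtain ⟨X, hX⟩ := ex_A1 Φ
  rcases h.A13 hV (Or.inl hX) with hX' | hX'
  · left
    intro Ψ
    constructor
    · intro hΨ
      rcases h.A13 hV (Or.inl hΨ) with h' | h'
      · exact h'
      · exact absurd ((h _ _).1 (rel_11 hX hΨ)) (rel_13 hX' h')
    · intro hΨ
      rcases h.A13 hV (Or.inr hΨ) with h' | h'
      · exact absurd ((h _ _).2 (rel_11 hX' h')) (rel_13 hX hΨ)
      · exact h'
  · right
    intro Ψ
    constructor
    · intro hΨ
      rcases h.A13 hV (Or.inl hΨ) with h' | h'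
      · exact absurd ((h _ _).1 (rel_11 hX hΨ)) (rel_31 hX' h')
      · exact h'
    · intro hΨ
      rcases h.A13 hV (Or.inr hΨ) with h' | h'
      · exact h'
      · exact absurd ((h _ _).2 (rel_33 hX' h')) (rel_13 hX hΨ)

theorem not_A3_of_A1 {Φ Ψ : ProjFlag K V} (h : A1 Φ Ψ) : ¬ A3 Φ Ψ := fun h' => h.1 h'.1

theorem A1.symm {Φ Ψ : ProjFlag K V} (h : A1 Φ Ψ) : A1 Ψ Φ :=
  ⟨h.1.symm, h.2.1.symm, h.2.2.symm⟩
theorem A2.symm {Φ Ψ : ProjFlag K V} (h : A2 Φ Ψ) : A2 Ψ Φ :=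
  ⟨h.1.symm, h.2.1.symm, h.2.2.symm⟩
theorem A3.symm {Φ Ψ : ProjFlag K V} (h : A3 Φ Ψ) : A3 Ψ Φ :=
  ⟨h.1.symm, h.2.1.symm, h.2.2.symm⟩

theorem G_A1 (hV : finrank K V = 4) [FiniteDimensional K V]
    {α : ProjFlag K V ≃ ProjFlag K V} (h : Pl α) {Φ Ψ : ProjFlag K V} (hA : A1 Φ Ψ)
    (hG : G α Φ) : G α Ψ := by
  rcases GB hV h Ψ with h' | h'
  · exact h'
  · exact absurd ((h' Φ).1 hA.symm) (not_A3_of_A1 ((hG Ψ).1 hA).symm)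

theorem G_A3 (hV : finrank K V = 4) [FiniteDimensional K V]
    {α : ProjFlag K V ≃ ProjFlag K V} (h : Pl α) {Φ Ψ : ProjFlag K V} (hA : A3 Φ Ψ)
    (hG : G α Φ) : G α Ψ := by
  rcases GB hV h Ψ with h' | h'
  · exact h'
  · exact absurd ((hG Ψ).2 hA).symm (not_A3_of_A1 ((h' Φ).2 hA.symm))

theorem G_A2 (hV : finrank K V = 4) [FiniteDimensional K V]
    {α : ProjFlag K V ≃ ProjFlag K V} (h : Pl α) {Φ Ψ : ProjFlag K V} (hA : A2 Φ Ψ)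
    (hG : G α Φ) : G α Ψ := by
  rcases GB hV h Ψ with hB | hB
  · exact hB
  exfalso
  obtain ⟨X, hX⟩ := ex_A1 Φ
  obtain ⟨Y, hY⟩ := ex_A1 Ψ
  have hX' := (hG X).1 hX
  have hY' := (hB Y).1 hY
  obtain ⟨a1, a2, a3⟩ := id hA
  obtain ⟨b1, b2, b3⟩ := id hX
  obtain ⟨c1, c2, c3⟩ := id hY
  have eΦ : Φ.pt ⊔ X.pt = Φ.ln :=
    sup_eq Φ.finrank_pt X.finrank_pt Φ.finrank_ln b1 Φ.pt_le_ln (b2 ▸ X.pt_le_ln)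
  have eΨ : Ψ.pt ⊔ Y.pt = Ψ.ln :=
    sup_eq Ψ.finrank_pt Y.finrank_pt Ψ.finrank_ln c1 Ψ.pt_le_ln (c2 ▸ Y.pt_le_ln)
  have hne : X.pt ≠ Y.pt := by
    intro e
    apply a2
    rw [← eΦ, ← eΨ, a1, e]
  have hXl : X.pt ≤ Φ.pl := b3 ▸ (X.pt_le_ln.trans X.ln_le_pl)
  have hYl : Y.pt ≤ Φ.pl := a3 ▸ c3 ▸ (Y.pt_le_ln.trans Y.ln_le_pl)
  have hd := inf_dim1 X.finrank_pt Y.finrank_pt hne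
  let S : ProjFlag K V := ⟨X.pt, X.pt ⊔ Y.pt, Φ.pl, X.finrank_pt, hd, Φ.finrank_pl, le_sup_left,
    sup_le hXl hYl⟩
  let T : ProjFlag K V := ⟨Y.pt, X.pt ⊔ Y.pt, Φ.pl, Y.finrank_pt, hd, Φ.finrank_pl, le_sup_right,
    sup_le hXl hYl⟩
  have hST : A1 S T := ⟨hne, rfl, rfl⟩
  have hXS : A2 X S := by
    refine ⟨rfl, ?_, b3.symm⟩
    intro e
    have hYle : Y.pt ≤ Φ.ln := by rw [b2, e]; exact le_sup_right
    apply a2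
    apply (Submodule.eq_of_le_of_finrank_eq _ (by rw [Φ.finrank_ln, Ψ.finrank_ln])).symm
    rw [← eΨ]
    exact sup_le (a1 ▸ Φ.pt_le_ln) hYle
  have hYT : A2 Y T := by
    refine ⟨rfl, ?_, c3.symm.trans a3.symm⟩
    intro e
    have hXle : X.pt ≤ Ψ.ln := by rw [c2, e]; exact le_sup_left
    apply a2
    apply (Submodule.eq_of_le_of_finrank_eq _ (by rw [Φ.finrank_ln, Ψ.finrank_ln]))
    rw [← eΦ]
    exact sup_le (a1 ▸ Ψ.pt_le_ln) hXle
  have h2 := h.A2 hV hA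
  have h3 := h.A2 hV hXS
  have h4 := h.A2 hV hYT
  rcases h.A13 hV (Or.inl hST) with h5 | h5
  · exact hY'.2.2 (by rw [← h2.2.2, hX'.2.2, h3.2.2, h5.2.2, h4.2.2])
  · exact hX'.1 (by rw [h2.1, hY'.1, h4.1, ← h5.1, h3.1])

/-- connectivity -/
theorem conn_pt (hV : finrank K V = 4) [FiniteDimensional K V]
    (R : ProjFlag K V → ProjFlag K V → Prop) (hr : ∀ Φ, R Φ Φ)
    (ht : ∀ Φ Ψ X, R Φ Ψ → R Ψ X → R Φ X)
    (h2 : ∀ Φ Ψ, A2 Φ Ψ → R Φ Ψ) (h3 : ∀ Φ Ψ, A3 Φ Ψ → R Φ Ψ)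
    (Φ Ψ : ProjFlag K V) (h : Φ.pt = Ψ.pt) : R Φ Ψ := by
  have w2 : ∀ Φ Ψ : ProjFlag K V, Φ.pt = Ψ.pt → Φ.pl = Ψ.pl → R Φ Ψ := by
    intro Φ Ψ a b
    by_cases e : Φ.ln = Ψ.ln
    · rw [flag_ext a e b]; exact hr _
    · exact h2 _ _ ⟨a, e, b⟩
  by_cases e : Φ.pl = Ψ.pl
  · exact w2 _ _ h e
  have hd := inf_dim3 hV Φ.finrank_pl Ψ.finrank_pl e
  have hle : Φ.pt ≤ Φ.pl ⊓ Ψ.pl := le_inf (Φ.pt_le_ln.trans Φ.ln_le_pl)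
    (h ▸ Ψ.pt_le_ln.trans Ψ.ln_le_pl)
  let S : ProjFlag K V := ⟨Φ.pt, Φ.pl ⊓ Ψ.pl, Φ.pl, Φ.finrank_pt, hd, Φ.finrank_pl, hle,
    inf_le_left⟩
  let T : ProjFlag K V := ⟨Φ.pt, Φ.pl ⊓ Ψ.pl, Ψ.pl, Φ.finrank_pt, hd, Ψ.finrank_pl, hle,
    inf_le_right⟩
  exact ht _ S _ (w2 _ _ rfl rfl) (ht _ T _ (h3 _ _ ⟨rfl, rfl, e⟩) (w2 _ _ h rfl))

theorem conn_pl [FiniteDimensional K V]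
    (R : ProjFlag K V → ProjFlag K V → Prop) (hr : ∀ Φ, R Φ Φ)
    (ht : ∀ Φ Ψ X, R Φ Ψ → R Ψ X → R Φ X)
    (h2 : ∀ Φ Ψ, A2 Φ Ψ → R Φ Ψ) (h1 : ∀ Φ Ψ, A1 Φ Ψ → R Φ Ψ)
    (Φ Ψ : ProjFlag K V) (h : Φ.pl = Ψ.pl) : R Φ Ψ := by
  have w2 : ∀ Φ Ψ : ProjFlag K V, Φ.pt = Ψ.pt → Φ.pl = Ψ.pl → R Φ Ψ := by
    intro Φ Ψ a b
    by_cases e : Φ.ln = Ψ.ln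
    · rw [flag_ext a e b]; exact hr _
    · exact h2 _ _ ⟨a, e, b⟩
  by_cases e : Φ.pt = Ψ.pt
  · exact w2 _ _ e h
  have hd := inf_dim1 Φ.finrank_pt Ψ.finrank_pt e
  have hle : Φ.pt ⊔ Ψ.pt ≤ Φ.pl := sup_le (Φ.pt_le_ln.trans Φ.ln_le_pl)
    (h ▸ Ψ.pt_le_ln.trans Ψ.ln_le_pl)
  let S : ProjFlag K V := ⟨Φ.pt, Φ.pt ⊔ Ψ.pt, Φ.pl, Φ.finrank_pt, hd, Φ.finrank_pl, le_sup_left,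
    hle⟩
  let T : ProjFlag K V := ⟨Ψ.pt, Φ.pt ⊔ Ψ.pt, Φ.pl, Ψ.finrank_pt, hd, Φ.finrank_pl, le_sup_right,
    hle⟩
  exact ht _ S _ (w2 _ _ rfl rfl) (ht _ T _ (h1 _ _ ⟨e, rfl, rfl⟩) (w2 _ _ rfl h))

theorem conn_ln
    (R : ProjFlag K V → ProjFlag K V → Prop) (hr : ∀ Φ, R Φ Φ)
    (ht : ∀ Φ Ψ X, R Φ Ψ → R Ψ X → R Φ X)
    (h1 : ∀ Φ Ψ, A1 Φ Ψ → R Φ Ψ) (h3 : ∀ Φ Ψ, A3 Φ Ψ → R Φ Ψ)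
    (Φ Ψ : ProjFlag K V) (h : Φ.ln = Ψ.ln) : R Φ Ψ := by
  let S : ProjFlag K V := ⟨Ψ.pt, Φ.ln, Φ.pl, Ψ.finrank_pt, Φ.finrank_ln, Φ.finrank_pl,
    h ▸ Ψ.pt_le_ln, Φ.ln_le_pl⟩
  have a : R Φ S := by
    by_cases e : Φ.pt = Ψ.pt
    · have : Φ = S := flag_ext e rfl rfl
      rw [← this]; exact hr _
    · exact h1 _ _ ⟨e, rfl, rfl⟩
  have b : R S Ψ := by
    by_cases e : Φ.pl = Ψ.pl
    · have : S = Ψ := flag_ext rfl h e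
      rw [← this]; exact hr _
    · exact h3 _ _ ⟨rfl, h, e⟩
  exact ht _ _ _ a b

theorem conn (hV : finrank K V = 4) [FiniteDimensional K V]
    (R : ProjFlag K V → ProjFlag K V → Prop) (hr : ∀ Φ, R Φ Φ)
    (ht : ∀ Φ Ψ X, R Φ Ψ → R Ψ X → R Φ X)
    (h1 : ∀ Φ Ψ, A1 Φ Ψ → R Φ Ψ) (h2 : ∀ Φ Ψ, A2 Φ Ψ → R Φ Ψ) (h3 : ∀ Φ Ψ, A3 Φ Ψ → R Φ Ψ)
    (Φ Ψ : ProjFlag K V) : R Φ Ψ := by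
  have hp := conn_pt hV R hr ht h2 h3
  by_cases e : Φ.pt = Ψ.pt
  · exact hp _ _ e
  have hd := inf_dim1 Φ.finrank_pt Ψ.finrank_pt e
  obtain ⟨W, w1, _, w3⟩ := grow (U := Φ.pt ⊔ Ψ.pt) (W := ⊤) le_top
    (by rw [hd, finrank_top, hV]; omega)
  rw [hd] at w3
  let S : ProjFlag K V := ⟨Φ.pt, Φ.pt ⊔ Ψ.pt, W, Φ.finrank_pt, hd, w3, le_sup_left, w1⟩
  let T : ProjFlag K V := ⟨Ψ.pt, Φ.pt ⊔ Ψ.pt, W, Ψ.finrank_pt, hd, w3, le_sup_right, w1⟩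
  exact ht _ S _ (hp _ _ rfl) (ht _ T _ (h1 _ _ ⟨e, rfl, rfl⟩) (hp _ _ rfl))

theorem GB_global (hV : finrank K V = 4) [FiniteDimensional K V]
    {α : ProjFlag K V ≃ ProjFlag K V} (h : Pl α) : (∀ Φ, G α Φ) ∨ (∀ Φ, B α Φ) := by
  by_cases hB : ∀ Φ, B α Φ
  · exact Or.inr hB
  · left
    push Not at hB
    obtain ⟨Φ, hΦ⟩ := hB
    have hG : G α Φ := (GB hV h Φ).resolve_right hΦ
    intro Ψ
    exact conn hV (fun Φ Ψ => G α Φ → G α Ψ) (fun _ => id) (fun _ _ _ f g x => g (f x))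
      (fun _ _ h' => G_A1 hV h h') (fun _ _ h' => G_A2 hV h h') (fun _ _ h' => G_A3 hV h h') Φ Ψ hG

theorem G_symm (hV : finrank K V = 4) [FiniteDimensional K V]
    {α : ProjFlag K V ≃ ProjFlag K V} (h : Pl α) (hG : ∀ Φ, G α Φ) (Φ) : G α.symm Φ := by
  rcases GB_global hV h.symm with h' | h'
  · exact h' Φ
  · exfalso
    obtain ⟨Ψ, hΨ⟩ := ex_A1 Φ
    have := (hG _ _).2 ((h' _ _).1 hΨ)
    simp only [Equiv.apply_symm_apply] at this
    exact not_A3_of_A1 hΨ this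

theorem B_symm (hV : finrank K V = 4) [FiniteDimensional K V]
    {α : ProjFlag K V ≃ ProjFlag K V} (h : Pl α) (hB : ∀ Φ, B α Φ) (Φ) : B α.symm Φ := by
  rcases GB_global hV h.symm with h' | h'
  · exfalso
    obtain ⟨Ψ, hΨ⟩ := ex_A1 Φ
    have := (hB _ _).1 ((h' _ _).1 hΨ)
    simp only [Equiv.apply_symm_apply] at this
    exact not_A3_of_A1 hΨ this
  · exact h' Φ

theorem le_cases (hV : finrank K V = 4) [FiniteDimensional K V] {A B : Submodule K V}
    (h : A ≤ B) : A = ⊥ ∨ B = ⊤ ∨ A = B ∨ ∃ Φ : ProjFlag K V,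
      (A = Φ.pt ∧ B = Φ.ln) ∨ (A = Φ.pt ∧ B = Φ.pl) ∨ (A = Φ.ln ∧ B = Φ.pl) := by
  by_cases h0 : finrank K A = 0
  · exact Or.inl (Submodule.finrank_eq_zero.1 h0)
  have hB4 : finrank K B ≤ 4 := hV ▸ Submodule.finrank_le B
  by_cases h4 : finrank K B = 4
  · exact Or.inr (Or.inl (Submodule.eq_top_of_finrank_eq (by rw [h4, hV])))
  by_cases hAB : finrank K A = finrank K B
  · exact Or.inr (Or.inr (Or.inl (Submodule.eq_of_le_of_finrank_eq h hAB)))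
  have hle := Submodule.finrank_mono (R := K) h
  refine Or.inr (Or.inr (Or.inr ?_))
  have : (finrank K A = 1 ∧ finrank K B = 2) ∨ (finrank K A = 1 ∧ finrank K B = 3) ∨
    (finrank K A = 2 ∧ finrank K B = 3) := by omega
  rcases this with ⟨a, b⟩ | ⟨a, b⟩ | ⟨a, b⟩
  · obtain ⟨C, c1, _, c3⟩ := grow (U := B) (W := ⊤) le_top (by rw [b, finrank_top, hV]; omega)
    exact ⟨⟨A, B, C, a, b, by rw [c3, b], h, c1⟩, Or.inl ⟨rfl, rfl⟩⟩
  · obtain ⟨C, c1, c2, c3⟩ := grow (U := A) (W := B) h (by omega)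
    exact ⟨⟨A, C, B, a, by rw [c3, a], b, c1, c2⟩, Or.inr (Or.inl ⟨rfl, rfl⟩)⟩
  · obtain ⟨C, c1, c2, c3⟩ := grow (U := (⊥ : Submodule K V)) (W := A) bot_le
      (by rw [finrank_bot]; omega)
    exact ⟨⟨C, A, B, by rw [c3, finrank_bot], a, b, c2, h⟩, Or.inr (Or.inr ⟨rfl, rfl⟩)⟩

theorem one_cases (hV : finrank K V = 4) [FiniteDimensional K V] (A : Submodule K V) :
    A = ⊥ ∨ A = ⊤ ∨ ∃ Φ : ProjFlag K V, A = Φ.pt ∨ A = Φ.ln ∨ A = Φ.pl := by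
  by_cases h0 : finrank K A = 0
  · exact Or.inl (Submodule.finrank_eq_zero.1 h0)
  have hB4 : finrank K A ≤ 4 := hV ▸ Submodule.finrank_le A
  by_cases h4 : finrank K A = 4
  · exact Or.inr (Or.inl (Submodule.eq_top_of_finrank_eq (by rw [h4, hV])))
  refine Or.inr (Or.inr ?_)
  by_cases h3 : finrank K A = 3
  · obtain ⟨C, c1, c2, c3⟩ := grow (U := (⊥ : Submodule K V)) (W := A) bot_le
      (by rw [finrank_bot]; omega)
    rw [finrank_bot] at c3
    rcases le_cases hV c2 with h | h | h | ⟨Φ, h⟩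
    · rw [h, finrank_bot] at c3; omega
    · rw [h, finrank_top] at h4; omega
    · rw [h] at c3; omega
    · exact ⟨Φ, by tauto⟩
  · obtain ⟨C, c1, c2, c3⟩ := grow (U := A) (W := ⊤) le_top (by rw [finrank_top, hV]; omega)
    rcases le_cases hV c1 with h | h | h | ⟨Φ, h⟩
    · rw [h, finrank_bot] at h0; omega
    · rw [h, finrank_top] at c3; omega
    · rw [← h] at c3; omega
    · exact ⟨Φ, by tauto⟩

open Classical in
theorem mk_fun (hV : finrank K V = 4) [FiniteDimensional K V]
    (a b c : ProjFlag K V → Submodule K V) (s t : Submodule K V)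
    (ha : ∀ Φ Ψ : ProjFlag K V, Φ.pt = Ψ.pt → a Φ = a Ψ)
    (hb : ∀ Φ Ψ : ProjFlag K V, Φ.ln = Ψ.ln → b Φ = b Ψ)
    (hc : ∀ Φ Ψ : ProjFlag K V, Φ.pl = Ψ.pl → c Φ = c Ψ) :
    ∃ f : Submodule K V → Submodule K V, f ⊥ = s ∧ f ⊤ = t ∧
      ∀ Φ : ProjFlag K V, f Φ.pt = a Φ ∧ f Φ.ln = b Φ ∧ f Φ.pl = c Φ := by
  have : ∀ W : Submodule K V, ∃ X : Submodule K V, (W = ⊥ → X = s) ∧ (W = ⊤ → X = t) ∧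
      ∀ Φ : ProjFlag K V, (W = Φ.pt → X = a Φ) ∧ (W = Φ.ln → X = b Φ) ∧ (W = Φ.pl → X = c Φ) := by
    intro W
    have n0 : W = ⊥ → finrank K W = 0 := by rintro rfl; exact finrank_bot K V
    have n4 : W = ⊤ → finrank K W = 4 := by rintro rfl; rw [finrank_top, hV]
    have n1 : ∀ Φ : ProjFlag K V, W = Φ.pt → finrank K W = 1 := by
      rintro Φ rfl; exact Φ.finrank_pt
    have n2 : ∀ Φ : ProjFlag K V, W = Φ.ln → finrank K W = 2 := by
      rintro Φ rfl; exact Φ.finrank_ln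
    have n3 : ∀ Φ : ProjFlag K V, W = Φ.pl → finrank K W = 3 := by
      rintro Φ rfl; exact Φ.finrank_pl
    rcases one_cases hV W with h | h | ⟨Φ, h | h | h⟩
    · have := n0 h
      exact ⟨s, fun _ => rfl, fun h => by have := n4 h; omega,
        fun Φ => ⟨fun h => by have := n1 Φ h; omega, fun h => by have := n2 Φ h; omega,
          fun h => by have := n3 Φ h; omega⟩⟩
    · have := n4 h
      exact ⟨t, fun h => by have := n0 h; omega, fun _ => rfl,
        fun Φ => ⟨fun h => by have := n1 Φ h; omega, fun h => by have := n2 Φ h; omega,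
          fun h => by have := n3 Φ h; omega⟩⟩
    · have := n1 Φ h
      exact ⟨a Φ, fun h => by have := n0 h; omega, fun h => by have := n4 h; omega,
        fun Ψ => ⟨fun h' => ha _ _ (h.symm.trans h'), fun h => by have := n2 Ψ h; omega,
          fun h => by have := n3 Ψ h; omega⟩⟩
    · have := n2 Φ h
      exact ⟨b Φ, fun h => by have := n0 h; omega, fun h => by have := n4 h; omega,
        fun Ψ => ⟨fun h => by have := n1 Ψ h; omega, fun h' => hb _ _ (h.symm.trans h'),
          fun h => by have := n3 Ψ h; omega⟩⟩
    · have := n3 Φ h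
      exact ⟨c Φ, fun h => by have := n0 h; omega, fun h => by have := n4 h; omega,
        fun Ψ => ⟨fun h => by have := n1 Ψ h; omega, fun h => by have := n2 Ψ h; omega,
          fun h' => hc _ _ (h.symm.trans h')⟩⟩
  choose f hf using this
  exact ⟨f, (hf _).1 rfl, (hf _).2.1 rfl, fun Φ => ⟨((hf _).2.2 Φ).1 rfl, ((hf _).2.2 Φ).2.1 rfl,
    ((hf _).2.2 Φ).2.2 rfl⟩⟩

theorem fun_G (hV : finrank K V = 4) [FiniteDimensional K V]
    {α : ProjFlag K V ≃ ProjFlag K V} (h : Pl α) (hG : ∀ Φ, G α Φ) :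
    ∃ f : Submodule K V → Submodule K V, f ⊥ = ⊥ ∧ f ⊤ = ⊤ ∧
      (∀ Φ : ProjFlag K V, f Φ.pt = (α Φ).pt ∧ f Φ.ln = (α Φ).ln ∧ f Φ.pl = (α Φ).pl) ∧
      Monotone f := by
  obtain ⟨f, f0, f4, hf⟩ := mk_fun hV (fun Φ => (α Φ).pt) (fun Φ => (α Φ).ln) (fun Φ => (α Φ).pl)
    ⊥ ⊤
    (conn_pt hV _ (fun _ => rfl) (fun _ _ _ h1 h2 => h1.trans h2)
      (fun _ _ h' => (h.A2 hV h').1) (fun _ _ h' => ((hG _ _).2 h').1))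
    (conn_ln _ (fun _ => rfl) (fun _ _ _ h1 h2 => h1.trans h2)
      (fun _ _ h' => ((hG _ _).1 h').2.1) (fun _ _ h' => ((hG _ _).2 h').2.1))
    (conn_pl _ (fun _ => rfl) (fun _ _ _ h1 h2 => h1.trans h2)
      (fun _ _ h' => (h.A2 hV h').2.2) (fun _ _ h' => ((hG _ _).1 h').2.2))
  refine ⟨f, f0, f4, hf, ?_⟩
  intro A B hAB
  rcases le_cases hV hAB with rfl | rfl | rfl | ⟨Φ, ⟨rfl, rfl⟩ | ⟨rfl, rfl⟩ | ⟨rfl, rfl⟩⟩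
  · rw [f0]; exact bot_le
  · rw [f4]; exact le_top
  · exact le_rfl
  · rw [(hf Φ).1, (hf Φ).2.1]; exact (α Φ).pt_le_ln
  · rw [(hf Φ).1, (hf Φ).2.2]; exact (α Φ).pt_le_ln.trans (α Φ).ln_le_pl
  · rw [(hf Φ).2.1, (hf Φ).2.2]; exact (α Φ).ln_le_pl

theorem fun_B (hV : finrank K V = 4) [FiniteDimensional K V]
    {α : ProjFlag K V ≃ ProjFlag K V} (h : Pl α) (hB : ∀ Φ, B α Φ) :
    ∃ f : Submodule K V → Submodule K V, f ⊥ = ⊤ ∧ f ⊤ = ⊥ ∧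
      (∀ Φ : ProjFlag K V, f Φ.pt = (α Φ).pl ∧ f Φ.ln = (α Φ).ln ∧ f Φ.pl = (α Φ).pt) ∧
      Antitone f := by
  obtain ⟨f, f0, f4, hf⟩ := mk_fun hV (fun Φ => (α Φ).pl) (fun Φ => (α Φ).ln) (fun Φ => (α Φ).pt)
    ⊤ ⊥
    (conn_pt hV _ (fun _ => rfl) (fun _ _ _ h1 h2 => h1.trans h2)
      (fun _ _ h' => (h.A2 hV h').2.2) (fun _ _ h' => ((hB _ _).2 h').2.2))
    (conn_ln _ (fun _ => rfl) (fun _ _ _ h1 h2 => h1.trans h2)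
      (fun _ _ h' => ((hB _ _).1 h').2.1) (fun _ _ h' => ((hB _ _).2 h').2.1))
    (conn_pl _ (fun _ => rfl) (fun _ _ _ h1 h2 => h1.trans h2)
      (fun _ _ h' => (h.A2 hV h').1) (fun _ _ h' => ((hB _ _).1 h').1))
  refine ⟨f, f0, f4, hf, ?_⟩
  intro A B hAB
  rcases le_cases hV hAB with rfl | rfl | rfl | ⟨Φ, ⟨rfl, rfl⟩ | ⟨rfl, rfl⟩ | ⟨rfl, rfl⟩⟩
  · rw [f0]; exact le_top
  · rw [f4]; exact bot_le
  · exact le_rfl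
  · rw [(hf Φ).1, (hf Φ).2.1]; exact (α Φ).ln_le_pl
  · rw [(hf Φ).1, (hf Φ).2.2]; exact (α Φ).pt_le_ln.trans (α Φ).ln_le_pl
  · rw [(hf Φ).2.1, (hf Φ).2.2]; exact (α Φ).pt_le_ln

theorem inv_G (hV : finrank K V = 4) [FiniteDimensional K V]
    {α β : ProjFlag K V → ProjFlag K V} (hβ : ∀ Φ, β (α Φ) = Φ)
    {f g : Submodule K V → Submodule K V} (f0 : f ⊥ = ⊥) (f4 : f ⊤ = ⊤)
    (hf : ∀ Φ : ProjFlag K V, f Φ.pt = (α Φ).pt ∧ f Φ.ln = (α Φ).ln ∧ f Φ.pl = (α Φ).pl)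
    (g0 : g ⊥ = ⊥) (g4 : g ⊤ = ⊤)
    (hg : ∀ Φ : ProjFlag K V, g Φ.pt = (β Φ).pt ∧ g Φ.ln = (β Φ).ln ∧ g Φ.pl = (β Φ).pl)
    (A : Submodule K V) : g (f A) = A := by
  rcases one_cases hV A with rfl | rfl | ⟨Φ, rfl | rfl | rfl⟩
  · rw [f0, g0]
  · rw [f4, g4]
  · rw [(hf Φ).1, (hg _).1, hβ]
  · rw [(hf Φ).2.1, (hg _).2.1, hβ]
  · rw [(hf Φ).2.2, (hg _).2.2, hβ]

theorem inv_B (hV : finrank K V = 4) [FiniteDimensional K V]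
    {α β : ProjFlag K V → ProjFlag K V} (hβ : ∀ Φ, β (α Φ) = Φ)
    {f g : Submodule K V → Submodule K V} (f0 : f ⊥ = ⊤) (f4 : f ⊤ = ⊥)
    (hf : ∀ Φ : ProjFlag K V, f Φ.pt = (α Φ).pl ∧ f Φ.ln = (α Φ).ln ∧ f Φ.pl = (α Φ).pt)
    (g0 : g ⊥ = ⊤) (g4 : g ⊤ = ⊥)
    (hg : ∀ Φ : ProjFlag K V, g Φ.pt = (β Φ).pl ∧ g Φ.ln = (β Φ).ln ∧ g Φ.pl = (β Φ).pt)
    (A : Submodule K V) : g (f A) = A := by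
  rcases one_cases hV A with rfl | rfl | ⟨Φ, rfl | rfl | rfl⟩
  · rw [f0, g4]
  · rw [f4, g0]
  · rw [(hf Φ).1, (hg _).2.2, hβ]
  · rw [(hf Φ).2.1, (hg _).2.1, hβ]
  · rw [(hf Φ).2.2, (hg _).1, hβ]

end PF

theorem plucker_transformation_induced_by_collineation_or_duality
    (K V : Type*) [DivisionRing K] [AddCommGroup V] [Module K V]
    (hV : Module.finrank K V = 4)
    (α : ProjFlag K V → ProjFlag K V) (hbij : Function.Bijective α)
    (hα : ∀ Φ Ψ : ProjFlag K V, Φ.Related Ψ ↔ (α Φ).Related (α Ψ)) :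
    (∃! κ : Submodule K V ≃o Submodule K V, ∀ Φ : ProjFlag K V,
        (α Φ).pt = κ Φ.pt ∧ (α Φ).ln = κ Φ.ln ∧ (α Φ).pl = κ Φ.pl) ∨
    (∃! δ : Submodule K V ≃ Submodule K V,
        (∀ a b : Submodule K V, a ≤ b ↔ δ b ≤ δ a) ∧
        ∀ Φ : ProjFlag K V,
          (α Φ).pt = δ Φ.pl ∧ (α Φ).ln = δ Φ.ln ∧ (α Φ).pl = δ Φ.pt) := by
  have : FiniteDimensional K V := Module.finite_of_finrank_pos (by omega)
  obtain ⟨e, rfl⟩ : ∃ e : ProjFlag K V ≃ ProjFlag K V, ⇑e = α :=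
    ⟨Equiv.ofBijective α hbij, rfl⟩
  have h : PF.Pl e := hα
  rcases PF.GB_global hV h with hG | hB
  · left
    obtain ⟨f, f0, f4, hf, fm⟩ := PF.fun_G hV h hG
    obtain ⟨g, g0, g4, hg, gm⟩ := PF.fun_G hV h.symm (PF.G_symm hV h hG)
    have gf := PF.inv_G hV (fun Φ => e.symm_apply_apply Φ) f0 f4 hf g0 g4 hg
    have fg := PF.inv_G hV (fun Φ => e.apply_symm_apply Φ) g0 g4 hg f0 f4 hf
    refine ⟨{ toFun := f, invFun := g, left_inv := gf, right_inv := fg, map_rel_iff' := ?_ }, ?_, ?_⟩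
    · intro a b
      refine ⟨fun hab => ?_, fun hab => fm hab⟩
      have := gm hab
      simpa [gf] using this
    · intro Φ
      exact ⟨(hf Φ).1.symm, (hf Φ).2.1.symm, (hf Φ).2.2.symm⟩
    · intro κ hκ
      apply DFunLike.ext; intro A
      change κ A = f A
      rcases PF.one_cases hV A with rfl | rfl | ⟨Φ, rfl | rfl | rfl⟩
      · rw [f0, map_bot]
      · rw [f4, map_top]
      · rw [(hf Φ).1, (hκ Φ).1]
      · rw [(hf Φ).2.1, (hκ Φ).2.1]
      · rw [(hf Φ).2.2, (hκ Φ).2.2]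
  · right
    obtain ⟨f, f0, f4, hf, fm⟩ := PF.fun_B hV h hB
    obtain ⟨g, g0, g4, hg, gm⟩ := PF.fun_B hV h.symm (PF.B_symm hV h hB)
    have gf := PF.inv_B hV (fun Φ => e.symm_apply_apply Φ) f0 f4 hf g0 g4 hg
    have fg := PF.inv_B hV (fun Φ => e.apply_symm_apply Φ) g0 g4 hg f0 f4 hf
    refine ⟨{ toFun := f, invFun := g, left_inv := gf, right_inv := fg }, ⟨?_, ?_⟩, ?_⟩
    · intro a b
      refine ⟨fun hab => fm hab, fun hab => ?_⟩
      have := gm hab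
      simpa [gf] using this
    · intro Φ
      exact ⟨(hf Φ).2.2.symm, (hf Φ).2.1.symm, (hf Φ).1.symm⟩
    · rintro δ ⟨hle, hδ⟩
      ext1 A
      change δ A = f A
      rcases PF.one_cases hV A with rfl | rfl | ⟨Φ, rfl | rfl | rfl⟩
      · rw [f0, eq_top_iff, ← δ.apply_symm_apply ⊤, ← hle]; exact bot_le
      · rw [f4, eq_bot_iff, ← δ.apply_symm_apply ⊥, ← hle]; exact le_top
      · rw [(hf Φ).1, (hδ Φ).2.2]
      · rw [(hf Φ).2.1, (hδ Φ).2.1]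
      · rw [(hf Φ).2.2, (hδ Φ).1]
end

section
/- Let η : 𝒢 → 𝒢 be a bijection of the flag variety such that for all x, y ∈ 𝒢, x and y are related if and only if η(x) and η(y) are related. Then there exist a ring automorphism ζ of K and a ζ-semilinear bijection f : W → W such that for every x ∈ 𝒢, f maps x onto η(x) (i.e. the image under f of any spanning vector of x spans η(x)); moreover any two semilinear bijections of W with this property induce the same map on the set of 1-dimensional subspaces of W, i.e. η extends to a unique collineation of the subspace spanned by 𝒢. -/
open TensorProduct

variable (K V : Type*) [Field K] [AddCommGroup V] [Module K V]

-- Helper instances (the canonical tensor product instances; registering them here merely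
-- speeds up instance search, which otherwise gets lost unfolding `⋀[K]^2 V`).
noncomputable instance : AddCommGroup (↥(⋀[K]^2 V) ⊗[K] Module.Dual K V) :=
  TensorProduct.addCommGroup

noncomputable instance : AddCommGroup (V ⊗[K] (↥(⋀[K]^2 V) ⊗[K] Module.Dual K V)) :=
  TensorProduct.addCommGroup

/-- The wedge `q ∧ r` of two vectors, as an element of the second exterior power. -/
def wedge2 (q r : V) : ⋀[K]^2 V :=
  ⟨ExteriorAlgebra.ιMulti K 2 ![q, r],
    ExteriorAlgebra.ιMulti_range K 2 (Set.mem_range_self _)⟩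

/-- The 96-dimensional space `Ṽ = V ⊗ Λ²V ⊗ V*`. -/
abbrev FlagTensor := V ⊗[K] ↥(⋀[K]^2 V) ⊗[K] (Module.Dual K V)

/-- `x = φ(Φ)`: the 1-dimensional subspace `x` of `Ṽ` represents the flag `Φ`, i.e. `x` is
spanned by `p ⊗ (q ∧ r) ⊗ e*` where `p` spans the point of `Φ`, `q, r` is a basis of the
line of `Φ`, and `e*` is a linear form whose kernel is the plane of `Φ`. -/
def IsFlagRep (Φ : ProjFlag K V) (x : Submodule K (FlagTensor K V)) : Prop :=
  ∃ (p q r : V) (e : Module.Dual K V),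
    Submodule.span K {p} = Φ.pt ∧ Submodule.span K {q, r} = Φ.ln ∧
    LinearMap.ker e = Φ.pl ∧
    x = Submodule.span K {p ⊗ₜ[K] wedge2 K V q r ⊗ₜ[K] e}

/-- The flag variety `𝒢`: the set of all 1-dimensional subspaces `φ(Φ)` of `Ṽ` with `Φ` a
flag. -/
def flagVariety : Set (Submodule K (FlagTensor K V)) :=
  {x | ∃ Φ : ProjFlag K V, IsFlagRep K V Φ x}

/-- Two points of the flag variety `𝒢` are related if they coincide or lie on a common
line entirely contained in `𝒢` (i.e. every 1-dimensional subspace of their join belongs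
to `𝒢`). -/
def RelatedPts (x y : Submodule K (FlagTensor K V)) : Prop :=
  x = y ∨ (x ≠ y ∧ ∀ z : Submodule K (FlagTensor K V),
    Module.finrank K z = 1 → z ≤ x ⊔ y → z ∈ flagVariety K V)

/-- `W`: the subspace of `Ṽ` spanned by the union of all members of `𝒢`. -/
def spanFlagVariety : Submodule K (FlagTensor K V) :=
  Submodule.span K (⋃ x ∈ flagVariety K V, (x : Set (FlagTensor K V)))


section FTPG
variable {K : Type*} {V : Type*} [Field K] [AddCommGroup V] [Module K V]

/-- linear independence of three vectors -/
def FInd3 (K : Type*) {V : Type*} [Field K] [AddCommGroup V] [Module K V] (x y z : V) : Prop :=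
  ∀ a b c : K, a • x + b • y + c • z = 0 → a = 0 ∧ b = 0 ∧ c = 0

theorem FInd3.comb {x y z : V} (h : FInd3 K x y z) {a b c a' b' c' : K}
    (e : a • x + b • y + c • z = a' • x + b' • y + c' • z) : a = a' ∧ b = b' ∧ c = c' := by
  have := h (a - a') (b - b') (c - c') (by
    linear_combination (norm := module) e)
  simpa [sub_eq_zero] using this

theorem find3_iff {x y z : V} : FInd3 K x y z ↔
    x ≠ 0 ∧ y ∉ Submodule.span K {x} ∧ z ∉ Submodule.span K {x, y} := by
  simp only [Submodule.mem_span_pair, Submodule.mem_span_singleton]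
  constructor
  · intro h
    refine ⟨?_, ?_, ?_⟩
    · rintro rfl; simpa using h 1 0 0 (by simp)
    · rintro ⟨a, rfl⟩
      have := h a (-1) 0 (by module)
      simp at this
    · rintro ⟨a, b, rfl⟩
      have := h a b (-1) (by module)
      simp at this
  · rintro ⟨hx, hy, hz⟩ a b c e
    have hc : c = 0 := by
      by_contra hc
      refine hz ⟨-c⁻¹ * a, -c⁻¹ * b, ?_⟩
      have : c⁻¹ • (a • x + b • y + c • z) = 0 := by rw [e, smul_zero]
      have h2 : c⁻¹ • c • z = z := inv_smul_smul₀ hc z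
      rw [smul_add, h2] at this
      linear_combination (norm := module) -this
    subst hc
    have hb : b = 0 := by
      by_contra hb
      refine hy ⟨-b⁻¹ * a, ?_⟩
      have : b⁻¹ • (a • x + b • y + (0:K) • z) = 0 := by rw [e, smul_zero]
      have h2 : b⁻¹ • b • y = y := inv_smul_smul₀ hb y
      rw [smul_add, smul_add, h2] at this
      linear_combination (norm := module) -this
    subst hb
    have : a • x = 0 := by simpa using e
    exact ⟨(smul_eq_zero.1 this).resolve_right hx, rfl, rfl⟩

/-- data of a collineation on vectors -/
structure FColl (A : V → V) : Prop where
  ne : ∀ x, x ≠ 0 → A x ≠ 0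
  mem : ∀ x y z, x ≠ 0 → y ≠ 0 → z ≠ 0 →
    (x ∈ Submodule.span K {y, z} ↔ A x ∈ Submodule.span K {A y, A z})
  surj : ∀ y, y ≠ 0 → ∃ x, x ≠ 0 ∧ y ∈ Submodule.span K {A x}

/-- `y` represents the image of the point `x` -/
def FR (K : Type*) {V : Type*} [Field K] [AddCommGroup V] [Module K V] (A : V → V) (x y : V) :
    Prop := x ≠ 0 ∧ ∃ c : K, c ≠ 0 ∧ y = c • A x

variable {A : V → V}

theorem FR.span (h : FR K A x y) : Submodule.span K {y} = Submodule.span K {A x} := by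
  obtain ⟨h0, c, hc, rfl⟩ := h
  exact Submodule.span_singleton_smul_eq (IsUnit.mk0 c hc) _

theorem FR.mem (hA : FColl (K := K) A) (h : FR K A x y) (h' : FR K A x' y') (h'' : FR K A x'' y'') :
    x ∈ Submodule.span K {x', x''} ↔ y ∈ Submodule.span K {y', y''} := by
  rw [hA.mem x x' x'' h.1 h'.1 h''.1, ← Submodule.span_singleton_le_iff_mem,
    ← Submodule.span_singleton_le_iff_mem y, Submodule.span_insert, Submodule.span_insert,
    h.span, h'.span, h''.span]

theorem FR.mem1 (hA : FColl (K := K) A) (h : FR K A x y) (h' : FR K A x' y') :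
    x ∈ Submodule.span K {x'} ↔ y ∈ Submodule.span K {y'} := by
  simpa using h.mem hA h' h'

theorem FR.ne (hA : FColl (K := K) A) (h : FR K A x y) : y ≠ 0 := by
  obtain ⟨h0, c, hc, rfl⟩ := h
  exact smul_ne_zero hc (hA.ne _ h0)

theorem FR.smul {a : K} (ha : a ≠ 0) (h : FR K A x y) : FR K A x (a • y) := by
  obtain ⟨h0, c, hc, rfl⟩ := h
  exact ⟨h0, a * c, mul_ne_zero ha hc, by rw [mul_smul]⟩

theorem FR.of_smul {a : K} (ha : a ≠ 0) (h : FR K A x (a • y)) : FR K A x y := by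
  simpa [inv_smul_smul₀ ha] using h.smul (inv_ne_zero ha)

theorem FR.ind3 (hA : FColl (K := K) A) (h : FR K A x y) (h' : FR K A x' y')
    (h'' : FR K A x'' y'') (hi : FInd3 K x x' x'') : FInd3 K y y' y'' := by
  rw [find3_iff] at *
  rw [← h'.mem1 hA h, ← h''.mem hA h h']
  exact ⟨h.ne hA, hi.2⟩

theorem FColl.self (_hA : FColl (K := K) A) {x : V} (hx : x ≠ 0) : FR K A x (A x) :=
  ⟨hx, 1, one_ne_zero, by simp⟩

theorem FR.uniq (hA : FColl (K := K) A) {v w : V} (hv : FR K A v w)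
    (hx : x ∉ Submodule.span K {v})
    (h1 : FR K A x y) (h2 : FR K A (v + x) (w + y)) (h3 : FR K A x y') (h4 : FR K A (v + x) (w + y')) :
    y = y' := by
  have e1 : y' ∈ Submodule.span K {y} := by
    rw [h1.span, ← h3.span]; exact Submodule.mem_span_singleton_self _
  have e2 : w + y' ∈ Submodule.span K {w + y} := by
    rw [h2.span, ← h4.span]; exact Submodule.mem_span_singleton_self _
  rw [Submodule.mem_span_singleton] at e1 e2
  obtain ⟨t, rfl⟩ := e1
  obtain ⟨s, hs⟩ := e2
  have hy : y ∉ Submodule.span K {w} := by rwa [← h1.mem1 hA hv]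
  have hw := hv.ne hA
  have hst : s = t := by
    by_contra hne
    apply hy
    rw [Submodule.mem_span_singleton]
    refine ⟨(s - t)⁻¹ * (1 - s), ?_⟩
    have : (s - t) • y = (1 - s) • w := by linear_combination (norm := module) hs
    rw [mul_smul, ← this, inv_smul_smul₀ (sub_ne_zero.2 hne)]
  subst hst
  have : (s - 1) • w = 0 := by linear_combination (norm := module) hs
  have : s = 1 := by
    rcases smul_eq_zero.1 this with h | h
    · exact sub_eq_zero.1 h
    · exact absurd h hw
  simp [this]

theorem FColl.exists_h (hA : FColl (K := K) A) {v w : V} (hv : FR K A v w)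
    (hx : x ∉ Submodule.span K {v}) : ∃ y, FR K A x y ∧ FR K A (v + x) (w + y) := by
  have hv0 := hv.1
  have hx0 : x ≠ 0 := by rintro rfl; exact hx (zero_mem _)
  have hvx0 : v + x ≠ 0 := by
    intro h
    apply hx
    rw [Submodule.mem_span_singleton]
    exact ⟨-1, by linear_combination (norm := module) -h⟩
  have h1 : A (v + x) ∈ Submodule.span K {w, A x} :=
    ((hA.self hvx0).mem hA hv (hA.self hx0)).1 (Submodule.mem_span_pair.2 ⟨1, 1, by simp⟩)
  obtain ⟨a, b, hab⟩ := Submodule.mem_span_pair.1 h1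
  have ha : a ≠ 0 := by
    rintro rfl
    have : A (v + x) ∈ Submodule.span K {A x} :=
      Submodule.mem_span_singleton.2 ⟨b, by simpa using hab⟩
    rw [← (hA.self hvx0).mem1 hA (hA.self hx0), Submodule.mem_span_singleton] at this
    obtain ⟨c, hc⟩ := this
    have hc' : c ≠ 1 := by
      rintro rfl
      apply hv0
      linear_combination (norm := module) -hc
    apply hx
    rw [Submodule.mem_span_singleton]
    refine ⟨(c - 1)⁻¹, ?_⟩
    have : v = (c - 1) • x := by linear_combination (norm := module) -hc
    rw [this, inv_smul_smul₀ (sub_ne_zero.2 hc')]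
  have hb : b ≠ 0 := by
    rintro rfl
    have : A (v + x) ∈ Submodule.span K {w} :=
      Submodule.mem_span_singleton.2 ⟨a, by simpa using hab⟩
    rw [← (hA.self hvx0).mem1 hA hv, Submodule.mem_span_singleton] at this
    obtain ⟨c, hc⟩ := this
    apply hx
    rw [Submodule.mem_span_singleton]
    exact ⟨c - 1, by linear_combination (norm := module) hc⟩
  refine ⟨(a⁻¹ * b) • A x, (hA.self hx0).smul (mul_ne_zero (inv_ne_zero ha) hb), ?_⟩
  have := (hA.self hvx0).smul (inv_ne_zero ha)
  rwa [← hab, smul_add, inv_smul_smul₀ ha, ← mul_smul] at this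

theorem FColl.h_add (hA : FColl (K := K) A) {v w : V} (hv : FR K A v w)
    {x y X Y : V} (hi : FInd3 K v x y)
    (h1 : FR K A x X) (h2 : FR K A (v + x) (w + X)) (h3 : FR K A y Y) (h4 : FR K A (v + y) (w + Y)) :
    FR K A (x + y) (X + Y) ∧ FR K A (v + (x + y)) (w + (X + Y)) := by
  have hI : FInd3 K w X Y := hv.ind3 hA h1 h3 hi
  have hz0 : v + (x + y) ≠ 0 := by
    intro h
    have := hi 1 1 1 (by linear_combination (norm := module) h)
    simp at this
  have hxy0 : x + y ≠ 0 := by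
    intro h
    have := hi 0 1 1 (by linear_combination (norm := module) h)
    simp at this
  have m1 := ((hA.self hz0).mem hA h2 h3).1 (Submodule.mem_span_pair.2 ⟨1, 1, by module⟩)
  have m2 := ((hA.self hz0).mem hA h4 h1).1 (Submodule.mem_span_pair.2 ⟨1, 1, by module⟩)
  obtain ⟨a, b, e1⟩ := Submodule.mem_span_pair.1 m1
  obtain ⟨c, d, e2⟩ := Submodule.mem_span_pair.1 m2
  obtain ⟨q1, q2, q3⟩ := hI.comb (a := a) (b := a) (c := b) (a' := c) (b' := d) (c' := c)
    (by linear_combination (norm := module) e1 - e2)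
  subst q1 q2 q3
  have key : A (v + (x + y)) = b • (w + (X + Y)) := by linear_combination (norm := module) -e1
  have hb : b ≠ 0 := by
    rintro rfl
    exact hA.ne _ hz0 (by simpa using key)
  have R1 : FR K A (v + (x + y)) (w + (X + Y)) := FR.of_smul hb (key ▸ hA.self hz0)
  refine ⟨?_, R1⟩
  have m3 := ((hA.self hxy0).mem hA h1 h3).1 (Submodule.mem_span_pair.2 ⟨1, 1, by module⟩)
  have m4 := ((hA.self hxy0).mem hA hv R1).1 (Submodule.mem_span_pair.2 ⟨-1, 1, by module⟩)
  obtain ⟨a, c, e1⟩ := Submodule.mem_span_pair.1 m3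
  obtain ⟨d, f, e2⟩ := Submodule.mem_span_pair.1 m4
  obtain ⟨q1, q2, q3⟩ := hI.comb (a := 0) (b := a) (c := c) (a' := d + f) (b' := f) (c' := f)
    (by linear_combination (norm := module) e1 - e2)
  subst q2 q3
  have key : A (x + y) = c • (X + Y) := by linear_combination (norm := module) -e1
  have hb : c ≠ 0 := by
    rintro rfl
    exact hA.ne _ hxy0 (by simpa using key)
  exact FR.of_smul hb (key ▸ hA.self hxy0)

end FTPG

section FTPG2
variable {K : Type*} {V : Type*} [Field K] [AddCommGroup V] [Module K V] {A : V → V}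

theorem FR.span_eq {x y y' : V} (h : FR K A x y) (h' : FR K A x y') :
    ∃ c : K, c ≠ 0 ∧ y' = c • y := by
  obtain ⟨_, c, hc, rfl⟩ := h
  obtain ⟨_, d, hd, rfl⟩ := h'
  exact ⟨d * c⁻¹, mul_ne_zero hd (inv_ne_zero hc), by rw [mul_smul, inv_smul_smul₀ hc]⟩

theorem FR.of_mem (hA : FColl (K := K) A) {x y : V} (hx : x ≠ 0) (hy : y ≠ 0)
    (h : y ∈ Submodule.span K {A x}) : FR K A x y := by
  obtain ⟨c, rfl⟩ := Submodule.mem_span_singleton.1 h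
  refine (hA.self hx).smul ?_
  rintro rfl; simp at hy

theorem FR.smul_left (hA : FColl (K := K) A) {x y : V} (h : FR K A x y) {c : K} (hc : c ≠ 0) :
    FR K A (c • x) y := by
  have hcx : c • x ≠ 0 := smul_ne_zero hc h.1
  refine FR.of_mem hA hcx (h.ne hA) ?_
  rw [← h.mem1 hA (hA.self hcx), Submodule.mem_span_singleton]
  exact ⟨c⁻¹, inv_smul_smul₀ hc x⟩

theorem ftpg (hV : Module.finrank K V = 4) (hA : FColl (K := K) A) :
    ∃ (ζ : K ≃+* K) (f : V →ₛₗ[(ζ : K →+* K)] V), Function.Bijective f ∧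
      ∀ x, x ≠ 0 → Submodule.span K {A x} = Submodule.span K {f x} := by
  classical
  have : Nontrivial V := Module.nontrivial_of_finrank_pos (R := K) (by omega)
  obtain ⟨v, hv0⟩ := exists_ne (0 : V)
  obtain ⟨l, hl⟩ : ∃ l : Module.Dual K V, l v = 1 :=
    Module.Projective.exists_dual_eq_one K hv0
  have : FiniteDimensional K V := Module.finite_of_finrank_pos (by omega)
  set U := LinearMap.ker l with hU
  set w := A v
  have hv : FR K A v w := hA.self hv0
  have hUv : ∀ u : U, u ≠ 0 → (u : V) ∉ Submodule.span K {v} := by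
    intro u hu hm
    obtain ⟨c, hc⟩ := Submodule.mem_span_singleton.1 hm
    have h1 : l u = 0 := u.2
    rw [← hc, map_smul, hl] at h1
    simp at h1
    apply hu
    ext; simp [← hc, h1]
  have hI3 : ∀ x y : U, x ≠ 0 → y ∉ Submodule.span K {x} → FInd3 K v (x : V) (y : V) := by
    intro x y hx hy a b c e
    have h1 := congrArg l e
    have hx1 : l x = 0 := x.2
    have hy1 : l y = 0 := y.2
    simp [hl, hx1, hy1] at h1
    subst h1
    have hc : c = 0 := by
      by_contra hc
      apply hy
      rw [Submodule.mem_span_singleton]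
      refine ⟨-(c⁻¹ * b), ?_⟩
      ext
      have : c⁻¹ • ((0:K) • v + b • (x:V) + c • (y:V)) = 0 := by rw [e, smul_zero]
      rw [smul_add, inv_smul_smul₀ hc] at this
      simp only [Submodule.coe_smul]
      linear_combination (norm := module) -this
    subst hc
    have : b • (x : V) = 0 := by simpa using e
    refine ⟨rfl, (smul_eq_zero.1 this).resolve_right ?_, rfl⟩
    simpa using hx
  have hex : ∀ x : U, ∃ z : U, z ∉ Submodule.span K {x} := by
    intro x
    by_contra! hcon
    have h1 : (⊤ : Submodule K U) ≤ Submodule.span K {x} := fun z _ => hcon z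
    have h2 : Module.finrank K U ≤ 1 := by
      rw [← finrank_top K U, ← top_le_iff.1 h1]
      exact (finrank_span_le_card _).trans (by simp)
    have h3 := LinearMap.finrank_range_add_finrank_ker l
    rw [← hU] at h3
    have h4 : Module.finrank K (LinearMap.range l) ≤ 1 := by
      simpa using (LinearMap.range l).finrank_le
    omega
  have hH : ∀ u : U, ∃ y, (u ≠ 0 → FR K A (u : V) y ∧ FR K A (v + u) (w + y)) ∧ (u = 0 → y = 0) := by
    intro u
    by_cases hu : u = 0
    · exact ⟨0, fun h => absurd hu h, fun _ => rfl⟩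
    · obtain ⟨y, hy⟩ := hA.exists_h hv (hUv u hu)
      exact ⟨y, fun _ => hy, fun h => absurd h hu⟩
  choose H hH1 hH0 using hH
  have hH0 : H 0 = 0 := hH0 0 rfl
  have add_ind : ∀ x y : U, x ≠ 0 → y ∉ Submodule.span K {x} → H (x + y) = H x + H y := by
    intro x y hx hy
    have hy0 : y ≠ 0 := by rintro rfl; exact hy (zero_mem _)
    have hxy : x + y ≠ 0 := by
      intro h
      exact hy (Submodule.mem_span_singleton.2 ⟨-1, by linear_combination (norm := module) -h⟩)
    have := hA.h_add hv (hI3 x y hx hy) (hH1 x hx).1 (hH1 x hx).2 (hH1 y hy0).1 (hH1 y hy0).2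
    exact FR.uniq hA hv (hUv _ hxy) (hH1 _ hxy).1 (hH1 _ hxy).2 this.1 this.2
  have Hadd : ∀ x y : U, H (x + y) = H x + H y := by
    intro x y
    by_cases hx : x = 0
    · simp [hx, hH0]
    by_cases hy : y = 0
    · simp [hy, hH0]
    by_cases hyx : y ∈ Submodule.span K {x}
    swap
    · exact add_ind x y hx hyx
    obtain ⟨z, hz⟩ := hex x
    have hz0 : z ≠ 0 := by rintro rfl; exact hz (zero_mem _)
    have hxx := Submodule.mem_span_singleton_self (R := K) x
    have mono : ∀ t ∈ Submodule.span K {x}, z ∉ Submodule.span K {t} := by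
      intro t ht hzt
      exact hz ((Submodule.span_singleton_le_iff_mem t _).2 ht hzt)
    have e1 : H (x + y + z) = H (x + y) + H z := by
      by_cases h : x + y = 0
      · simp [h, hH0]
      · exact add_ind _ _ h (mono _ (add_mem hxx hyx))
    have e2 : H (x + (y + z)) = H x + H (y + z) := by
      refine add_ind _ _ hx ?_
      intro h
      exact hz ((Submodule.add_mem_iff_right _ hyx).1 h)
    rw [add_ind y z hy (mono _ hyx), ← add_assoc, e1] at e2
    linear_combination (norm := module) e2
  have Hspan : ∀ (a : K) (u : U), ∃ k : K, H (a • u) = k • H u := by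
    intro a u
    by_cases hu : u = 0
    · exact ⟨0, by simp [hu, hH0]⟩
    by_cases ha : a = 0
    · exact ⟨0, by simp [ha, hH0]⟩
    have h1 := (hH1 u hu).1.smul_left hA ha
    have h2 := (hH1 (a • u) (smul_ne_zero ha hu)).1
    obtain ⟨c, _, hc⟩ := h1.span_eq h2
    exact ⟨c, hc⟩
  have Hind : ∀ z u : U, z ≠ 0 → u ∉ Submodule.span K {z} → FInd3 K w (H z) (H u) := by
    intro z u hz hu
    have hu0 : u ≠ 0 := by rintro rfl; exact hu (zero_mem _)
    exact hv.ind3 hA (hH1 z hz).1 (hH1 u hu0).1 (hI3 z u hz hu)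
  have trans : ∀ (a k : K) (z u : U), z ≠ 0 → u ∉ Submodule.span K {z} → H (a • z) = k • H z →
      H (a • u) = k • H u := by
    intro a k z u hz hu hk
    obtain ⟨t, ht⟩ := Hspan a u
    obtain ⟨s, hs⟩ := Hspan a (z + u)
    rw [smul_add, Hadd, Hadd, hk, ht] at hs
    obtain ⟨-, h1, h2⟩ := (Hind z u hz hu).comb (a := 0) (b := k) (c := t) (a' := 0) (b' := s)
      (c' := s) (by linear_combination (norm := module) hs)
    rw [ht, h2, h1]
  obtain ⟨u0, hu0⟩ := hex 0
  have hu0 : u0 ≠ 0 := by rintro rfl; exact hu0 (zero_mem _)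
  obtain ⟨z0, hz0⟩ := hex u0
  have hHu0 : H u0 ≠ 0 := (hH1 u0 hu0).1.ne hA
  choose Z hZ using fun a => Hspan a u0
  have HZ : ∀ (a : K) (u : U), H (a • u) = Z a • H u := by
    intro a u
    by_cases hu : u ∈ Submodule.span K {u0}
    · have hz0' : z0 ≠ 0 := by rintro rfl; exact hz0 (zero_mem _)
      by_cases huu : u = 0
      · simp [huu, hH0]
      refine trans a _ z0 u hz0' ?_ (trans a _ u0 z0 hu0 hz0 (hZ a))
      intro h
      obtain ⟨c, rfl⟩ := Submodule.mem_span_singleton.1 h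
      have hc : c ≠ 0 := by rintro rfl; simp at huu
      apply hz0
      have := Submodule.smul_mem _ c⁻¹ hu
      rwa [inv_smul_smul₀ hc] at this
    · exact trans a _ u0 u hu0 hu (hZ a)
  have cancel : ∀ a b : K, a • H u0 = b • H u0 → a = b := fun a b h =>
    smul_left_injective K hHu0 h
  let Zr : K →+* K :=
    { toFun := Z
      map_one' := cancel _ _ (by rw [← hZ]; simp)
      map_mul' := fun a b => cancel _ _ (by rw [← hZ, mul_smul, HZ, HZ, mul_smul])
      map_zero' := cancel _ _ (by rw [← hZ]; simp [hH0])
      map_add' := fun a b => cancel _ _ (by rw [← hZ, add_smul, Hadd, HZ, HZ, add_smul]) }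
  have hsurj : Function.Surjective Zr := by
    intro b
    by_cases hb : b = 0
    · exact ⟨0, by simp [hb]⟩
    have hI := Hind u0 z0 hu0 hz0
    have hy0 : H u0 + b • H z0 ≠ 0 := by
      intro h
      have := hI 0 1 b (by linear_combination (norm := module) h)
      simp at this
    obtain ⟨t, ht0, ht⟩ := hA.surj _ hy0
    have hR := FR.of_mem hA ht0 hy0 ht
    have hz0' : z0 ≠ 0 := by rintro rfl; exact hz0 (zero_mem _)
    have hm := (hR.mem hA (hH1 u0 hu0).1 (hH1 z0 hz0').1).2
      (Submodule.mem_span_pair.2 ⟨1, b, by module⟩)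
    obtain ⟨p, q, hpq⟩ := Submodule.mem_span_pair.1 hm
    have ht' : t = ((p • u0 + q • z0 : U) : V) := by simp [hpq]
    have hne : p • u0 + q • z0 ≠ 0 := by
      intro h
      rw [h] at ht'
      exact ht0 (by simpa using ht')
    have hR2 := (hH1 _ hne).1
    rw [← ht'] at hR2
    obtain ⟨s, hs, hs'⟩ := hR.span_eq hR2
    rw [Hadd, HZ, HZ] at hs'
    obtain ⟨-, h1, h2⟩ := hI.comb (a := 0) (b := Z p) (c := Z q) (a' := 0) (b' := s)
      (c' := s * b) (by linear_combination (norm := module) hs')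
    refine ⟨q / p, ?_⟩
    rw [map_div₀]
    change Z q / Z p = b
    rw [h1, h2]
    field_simp
  let ζ : K ≃+* K := RingEquiv.ofBijective Zr ⟨Zr.injective, hsurj⟩
  have hζ : ∀ a, ζ a = Z a := fun a => rfl
  let pr : V → U := fun x => ⟨x - l x • v, by simp [hU, hl]⟩
  have pr_add : ∀ x y, pr (x + y) = pr x + pr y := by
    intro x y; ext; simp only [pr, map_add, Submodule.coe_add]; module
  have pr_smul : ∀ (c : K) x, pr (c • x) = c • pr x := by
    intro c y; ext; simp only [pr, map_smul, Submodule.coe_smul, smul_eq_mul]; module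
  let f : V →ₛₗ[(ζ : K →+* K)] V :=
    { toFun := fun x => ζ (l x) • w + H (pr x)
      map_add' := fun x y => by
        simp only [map_add, pr_add, Hadd]; module
      map_smul' := fun c x => by
        simp only [map_smul, pr_smul, HZ, smul_eq_mul, map_mul, RingEquiv.coe_toRingHom, ← hζ]
        module }
  have hf : ∀ x, f x = ζ (l x) • w + H (pr x) := fun _ => rfl
  have hfR : ∀ x, x ≠ 0 → FR K A x (f x) := by
    intro x hx
    have hxe : x = l x • v + (pr x : V) := by simp [pr]
    rw [hf]
    by_cases hc : l x = 0
    · have hp : pr x ≠ 0 := by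
        intro h; rw [h, hc] at hxe; exact hx (by simpa using hxe)
      have := (hH1 _ hp).1
      rw [hc] at hxe ⊢
      simp only [zero_smul, zero_add, map_zero] at hxe ⊢
      rwa [← hxe] at this
    · by_cases hp : pr x = 0
      · have := (hv.smul_left hA hc).smul (a := ζ (l x)) (by simpa using hc)
        rw [hp] at hxe ⊢
        simp only [hH0, ZeroMemClass.coe_zero, add_zero] at hxe ⊢
        rwa [← hxe] at this
      · have hp' : (l x)⁻¹ • pr x ≠ 0 := smul_ne_zero (inv_ne_zero hc) hp
        have := ((hH1 _ hp').2.smul_left hA hc).smul (a := ζ (l x)) (by simpa using hc)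
        rw [Submodule.coe_smul, smul_add, smul_add, HZ, smul_inv_smul₀ hc, ← hxe, ← hζ, map_inv₀,
          smul_inv_smul₀ (by simpa using hc)] at this
        exact this
  refine ⟨ζ, f, ⟨?_, ?_⟩, fun x hx => (hfR x hx).span.symm⟩
  · rw [injective_iff_map_eq_zero]
    intro x hx
    by_contra h0
    exact (hfR x h0).ne hA hx
  · intro y
    by_cases hy : y = 0
    · exact ⟨0, by simp [hy]⟩
    obtain ⟨x, hx, hm⟩ := hA.surj y hy
    obtain ⟨c, hc, hc'⟩ := (hfR x hx).span_eq (FR.of_mem hA hx hy hm)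
    refine ⟨ζ.symm c • x, ?_⟩
    rw [map_smulₛₗ, hc']
    simp

end FTPG2

section Comb
variable {K : Type*} {V : Type*} [Field K] [AddCommGroup V] [Module K V]

theorem ProjFlag.ext' {F G : ProjFlag K V} (h1 : F.pt = G.pt) (h2 : F.ln = G.ln)
    (h3 : F.pl = G.pl) : F = G := by
  cases F; cases G; simp_all

/-- share line and plane -/
def FA1 (F G : ProjFlag K V) : Prop := F.ln = G.ln ∧ F.pl = G.pl
/-- share point and plane -/
def FA2 (F G : ProjFlag K V) : Prop := F.pt = G.pt ∧ F.pl = G.pl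
/-- share point and line -/
def FA3 (F G : ProjFlag K V) : Prop := F.pt = G.pt ∧ F.ln = G.ln
/-- share two components -/
def FRel (F G : ProjFlag K V) : Prop := FA1 F G ∨ FA2 F G ∨ FA3 F G

theorem FA1.symm {F G : ProjFlag K V} (h : FA1 F G) : FA1 G F := ⟨h.1.symm, h.2.symm⟩
theorem FA2.symm {F G : ProjFlag K V} (h : FA2 F G) : FA2 G F := ⟨h.1.symm, h.2.symm⟩
theorem FA3.symm {F G : ProjFlag K V} (h : FA3 F G) : FA3 G F := ⟨h.1.symm, h.2.symm⟩

variable [FiniteDimensional K V]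

theorem sub_sup_eq {S T R : Submodule K V} {n : ℕ} (hS : Module.finrank K S = n)
    (hT : Module.finrank K T = n) (hne : S ≠ T) (hR : Module.finrank K R = n + 1)
    (h1 : S ≤ R) (h2 : T ≤ R) : S ⊔ T = R := by
  apply Submodule.eq_of_le_of_finrank_le (sup_le h1 h2)
  rw [hR]
  by_contra hlt
  have h3 : S = S ⊔ T := Submodule.eq_of_le_of_finrank_le le_sup_left (by omega)
  have h4 : T = S ⊔ T := Submodule.eq_of_le_of_finrank_le le_sup_right (by omega)
  exact hne (h3.trans h4.symm)

theorem sub_inf_finrank {S T R : Submodule K V} {n : ℕ} (hS : Module.finrank K S = n + 1)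
    (hT : Module.finrank K T = n + 1) (hne : S ≠ T) (hR : Module.finrank K R = n + 2)
    (h1 : S ≤ R) (h2 : T ≤ R) : Module.finrank K (S ⊓ T : Submodule K V) = n := by
  have := Submodule.finrank_sup_add_finrank_inf_eq S T
  rw [sub_sup_eq hS hT hne hR h1 h2] at this
  omega

theorem sub_sup_finrank {S T C : Submodule K V} {n : ℕ} (hS : Module.finrank K S = n + 1)
    (hT : Module.finrank K T = n + 1) (hne : S ≠ T) (hC : Module.finrank K C = n)
    (h1 : C ≤ S) (h2 : C ≤ T) : Module.finrank K (S ⊔ T : Submodule K V) = n + 2 := by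
  have h := Submodule.finrank_sup_add_finrank_inf_eq S T
  have h3 : n ≤ Module.finrank K (S ⊓ T : Submodule K V) := hC ▸ Submodule.finrank_mono (le_inf h1 h2)
  have h4 : Module.finrank K (S ⊓ T : Submodule K V) ≤ n := by
    by_contra hlt
    have h5 := Submodule.eq_of_le_of_finrank_le (inf_le_left : S ⊓ T ≤ S) (by omega)
    have h6 := Submodule.eq_of_le_of_finrank_le (inf_le_right : S ⊓ T ≤ T) (by omega)
    exact hne (h5.symm.trans h6)
  omega

theorem sub_ext {S : Submodule K V} {x : V} (hx : x ∉ S) :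
    Module.finrank K (S ⊔ Submodule.span K {x} : Submodule K V) = Module.finrank K S + 1 := by
  have h := Submodule.finrank_sup_add_finrank_inf_eq S (Submodule.span K {x})
  have hx0 : x ≠ 0 := by rintro rfl; exact hx (zero_mem _)
  rw [finrank_span_singleton hx0] at h
  have : S ⊓ Submodule.span K {x} = ⊥ := by
    rw [eq_bot_iff]
    rintro y ⟨hy, hy'⟩
    obtain ⟨c, rfl⟩ := Submodule.mem_span_singleton.1 hy'
    by_cases hc : c = 0
    · simp [hc]
    · exfalso
      apply hx
      have := S.smul_mem c⁻¹ hy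
      rwa [inv_smul_smul₀ hc] at this
  rw [this, finrank_bot] at h
  omega

theorem sub_exists {S T : Submodule K V} (h : Module.finrank K S < Module.finrank K T) :
    ∃ x ∈ T, x ∉ S := by
  by_contra! hc
  exact absurd (Submodule.finrank_mono (hc : T ≤ S)) (by omega)

theorem FA.lines_eq {P P' g g' : Submodule K V} (hP : Module.finrank K P = 1)
    (hP' : Module.finrank K P' = 1) (hg : Module.finrank K g = 2) (hg' : Module.finrank K g' = 2)
    (h1 : P ≤ g) (h2 : P ≤ g') (h3 : P' ≤ g) (h4 : P' ≤ g') (h : P ≠ P') : g = g' := by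
  rw [← sub_sup_eq hP hP' h hg h1 h3, ← sub_sup_eq hP hP' h hg' h2 h4]

theorem FA.planes_eq {P P' g g' : Submodule K V} (hP : Module.finrank K P = 2)
    (hP' : Module.finrank K P' = 2) (hg : Module.finrank K g = 3) (hg' : Module.finrank K g' = 3)
    (h1 : P ≤ g) (h2 : P ≤ g') (h3 : P' ≤ g) (h4 : P' ≤ g') (h : P ≠ P') : g = g' := by
  rw [← sub_sup_eq hP hP' h hg h1 h3, ← sub_sup_eq hP hP' h hg' h2 h4]

theorem ProjFlag.exists_pt (F : ProjFlag K V) : ∃ P : Submodule K V, Module.finrank K P = 1 ∧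
    P ≤ F.ln ∧ P ≠ F.pt := by
  obtain ⟨x, hx, hx'⟩ := sub_exists (S := F.pt) (T := F.ln) (by rw [F.finrank_pt, F.finrank_ln]; simp)
  have hx0 : x ≠ 0 := by rintro rfl; exact hx' (zero_mem _)
  refine ⟨Submodule.span K {x}, finrank_span_singleton hx0, ?_, ?_⟩
  · rwa [Submodule.span_singleton_le_iff_mem]
  · intro h; exact hx' (h ▸ Submodule.mem_span_singleton_self x)

theorem ProjFlag.exists_pl (hV : Module.finrank K V = 4) (F : ProjFlag K V) :
    ∃ ε : Submodule K V, Module.finrank K ε = 3 ∧ F.ln ≤ ε ∧ ε ≠ F.pl := by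
  obtain ⟨x, hx, hx'⟩ := sub_exists (S := F.pl) (T := ⊤) (by rw [F.finrank_pl, finrank_top, hV]; simp)
  have : x ∉ F.ln := fun h => hx' (F.ln_le_pl h)
  refine ⟨F.ln ⊔ Submodule.span K {x}, by rw [sub_ext this, F.finrank_ln], le_sup_left, ?_⟩
  intro h
  apply hx'
  rw [← h]
  exact (le_sup_right : Submodule.span K {x} ≤ _) (Submodule.mem_span_singleton_self x)

theorem fa2_iff (hV : Module.finrank K V = 4) (F G : ProjFlag K V) : FA2 F G ↔ FRel F G ∧
    ∀ H X, FRel H F → ¬ FRel H G → FRel X H → FRel X G → X = F := by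
  constructor
  · intro h
    refine ⟨Or.inr (Or.inl h), ?_⟩
    intro H X hHF hHG hXH hXG
    have key1 := FA.lines_eq F.finrank_pt H.finrank_pt F.finrank_ln G.finrank_ln F.pt_le_ln
      (h.1 ▸ G.pt_le_ln)
    have key2 := FA.planes_eq F.finrank_ln G.finrank_ln F.finrank_pl H.finrank_pl F.ln_le_pl
    have a1 := H.pt_le_ln
    have a2 := H.ln_le_pl
    have a3 := X.pt_le_ln
    have a4 := X.ln_le_pl
    have a5 := G.ln_le_pl
    have e : F.pt = X.pt → F.ln = X.ln → F.pl = X.pl → X = F := fun p q r => (ProjFlag.ext' p q r).symm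
    obtain ⟨h1, h2⟩ := h
    simp only [FRel, FA1, FA2, FA3] at hHF hHG hXH hXG
    grind
  · rintro ⟨h | h | h, h'⟩
    · by_contra hne
      have hP : F.pt ≠ G.pt := fun hh => hne ⟨hh, h.2⟩
      obtain ⟨ε, h1, h2, h3⟩ := F.exists_pl hV
      have := h' ⟨F.pt, F.ln, ε, F.finrank_pt, F.finrank_ln, h1, F.pt_le_ln, h2⟩
        ⟨G.pt, F.ln, ε, G.finrank_pt, F.finrank_ln, h1, h.1 ▸ G.pt_le_ln, h2⟩
        (Or.inr (Or.inr ⟨rfl, rfl⟩)) (by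
          simp only [FRel, FA1, FA2, FA3] at *
          grind) (Or.inl ⟨rfl, rfl⟩) (Or.inr (Or.inr ⟨rfl, h.1⟩))
      exact h3 (congrArg ProjFlag.pl this)
    · exact h
    · by_contra hne
      have hP : F.pl ≠ G.pl := fun hh => hne ⟨h.1, hh⟩
      obtain ⟨P, h1, h2, h3⟩ := F.exists_pt
      have := h' ⟨P, F.ln, F.pl, h1, F.finrank_ln, F.finrank_pl, h2, F.ln_le_pl⟩
        ⟨P, F.ln, G.pl, h1, F.finrank_ln, G.finrank_pl, h2, h.2 ▸ G.ln_le_pl⟩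
        (Or.inl ⟨rfl, rfl⟩) (by
          simp only [FRel, FA1, FA2, FA3] at *
          grind) (Or.inr (Or.inr ⟨rfl, rfl⟩)) (Or.inl ⟨h.2, rfl⟩)
      exact h3 (congrArg ProjFlag.pt this)

/-- connectedness, fixed point -/
theorem FConn.pt {α : Sort*} (f : ProjFlag K V → α) (h2 : ∀ F G, FA2 F G → f F = f G)
    (h3 : ∀ F G, FA3 F G → f F = f G) (F G : ProjFlag K V) (h : F.pt = G.pt) : f F = f G := by
  by_cases hg : F.ln = G.ln
  · exact h3 _ _ ⟨h, hg⟩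
  have hr : Module.finrank K (F.ln ⊔ G.ln : Submodule K V) = 3 :=
    sub_sup_finrank F.finrank_ln G.finrank_ln hg F.finrank_pt F.pt_le_ln (h ▸ G.pt_le_ln)
  let A : ProjFlag K V := ⟨F.pt, F.ln, _, F.finrank_pt, F.finrank_ln, hr, F.pt_le_ln, le_sup_left⟩
  let B : ProjFlag K V := ⟨G.pt, G.ln, _, G.finrank_pt, G.finrank_ln, hr, G.pt_le_ln, le_sup_right⟩
  rw [h3 F A ⟨rfl, rfl⟩, h2 A B ⟨h, rfl⟩, h3 B G ⟨rfl, rfl⟩]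

theorem FConn.ln {α : Sort*} (f : ProjFlag K V → α) (h1 : ∀ F G, FA1 F G → f F = f G)
    (h3 : ∀ F G, FA3 F G → f F = f G) (F G : ProjFlag K V) (h : F.ln = G.ln) : f F = f G := by
  let A : ProjFlag K V := ⟨G.pt, F.ln, F.pl, G.finrank_pt, F.finrank_ln, F.finrank_pl,
    h ▸ G.pt_le_ln, F.ln_le_pl⟩
  rw [h1 F A ⟨rfl, rfl⟩, h3 A G ⟨rfl, h⟩]

theorem FConn.pl {α : Sort*} (f : ProjFlag K V → α) (h1 : ∀ F G, FA1 F G → f F = f G)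
    (h2 : ∀ F G, FA2 F G → f F = f G) (F G : ProjFlag K V) (h : F.pl = G.pl) : f F = f G := by
  by_cases hg : F.ln = G.ln
  · exact h1 _ _ ⟨hg, h⟩
  have hr : Module.finrank K (F.ln ⊓ G.ln : Submodule K V) = 1 :=
    sub_inf_finrank F.finrank_ln G.finrank_ln hg F.finrank_pl F.ln_le_pl (h ▸ G.ln_le_pl)
  let A : ProjFlag K V := ⟨_, F.ln, F.pl, hr, F.finrank_ln, F.finrank_pl, inf_le_left, F.ln_le_pl⟩
  let B : ProjFlag K V := ⟨_, G.ln, G.pl, hr, G.finrank_ln, G.finrank_pl, inf_le_right, G.ln_le_pl⟩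
  rw [h1 F A ⟨rfl, rfl⟩, h2 A B ⟨rfl, h⟩, h1 B G ⟨rfl, rfl⟩]

/-- a flag with given line and a point on it -/
theorem exists_flag_ln (hV : Module.finrank K V = 4) (P g : Submodule K V)
    (hP : Module.finrank K P = 1) (hg : Module.finrank K g = 2) (h : P ≤ g) :
    ∃ F : ProjFlag K V, F.pt = P ∧ F.ln = g := by
  obtain ⟨x, -, hx⟩ := sub_exists (S := g) (T := ⊤) (by rw [hg, finrank_top, hV]; simp)
  exact ⟨⟨P, g, _, hP, hg, by rw [sub_ext hx, hg], h, le_sup_left⟩, rfl, rfl⟩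

theorem exists_flag_pt_pl (P ε : Submodule K V)
    (hP : Module.finrank K P = 1) (hε : Module.finrank K ε = 3) (h : P ≤ ε) :
    ∃ F : ProjFlag K V, F.pt = P ∧ F.pl = ε := by
  obtain ⟨x, hx, hx'⟩ := sub_exists (S := P) (T := ε) (by rw [hP, hε]; simp)
  exact ⟨⟨P, P ⊔ Submodule.span K {x}, ε, hP, by rw [sub_ext hx', hP], hε, le_sup_left,
    sup_le h ((Submodule.span_singleton_le_iff_mem _ _).2 hx)⟩, rfl, rfl⟩

theorem exists_flag_pt (hV : Module.finrank K V = 4) (P : Submodule K V)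
    (hP : Module.finrank K P = 1) : ∃ F : ProjFlag K V, F.pt = P := by
  obtain ⟨x, -, hx⟩ := sub_exists (S := P) (T := ⊤) (by rw [hP, finrank_top, hV]; simp)
  obtain ⟨F, hF, -⟩ := exists_flag_ln hV P (P ⊔ Submodule.span K {x}) hP (by rw [sub_ext hx, hP])
    le_sup_left
  exact ⟨F, hF⟩

theorem FConn.all (hV : Module.finrank K V = 4) {α : Sort*} (f : ProjFlag K V → α)
    (h : ∀ F G, FRel F G → f F = f G) (F G : ProjFlag K V) : f F = f G := by
  have h1 : ∀ F G, FA1 F G → f F = f G := fun F G hh => h F G (Or.inl hh)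
  have h2 : ∀ F G, FA2 F G → f F = f G := fun F G hh => h F G (Or.inr (Or.inl hh))
  have h3 : ∀ F G, FA3 F G → f F = f G := fun F G hh => h F G (Or.inr (Or.inr hh))
  by_cases hP : F.pt = G.pt
  · exact FConn.pt f h2 h3 F G hP
  have hr : Module.finrank K (F.pt ⊔ G.pt : Submodule K V) = 2 :=
    sub_sup_finrank (n := 0) (C := ⊥) F.finrank_pt G.finrank_pt hP (by simp) bot_le bot_le
  obtain ⟨A, hA, hA'⟩ := exists_flag_ln hV _ _ F.finrank_pt hr le_sup_left
  obtain ⟨B, hB, hB'⟩ := exists_flag_ln hV _ _ G.finrank_pt hr le_sup_right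
  rw [FConn.pt f h2 h3 F A hA.symm, FConn.ln f h1 h3 A B (hA'.trans hB'.symm),
    FConn.pt f h2 h3 B G hB]

end Comb

section Dich
variable {K : Type*} {V : Type*} [Field K] [AddCommGroup V] [Module K V] [FiniteDimensional K V]

theorem faut_fa2 (hV : Module.finrank K V = 4) (e : ProjFlag K V ≃ ProjFlag K V)
    (he : ∀ F G, FRel F G ↔ FRel (e F) (e G)) (F G : ProjFlag K V) :
    FA2 F G ↔ FA2 (e F) (e G) := by
  rw [fa2_iff hV, fa2_iff hV, ← he]
  refine and_congr_right fun _ => ⟨fun h H X => ?_, fun h H X => ?_⟩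
  · obtain ⟨H, rfl⟩ := e.surjective H
    obtain ⟨X, rfl⟩ := e.surjective X
    rw [← he, ← he, ← he, ← he, e.injective.eq_iff]
    exact h H X
  · have := h (e H) (e X)
    rwa [← he, ← he, ← he, ← he, e.injective.eq_iff] at this

/-- the local type of `e` at `F` -/
def FSig (e : ProjFlag K V ≃ ProjFlag K V) (F : ProjFlag K V) : Prop :=
  ∃ G, G ≠ F ∧ FA1 F G ∧ FA1 (e F) (e G)

theorem fa_excl {F G H : ProjFlag K V} (h1 : FA1 F G) (h3 : FA3 F H) (hG : G ≠ F) (hH : H ≠ F) :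
    ¬ FRel G H := by
  have e1 : G.pt = F.pt → G.ln = F.ln → G.pl = F.pl → G = F := ProjFlag.ext'
  have e2 : H.pt = F.pt → H.ln = F.ln → H.pl = F.pl → H = F := ProjFlag.ext'
  simp only [FRel, FA1, FA2, FA3] at *
  grind

theorem fa_eq13 {F G : ProjFlag K V} (h1 : FA1 F G) (h3 : FA3 F G) : F = G :=
  ProjFlag.ext' h3.1 h1.1 h1.2
theorem fa_eq12 {F G : ProjFlag K V} (h1 : FA1 F G) (h3 : FA2 F G) : F = G :=
  ProjFlag.ext' h3.1 h1.1 h1.2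
theorem fa_eq23 {F G : ProjFlag K V} (h1 : FA2 F G) (h3 : FA3 F G) : F = G :=
  ProjFlag.ext' h3.1 h3.2 h1.2

variable {e : ProjFlag K V ≃ ProjFlag K V}

theorem fa_13 (hV : Module.finrank K V = 4) (he : ∀ F G, FRel F G ↔ FRel (e F) (e G))
    {F G : ProjFlag K V} (h : FA1 F G ∨ FA3 F G) : FA1 (e F) (e G) ∨ FA3 (e F) (e G) := by
  have h1 : FRel F G := by unfold FRel; tauto
  rw [he] at h1
  rcases h1 with h1 | h1 | h1
  · exact Or.inl h1
  · rw [← faut_fa2 hV e he] at h1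
    have : F = G := by
      rcases h with h | h
      · exact fa_eq12 h h1
      · exact fa_eq23 h1 h
    subst this
    exact Or.inl ⟨rfl, rfl⟩
  · exact Or.inr h1

theorem exists_fa1 (F : ProjFlag K V) : ∃ G, G ≠ F ∧ FA1 F G := by
  obtain ⟨P, h1, h2, h3⟩ := F.exists_pt
  refine ⟨⟨P, F.ln, F.pl, h1, F.finrank_ln, F.finrank_pl, h2, F.ln_le_pl⟩, ?_, rfl, rfl⟩
  intro h; exact h3 (congrArg ProjFlag.pt h)

theorem fsig_pos (hV : Module.finrank K V = 4) (he : ∀ F G, FRel F G ↔ FRel (e F) (e G))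
    {F : ProjFlag K V} (hF : FSig e F) (G : ProjFlag K V) :
    (FA1 F G → FA1 (e F) (e G)) ∧ (FA3 F G → FA3 (e F) (e G)) := by
  obtain ⟨H, hH, h1, h2⟩ := hF
  have hH' : e H ≠ e F := fun h => hH (e.injective h)
  by_cases hGF : G = F
  · subst hGF; exact ⟨fun _ => ⟨rfl, rfl⟩, fun _ => ⟨rfl, rfl⟩⟩
  have hGF' : e G ≠ e F := fun h => hGF (e.injective h)
  constructor
  · intro h
    refine (fa_13 hV he (Or.inl h)).resolve_right fun h3 => ?_
    refine fa_excl h2 h3 hH' hGF' ?_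
    rw [← he]
    exact Or.inl ⟨h1.1.symm.trans h.1, h1.2.symm.trans h.2⟩
  · intro h
    refine (fa_13 hV he (Or.inr h)).resolve_left fun h3 => ?_
    refine fa_excl h1 h hH hGF ?_
    rw [he]
    exact Or.inl ⟨h2.1.symm.trans h3.1, h2.2.symm.trans h3.2⟩

theorem fsig_neg (hV : Module.finrank K V = 4) (he : ∀ F G, FRel F G ↔ FRel (e F) (e G))
    {F : ProjFlag K V} (hF : ¬ FSig e F) (G : ProjFlag K V) :
    (FA1 F G → FA3 (e F) (e G)) ∧ (FA3 F G → FA1 (e F) (e G)) := by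
  by_cases hGF : G = F
  · subst hGF; exact ⟨fun _ => ⟨rfl, rfl⟩, fun _ => ⟨rfl, rfl⟩⟩
  have key : ∀ G, G ≠ F → FA1 F G → FA3 (e F) (e G) := fun G hG h =>
    (fa_13 hV he (Or.inl h)).resolve_left fun h3 => hF ⟨G, hG, h, h3⟩
  refine ⟨key G hGF, fun h => ?_⟩
  obtain ⟨H, hH, h1⟩ := exists_fa1 F
  refine (fa_13 hV he (Or.inr h)).resolve_right fun h3 => ?_
  refine fa_excl h1 h hH hGF ?_
  rw [he]
  have := key H hH h1
  exact Or.inr (Or.inr ⟨this.1.symm.trans h3.1, this.2.symm.trans h3.2⟩)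

theorem fsig_fa1 (hV : Module.finrank K V = 4) (he : ∀ F G, FRel F G ↔ FRel (e F) (e G))
    {F G : ProjFlag K V} (h : FA1 F G) : FSig e F ↔ FSig e G := by
  have key : ∀ F G, FA1 F G → FSig e F → FSig e G := by
    intro F G h hF
    by_cases hne : F = G
    · exact hne ▸ hF
    · exact ⟨F, hne, h.symm, ((fsig_pos hV he hF G).1 h).symm⟩
  exact ⟨key _ _ h, key _ _ h.symm⟩

theorem fsig_fa3 (hV : Module.finrank K V = 4) (he : ∀ F G, FRel F G ↔ FRel (e F) (e G))
    {F G : ProjFlag K V} (h : FA3 F G) : FSig e F ↔ FSig e G := by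
  have key : ∀ F G, FA3 F G → FSig e F → FSig e G := by
    intro F G h hF
    by_contra hG
    have h1 := (fsig_pos hV he hF G).2 h
    have h2 := (fsig_neg hV he hG F).2 h.symm
    exact hG ((e.injective (fa_eq13 h2.symm h1)) ▸ hF)
  exact ⟨key _ _ h, key _ _ h.symm⟩

theorem fsig_fa2 (hV : Module.finrank K V = 4) (he : ∀ F G, FRel F G ↔ FRel (e F) (e G))
    {F G : ProjFlag K V} (h : FA2 F G) : FSig e F ↔ FSig e G := by
  have key : ∀ F G, FA2 F G → FSig e F → FSig e G := by
    intro F0 F5 h hF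
    by_cases hln : F0.ln = F5.ln
    · exact (fa_eq23 h ⟨h.1, hln⟩) ▸ hF
    by_contra hG
    obtain ⟨Q, hQ, hQg, hQP⟩ := F0.exists_pt
    obtain ⟨R, hR, hRg, hRP⟩ := F5.exists_pt
    have hQR : Q ≠ R := by
      rintro rfl
      exact hln (FA.lines_eq hQ F0.finrank_pt F0.finrank_ln F5.finrank_ln hQg hRg F0.pt_le_ln
        (h.1 ▸ F5.pt_le_ln) hQP)
    have hk : Module.finrank K (Q ⊔ R : Submodule K V) = 2 :=
      sub_sup_finrank (n := 0) (C := ⊥) hQ hR hQR (by simp) bot_le bot_le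
    have hRε : R ≤ F0.pl := h.2 ▸ hRg.trans F5.ln_le_pl
    have hkε : Q ⊔ R ≤ F0.pl := sup_le (hQg.trans F0.ln_le_pl) hRε
    let F1 : ProjFlag K V := ⟨Q, F0.ln, F0.pl, hQ, F0.finrank_ln, F0.finrank_pl, hQg, F0.ln_le_pl⟩
    let F2 : ProjFlag K V := ⟨Q, Q ⊔ R, F0.pl, hQ, hk, F0.finrank_pl, le_sup_left, hkε⟩
    let F3 : ProjFlag K V := ⟨R, Q ⊔ R, F0.pl, hR, hk, F0.finrank_pl, le_sup_right, hkε⟩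
    let F4 : ProjFlag K V := ⟨R, F5.ln, F5.pl, hR, F5.finrank_ln, F5.finrank_pl, hRg, F5.ln_le_pl⟩
    have t01 : FA1 F0 F1 := ⟨rfl, rfl⟩
    have t12 : FA2 F1 F2 := ⟨rfl, rfl⟩
    have t23 : FA1 F2 F3 := ⟨rfl, rfl⟩
    have t34 : FA2 F3 F4 := ⟨rfl, h.2⟩
    have t45 : FA1 F5 F4 := ⟨rfl, rfl⟩
    have d01 : F0 ≠ F1 := fun hh => hQP (congrArg ProjFlag.pt hh).symm
    have d45 : F5 ≠ F4 := fun hh => hRP (congrArg ProjFlag.pt hh).symm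
    have u01 := (fsig_pos hV he hF F1).1 t01
    have u45 := (fsig_neg hV he hG F4).1 t45
    have u12 := (faut_fa2 hV e he _ _).1 t12
    have u34 := (faut_fa2 hV e he _ _).1 t34
    have u50 := (faut_fa2 hV e he _ _).1 h
    rcases fa_13 hV he (Or.inl t23) with u | u
    · refine d45 (e.injective (ProjFlag.ext' u45.1 u45.2 ?_))
      rw [← u34.2, ← u.2, ← u12.2, ← u01.2, u50.2]
    · refine d01 (e.injective (ProjFlag.ext' ?_ u01.1 u01.2))
      rw [u12.1, u.1, u34.1, ← u45.1, u50.1]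
  exact ⟨key _ _ h, key _ _ h.symm⟩

/-- type preserving -/
def FTP (e : ProjFlag K V ≃ ProjFlag K V) : Prop :=
  ∀ F G, (F.pt = G.pt ↔ (e F).pt = (e G).pt) ∧ (F.ln = G.ln ↔ (e F).ln = (e G).ln) ∧
    (F.pl = G.pl ↔ (e F).pl = (e G).pl)

theorem ftp_of {e : ProjFlag K V ≃ ProjFlag K V}
    (h1 : ∀ F G, FA1 F G ↔ FA1 (e F) (e G)) (h2 : ∀ F G, FA2 F G ↔ FA2 (e F) (e G))
    (h3 : ∀ F G, FA3 F G ↔ FA3 (e F) (e G)) : FTP e := by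
  have fwd : ∀ e : ProjFlag K V ≃ ProjFlag K V, (∀ F G, FA1 F G ↔ FA1 (e F) (e G)) →
    (∀ F G, FA2 F G ↔ FA2 (e F) (e G)) → (∀ F G, FA3 F G ↔ FA3 (e F) (e G)) → ∀ F G,
    (F.pt = G.pt → (e F).pt = (e G).pt) ∧ (F.ln = G.ln → (e F).ln = (e G).ln) ∧
    (F.pl = G.pl → (e F).pl = (e G).pl) := by
    intro e h1 h2 h3 F G
    refine ⟨FConn.pt (fun F => (e F).pt) (fun F G h => ((h2 F G).1 h).1)
      (fun F G h => ((h3 F G).1 h).1) F G, FConn.ln (fun F => (e F).ln)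
      (fun F G h => ((h1 F G).1 h).1) (fun F G h => ((h3 F G).1 h).2) F G,
      FConn.pl (fun F => (e F).pl) (fun F G h => ((h1 F G).1 h).2)
      (fun F G h => ((h2 F G).1 h).2) F G⟩
  intro F G
  have a := fwd e h1 h2 h3 F G
  have b := fwd e.symm (fun F G => by rw [h1 (e.symm F)]; simp) (fun F G => by rw [h2 (e.symm F)]; simp)
    (fun F G => by rw [h3 (e.symm F)]; simp) (e F) (e G)
  simp only [Equiv.symm_apply_apply] at b
  exact ⟨⟨a.1, b.1⟩, ⟨a.2.1, b.2.1⟩, ⟨a.2.2, b.2.2⟩⟩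

theorem faut_dichotomy (hV : Module.finrank K V = 4) (e : ProjFlag K V ≃ ProjFlag K V)
    (he : ∀ F G, FRel F G ↔ FRel (e F) (e G)) :
    FTP e ∨ ((∀ F G, FA1 F G ↔ FA3 (e F) (e G)) ∧ (∀ F G, FA2 F G ↔ FA2 (e F) (e G)) ∧
      (∀ F G, FA3 F G ↔ FA1 (e F) (e G))) := by
  have hconst := FConn.all hV (FSig e) (fun F G h => propext (by
    rcases h with h | h | h
    · exact fsig_fa1 hV he h
    · exact fsig_fa2 hV he h
    · exact fsig_fa3 hV he h))
  have h2 := faut_fa2 hV e he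
  by_cases hs : ∃ F, FSig e F
  · left
    obtain ⟨F0, hF0⟩ := hs
    have hall : ∀ F, FSig e F := fun F => (hconst F0 F) ▸ hF0
    have f1 := fun F G => (fsig_pos hV he (hall F) G).1
    have f3 := fun F G => (fsig_pos hV he (hall F) G).2
    refine ftp_of (fun F G => ⟨f1 F G, fun h => ?_⟩) h2 (fun F G => ⟨f3 F G, fun h => ?_⟩)
    · rcases (he F G).2 (Or.inl h) with h' | h' | h'
      · exact h'
      · rw [e.injective (fa_eq12 h ((h2 _ _).1 h'))]; exact ⟨rfl, rfl⟩
      · rw [e.injective (fa_eq13 h (f3 _ _ h'))]; exact ⟨rfl, rfl⟩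
    · rcases (he F G).2 (Or.inr (Or.inr h)) with h' | h' | h'
      · rw [e.injective (fa_eq13 (f1 _ _ h') h)]; exact ⟨rfl, rfl⟩
      · rw [e.injective (fa_eq23 ((h2 _ _).1 h') h)]; exact ⟨rfl, rfl⟩
      · exact h'
  · right
    push Not at hs
    have f1 := fun F G => (fsig_neg hV he (hs F) G).1
    have f3 := fun F G => (fsig_neg hV he (hs F) G).2
    refine ⟨fun F G => ⟨f1 F G, fun h => ?_⟩, h2, fun F G => ⟨f3 F G, fun h => ?_⟩⟩
    · rcases (he F G).2 (Or.inr (Or.inr h)) with h' | h' | h'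
      · exact h'
      · rw [e.injective (fa_eq23 ((h2 _ _).1 h') h)]; exact ⟨rfl, rfl⟩
      · rw [e.injective (fa_eq13 (f3 _ _ h') h)]; exact ⟨rfl, rfl⟩
    · rcases (he F G).2 (Or.inl h) with h' | h' | h'
      · rw [e.injective (fa_eq13 h (f1 _ _ h'))]; exact ⟨rfl, rfl⟩
      · rw [e.injective (fa_eq12 h ((h2 _ _).1 h'))]; exact ⟨rfl, rfl⟩
      · exact h'

/-- A type preserving automorphism of the flags comes from a semilinear map. -/
theorem ftp_semilinear (hV : Module.finrank K V = 4) {e : ProjFlag K V ≃ ProjFlag K V}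
    (he : FTP e) : ∃ (ζ : K ≃+* K) (f : V →ₛₗ[(ζ : K →+* K)] V), Function.Bijective f ∧
      ∀ (F : ProjFlag K V) (x : V), x ≠ 0 →
        (F.pt = Submodule.span K {x} → (e F).pt = Submodule.span K {f x}) ∧
        (x ∈ F.ln → f x ∈ (e F).ln) ∧ (x ∈ F.pl → f x ∈ (e F).pl) := by
  have hfr : ∀ x : V, x ≠ 0 → Module.finrank K (Submodule.span K {x}) = 1 := fun x hx =>
    finrank_span_singleton hx
  have hsymm : FTP e.symm := by
    intro F G
    have := he (e.symm F) (e.symm G)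
    simp only [Equiv.apply_symm_apply] at this
    exact ⟨this.1.symm, this.2.1.symm, this.2.2.symm⟩
  have join : ∀ e : ProjFlag K V ≃ ProjFlag K V, FTP e → ∀ F G H : ProjFlag K V,
      F.pt ≤ G.pt ⊔ H.pt → (e F).pt ≤ (e G).pt ⊔ (e H).pt := by
    intro e he F G H h
    by_cases hGH : G.pt = H.pt
    · rw [← hGH, sup_idem] at h
      have h1 : F.pt = G.pt := Submodule.eq_of_le_of_finrank_eq h (by rw [F.finrank_pt, G.finrank_pt])
      rw [((he F G).1.1 h1)]
      exact le_sup_left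
    · have hr : Module.finrank K (G.pt ⊔ H.pt : Submodule K V) = 2 :=
        sub_sup_finrank (n := 0) (C := ⊥) G.finrank_pt H.finrank_pt hGH (by simp) bot_le bot_le
      obtain ⟨F', hF, hF'⟩ := exists_flag_ln hV _ _ F.finrank_pt hr h
      obtain ⟨G', hG, hG'⟩ := exists_flag_ln hV _ _ G.finrank_pt hr le_sup_left
      obtain ⟨H', hH, hH'⟩ := exists_flag_ln hV _ _ H.finrank_pt hr le_sup_right
      rw [← (he F' F).1.1 hF, ← (he G' G).1.1 hG, ← (he H' H).1.1 hH]
      have l1 := (he F' G').2.1.1 (hF'.trans hG'.symm)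
      have l2 := (he F' H').2.1.1 (hF'.trans hH'.symm)
      rw [sub_sup_eq (e G').finrank_pt (e H').finrank_pt ?_ (e F').finrank_ln
        (l1 ▸ (e G').pt_le_ln) (l2 ▸ (e H').pt_le_ln)]
      · exact (e F').pt_le_ln
      · intro h
        apply hGH
        rw [← hG, ← hH]
        exact (he _ _).1.2 h
  choose Fl hFl using fun x : {x : V // x ≠ 0} => exists_flag_pt hV _ (hfr x.1 x.2)
  have hgen : ∀ F : ProjFlag K V, ∃ y, y ≠ 0 ∧ F.pt = Submodule.span K {y} := by
    intro F
    obtain ⟨y, hy, hy'⟩ := finrank_eq_one_iff'.1 F.finrank_pt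
    refine ⟨y, by simpa using hy, le_antisymm ?_ ?_⟩
    · intro z hz
      obtain ⟨c, hc⟩ := hy' ⟨z, hz⟩
      rw [Submodule.mem_span_singleton]
      exact ⟨c, by simpa using congrArg Subtype.val hc⟩
    · rw [Submodule.span_singleton_le_iff_mem]; exact y.2
  choose gen hgen0 hgen using hgen
  classical
  let A : V → V := fun x => if h : x = 0 then 0 else gen (e (Fl ⟨x, h⟩))
  have hA : ∀ x, x ≠ 0 → ∀ F : ProjFlag K V, F.pt = Submodule.span K {x} →
      (e F).pt = Submodule.span K {A x} := by
    intro x hx F hF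
    simp only [A, hx, dite_false]
    rw [← hgen]
    exact (he _ _).1.1 (by rw [hF, hFl])
  have hne : ∀ x, x ≠ 0 → A x ≠ 0 := by
    intro x hx
    simp only [A, hx, dite_false]
    exact hgen0 _
  have hColl : FColl (K := K) A := by
    refine ⟨hne, ?_, ?_⟩
    · intro x y z hx hy hz
      obtain ⟨F, hF⟩ := exists_flag_pt hV _ (hfr x hx)
      obtain ⟨G, hG⟩ := exists_flag_pt hV _ (hfr y hy)
      obtain ⟨H, hH⟩ := exists_flag_pt hV _ (hfr z hz)
      rw [← Submodule.span_singleton_le_iff_mem, ← Submodule.span_singleton_le_iff_mem (A x),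
        Submodule.span_insert, Submodule.span_insert, ← hA x hx F hF, ← hA y hy G hG,
        ← hA z hz H hH, ← hF, ← hG, ← hH]
      refine ⟨join e he F G H, fun h => ?_⟩
      have := join e.symm hsymm _ _ _ h
      simpa using this
    · intro y hy
      obtain ⟨G, hG⟩ := exists_flag_pt hV _ (hfr y hy)
      refine ⟨gen (e.symm G), hgen0 _, ?_⟩
      rw [← hA _ (hgen0 _) (e.symm G) (hgen _), e.apply_symm_apply, hG]
      exact Submodule.mem_span_singleton_self y
  obtain ⟨ζ, f, hf, hf'⟩ := ftpg hV hColl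
  refine ⟨ζ, f, hf, ?_⟩
  have hpt : ∀ (F : ProjFlag K V) (x : V), x ≠ 0 → F.pt = Submodule.span K {x} →
      (e F).pt = Submodule.span K {f x} := fun F x hx h => by rw [hA x hx F h, hf' x hx]
  intro F x hx
  refine ⟨hpt F x hx, fun h => ?_, fun h => ?_⟩
  · obtain ⟨G, hG, hG'⟩ := exists_flag_ln hV _ _ (hfr x hx) F.finrank_ln
      ((Submodule.span_singleton_le_iff_mem _ _).2 h)
    rw [← (he G F).2.1.1 hG', ← Submodule.span_singleton_le_iff_mem, ← hpt G x hx hG]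
    exact (e G).pt_le_ln
  · obtain ⟨G, hG, hG'⟩ := exists_flag_pt_pl _ _ (hfr x hx) F.finrank_pl
      ((Submodule.span_singleton_le_iff_mem _ _).2 h)
    rw [← (he G F).2.2.1 hG', ← Submodule.span_singleton_le_iff_mem, ← hpt G x hx hG]
    exact (e G).pt_le_ln.trans (e G).ln_le_pl

end Dich

section Tens
variable {K : Type*} [Field K] {A B C : Type*} [AddCommGroup A] [Module K A]
  [AddCommGroup B] [Module K B] [AddCommGroup C] [Module K C]

theorem tens_ev (α : A →ₗ[K] K) (β : B →ₗ[K] K) (γ : C →ₗ[K] K) :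
    ∃ L : A ⊗[K] B ⊗[K] C →ₗ[K] K, ∀ a b c, L (a ⊗ₜ[K] b ⊗ₜ[K] c) = α a * β b * γ c :=
  ⟨LinearMap.mul' K K ∘ₗ TensorProduct.map (LinearMap.mul' K K ∘ₗ TensorProduct.map α β) γ,
    fun a b c => by simp⟩

theorem sep_one {x : A} (hx : x ≠ 0) : ∃ α : A →ₗ[K] K, α x = 1 :=
  Module.Projective.exists_dual_eq_one K hx

theorem sep_two {x y : A} (hx : x ∉ Submodule.span K {y}) : ∃ α : A →ₗ[K] K, α y = 0 ∧ α x = 1 := by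
  obtain ⟨f, hf, hf'⟩ := Submodule.exists_dual_map_eq_bot_of_notMem hx inferInstance
  refine ⟨(f x)⁻¹ • f, ?_, by simp [hf]⟩
  have : f y ∈ (Submodule.span K {y}).map f :=
    Submodule.mem_map_of_mem (Submodule.mem_span_singleton_self y)
  rw [hf'] at this
  simp [(Submodule.mem_bot K).1 this]

theorem sep_both {x y : A} (hx : x ≠ 0) (hy : y ≠ 0) : ∃ α : A →ₗ[K] K, α x ≠ 0 ∧ α y ≠ 0 := by
  obtain ⟨f, hf⟩ := sep_one (K := K) hx
  obtain ⟨g, hg⟩ := sep_one (K := K) hy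
  by_cases h1 : f y = 0
  · by_cases h2 : g x = 0
    · exact ⟨f + g, by simp [hf, h2], by simp [hg, h1]⟩
    · exact ⟨g, h2, by simp [hg]⟩
  · exact ⟨f, by simp [hf], h1⟩

theorem mem_span_symm {x y : A} (hx : x ≠ 0) (h : x ∈ Submodule.span K {y}) :
    y ∈ Submodule.span K {x} := by
  obtain ⟨c, rfl⟩ := Submodule.mem_span_singleton.1 h
  have hc : c ≠ 0 := by rintro rfl; simp at hx
  exact Submodule.mem_span_singleton.2 ⟨c⁻¹, inv_smul_smul₀ hc y⟩

theorem span_eq_of_mem {x y : A} (hx : x ≠ 0) (h : x ∈ Submodule.span K {y}) :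
    Submodule.span K {x} = Submodule.span K {y} :=
  le_antisymm ((Submodule.span_singleton_le_iff_mem _ _).2 h)
    ((Submodule.span_singleton_le_iff_mem _ _).2 (mem_span_symm hx h))

theorem tens_ne {a : A} {b : B} {c : C} (ha : a ≠ 0) (hb : b ≠ 0) (hc : c ≠ 0) :
    a ⊗ₜ[K] b ⊗ₜ[K] c ≠ 0 := by
  obtain ⟨f, hf⟩ := sep_one (K := K) ha
  obtain ⟨g, hg⟩ := sep_one (K := K) hb
  obtain ⟨h, hh⟩ := sep_one (K := K) hc
  obtain ⟨L, hL⟩ := tens_ev f g h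
  intro h0
  have := hL a b c
  rw [h0, hf, hg, hh] at this
  simp at this

theorem tens_inj {a a' : A} {b b' : B} {c c' : C} (ha : a ≠ 0) (hb : b ≠ 0) (hc : c ≠ 0)
    (h : a ⊗ₜ[K] b ⊗ₜ[K] c ∈ Submodule.span K {a' ⊗ₜ[K] b' ⊗ₜ[K] c'}) :
    a ∈ Submodule.span K {a'} ∧ b ∈ Submodule.span K {b'} ∧ c ∈ Submodule.span K {c'} := by
  obtain ⟨k, hk⟩ := Submodule.mem_span_singleton.1 h
  obtain ⟨f, hf⟩ := sep_one (K := K) ha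
  obtain ⟨g, hg⟩ := sep_one (K := K) hb
  obtain ⟨h, hh⟩ := sep_one (K := K) hc
  refine ⟨?_, ?_, ?_⟩
  · by_contra hn
    obtain ⟨f, hf0, hf⟩ := sep_two hn
    obtain ⟨L, hL⟩ := tens_ev f g h
    have := congrArg L hk
    simp [hL, hf, hg, hh, hf0] at this
  · by_contra hn
    obtain ⟨g, hf0, hg⟩ := sep_two hn
    obtain ⟨L, hL⟩ := tens_ev f g h
    have := congrArg L hk
    simp [hL, hf, hg, hh, hf0] at this
  · by_contra hn
    obtain ⟨h, hf0, hh⟩ := sep_two hn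
    obtain ⟨L, hL⟩ := tens_ev f g h
    have := congrArg L hk
    simp [hL, hf, hg, hh, hf0] at this

theorem tens_add {a a' a'' : A} {b b' b'' : B} {c c' c'' : C} (ha : a ≠ 0) (hb : b ≠ 0) (hc : c ≠ 0)
    (ha' : a' ≠ 0) (hb' : b' ≠ 0) (hc' : c' ≠ 0)
    (h : a ⊗ₜ[K] b ⊗ₜ[K] c + a' ⊗ₜ[K] b' ⊗ₜ[K] c' = a'' ⊗ₜ[K] b'' ⊗ₜ[K] c'') :
    (b ∈ Submodule.span K {b'} ∧ c ∈ Submodule.span K {c'}) ∨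
    (a ∈ Submodule.span K {a'} ∧ c ∈ Submodule.span K {c'}) ∨
    (a ∈ Submodule.span K {a'} ∧ b ∈ Submodule.span K {b'}) := by
  have key : ∀ (f : A →ₗ[K] K) (g : B →ₗ[K] K) (h : C →ₗ[K] K),
      f a * g b * h c + f a' * g b' * h c' = f a'' * g b'' * h c'' := by
    intro f g k
    obtain ⟨L, hL⟩ := tens_ev f g k
    have := congrArg L h
    simpa [hL] using this
  have h1 : a ∈ Submodule.span K {a'} ∨ b ∈ Submodule.span K {b'} := by
    by_contra! hn
    obtain ⟨f0, p1, p2⟩ := sep_two hn.1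
    obtain ⟨g0, q1, q2⟩ := sep_two hn.2
    obtain ⟨f1, p3, p4⟩ := sep_two (fun h => hn.1 (mem_span_symm ha' h))
    obtain ⟨g1, q3, q4⟩ := sep_two (fun h => hn.2 (mem_span_symm hb' h))
    obtain ⟨k, k1, k2⟩ := sep_both (K := K) hc hc'
    have e00 := key f0 g0 k
    have e01 := key f0 g1 k
    have e10 := key f1 g0 k
    have e11 := key f1 g1 k
    simp only [p1, p2, q1, q2, p3, p4, q3, q4] at e00 e01 e10 e11
    apply mul_ne_zero k1 k2
    linear_combination (f1 a'' * g1 b'' * k c'') * e00 + k c * e11 - (f1 a'' * g0 b'' * k c'') * e01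
  have h2 : a ∈ Submodule.span K {a'} ∨ c ∈ Submodule.span K {c'} := by
    by_contra! hn
    obtain ⟨f0, p1, p2⟩ := sep_two hn.1
    obtain ⟨g0, q1, q2⟩ := sep_two hn.2
    obtain ⟨f1, p3, p4⟩ := sep_two (fun h => hn.1 (mem_span_symm ha' h))
    obtain ⟨g1, q3, q4⟩ := sep_two (fun h => hn.2 (mem_span_symm hc' h))
    obtain ⟨k, k1, k2⟩ := sep_both (K := K) hb hb'
    have e00 := key f0 k g0
    have e01 := key f0 k g1
    have e10 := key f1 k g0
    have e11 := key f1 k g1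
    simp only [p1, p2, q1, q2, p3, p4, q3, q4] at e00 e01 e10 e11
    apply mul_ne_zero k1 k2
    linear_combination (f1 a'' * g1 c'' * k b'') * e00 + k b * e11 - (f1 a'' * g0 c'' * k b'') * e01
  have h3 : b ∈ Submodule.span K {b'} ∨ c ∈ Submodule.span K {c'} := by
    by_contra! hn
    obtain ⟨f0, p1, p2⟩ := sep_two hn.1
    obtain ⟨g0, q1, q2⟩ := sep_two hn.2
    obtain ⟨f1, p3, p4⟩ := sep_two (fun h => hn.1 (mem_span_symm hb' h))
    obtain ⟨g1, q3, q4⟩ := sep_two (fun h => hn.2 (mem_span_symm hc' h))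
    obtain ⟨k, k1, k2⟩ := sep_both (K := K) ha ha'
    have e00 := key k f0 g0
    have e01 := key k f0 g1
    have e10 := key k f1 g0
    have e11 := key k f1 g1
    simp only [p1, p2, q1, q2, p3, p4, q3, q4] at e00 e01 e10 e11
    apply mul_ne_zero k1 k2
    linear_combination (f1 b'' * g1 c'' * k a'') * e00 + k a * e11 - (f1 b'' * g0 c'' * k a'') * e01
  tauto

end Tens

section Wedge
variable {K : Type*} {V : Type*} [Field K] [AddCommGroup V] [Module K V]

theorem wedge2_eq (q r : V) : wedge2 K V q r = exteriorPower.ιMulti K 2 ![q, r] := rfl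

theorem upd2_zero {V : Type*} (q r x : V) : Function.update ![q, r] 0 x = ![x, r] := by
  ext i; fin_cases i <;> rfl

theorem upd2_one {V : Type*} (q r x : V) : Function.update ![q, r] 1 x = ![q, x] := by
  ext i; fin_cases i <;> rfl

theorem wedge2_add_left (q q' r : V) : wedge2 K V (q + q') r = wedge2 K V q r + wedge2 K V q' r := by
  simp only [wedge2_eq]
  have := (exteriorPower.ιMulti K 2 (M := V)).map_update_add ![q, r] 0 q q'
  simp only [upd2_zero] at this
  exact this

theorem wedge2_smul_left (c : K) (q r : V) : wedge2 K V (c • q) r = c • wedge2 K V q r := by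
  simp only [wedge2_eq]
  have := (exteriorPower.ιMulti K 2 (M := V)).map_update_smul ![q, r] 0 c q
  simp only [upd2_zero] at this
  exact this

theorem wedge2_add_right (q r r' : V) : wedge2 K V q (r + r') = wedge2 K V q r + wedge2 K V q r' := by
  simp only [wedge2_eq]
  have := (exteriorPower.ιMulti K 2 (M := V)).map_update_add ![q, r] 1 r r'
  simp only [upd2_one] at this
  exact this

theorem wedge2_smul_right (c : K) (q r : V) : wedge2 K V q (c • r) = c • wedge2 K V q r := by
  simp only [wedge2_eq]
  have := (exteriorPower.ιMulti K 2 (M := V)).map_update_smul ![q, r] 1 c r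
  simp only [upd2_one] at this
  exact this

theorem wedge2_self (q : V) : wedge2 K V q q = 0 := by
  simp only [wedge2_eq]
  exact (exteriorPower.ιMulti K 2 (M := V)).map_eq_zero_of_eq ![q, q] (i := 0) (j := 1) rfl (by simp)

theorem wedge2_swap (q r : V) : wedge2 K V r q = - wedge2 K V q r := by
  have := wedge2_self (K := K) (q + r)
  rw [wedge2_add_left, wedge2_add_right, wedge2_add_right, wedge2_self, wedge2_self] at this
  rw [eq_neg_iff_add_eq_zero]
  rw [zero_add, add_zero, add_comm] at this
  exact this

theorem wedge2_lift {M : Type*} [AddCommGroup M] [Module K M] (B : V → V → M)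
    (h1 : ∀ x x' y, B (x + x') y = B x y + B x' y) (h2 : ∀ (c : K) x y, B (c • x) y = c • B x y)
    (h3 : ∀ x y y', B x (y + y') = B x y + B x y') (h4 : ∀ (c : K) x y, B x (c • y) = c • B x y)
    (h5 : ∀ x, B x x = 0) : ∃ L : ⋀[K]^2 V →ₗ[K] M, ∀ q r, L (wedge2 K V q r) = B q r := by
  let f : V [⋀^Fin 2]→ₗ[K] M :=
    { toFun := fun v => B (v 0) (v 1)
      map_update_add' := by
        intro inst m i x y
        have : inst = instDecidableEqFin 2 := Subsingleton.elim _ _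
        subst this
        fin_cases i <;> simp [h1, h3]
      map_update_smul' := by
        intro inst m i x y
        have : inst = instDecidableEqFin 2 := Subsingleton.elim _ _
        subst this
        fin_cases i <;> simp [h2, h4]
      map_eq_zero_of_eq' := by
        intro v i j hij hne
        have : v 0 = v 1 := by
          fin_cases i <;> fin_cases j <;> simp_all
        simp [this, h5] }
  refine ⟨exteriorPower.alternatingMapLinearEquiv f, fun q r => ?_⟩
  rw [wedge2_eq, exteriorPower.alternatingMapLinearEquiv_apply_ιMulti]
  rfl

theorem wedge2_lift_fun {M : Type*} [AddCommGroup M] [Module K M] (B : V → V → M)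
    (h1 : ∀ x x' y, B (x + x') y = B x y + B x' y) (h2 : ∀ (c : K) x y, B (c • x) y = c • B x y)
    (h3 : ∀ x y y', B x (y + y') = B x y + B x y') (h4 : ∀ (c : K) x y, B x (c • y) = c • B x y)
    (h5 : ∀ x, B x x = 0) : ∃ L : ⋀[K]^2 V → M, (∀ x y, L (x + y) = L x + L y) ∧
      (∀ (c : K) x, L (c • x) = c • L x) ∧ ∀ q r, L (wedge2 K V q r) = B q r := by
  obtain ⟨L, hL⟩ := wedge2_lift B h1 h2 h3 h4 h5
  exact ⟨L, L.map_add, L.map_smul, hL⟩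

theorem wedge2_liftₛₗ (ζ : K →+* K) {M : Type*} [AddCommGroup M] [Module K M] (B : V → V → M)
    (h1 : ∀ x x' y, B (x + x') y = B x y + B x' y) (h2 : ∀ (c : K) x y, B (c • x) y = ζ c • B x y)
    (h3 : ∀ x y y', B x (y + y') = B x y + B x y') (h4 : ∀ (c : K) x y, B x (c • y) = ζ c • B x y)
    (h5 : ∀ x, B x x = 0) : ∃ L : ⋀[K]^2 V →ₛₗ[ζ] M, ∀ q r, L (wedge2 K V q r) = B q r := by
  obtain ⟨L, hL1, hL2, hL⟩ := @wedge2_lift_fun K V _ _ _ M _ (Module.compHom M ζ) B h1 h2 h3 h4 h5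
  exact ⟨{ toFun := L, map_add' := hL1, map_smul' := hL2 }, hL⟩

theorem wedge2_contract (φ : V →ₗ[K] K) :
    ∃ L : ⋀[K]^2 V →ₗ[K] V, ∀ q r, L (wedge2 K V q r) = φ q • r - φ r • q := by
  apply wedge2_lift
  all_goals intros
  all_goals try simp only [map_add, map_smul, smul_eq_mul]
  all_goals module

theorem wedge2_ne_iff [FiniteDimensional K V] {q r : V} :
    wedge2 K V q r ≠ 0 ↔ Module.finrank K (Submodule.span K {q, r}) = 2 := by
  constructor
  · intro h
    have hq : q ≠ 0 := by
      rintro rfl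
      apply h
      simpa using wedge2_smul_left (0 : K) 0 r
    have hr : r ∉ Submodule.span K {q} := by
      intro hr
      obtain ⟨c, rfl⟩ := Submodule.mem_span_singleton.1 hr
      rw [wedge2_smul_right, wedge2_self, smul_zero] at h
      exact h rfl
    rw [Submodule.span_insert, sub_ext hr, finrank_span_singleton hq]
  · intro h h0
    have hr : r ∉ Submodule.span K {q} := by
      intro hr
      rw [Submodule.span_insert, sup_eq_left.2 ((Submodule.span_singleton_le_iff_mem _ _).2 hr)] at h
      have := finrank_span_le_card (R := K) ({q} : Set V)
      simp at this
      omega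
    have hq : q ≠ 0 := by
      rintro rfl
      rw [Submodule.span_insert_zero] at h
      have := finrank_span_le_card (R := K) ({r} : Set V)
      simp at this
      omega
    obtain ⟨φ, h1, h2⟩ := sep_two hr
    obtain ⟨L, hL⟩ := wedge2_contract φ
    have := hL q r
    rw [h0, h1, h2] at this
    simp [eq_comm] at this
    exact hq this

theorem wedge2_ne_of_notMem {q r : V} (hq : q ≠ 0) (hr : r ∉ Submodule.span K {q}) :
    wedge2 K V q r ≠ 0 := by
  intro h0
  obtain ⟨φ, h1, h2⟩ := sep_two hr
  obtain ⟨L, hL⟩ := wedge2_contract φ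
  have := hL q r
  rw [h0, h1, h2] at this
  simp [eq_comm] at this
  exact hq this

theorem wedge2_mem {q r q' r' : V} (h1 : q' ∈ Submodule.span K {q, r})
    (h2 : r' ∈ Submodule.span K {q, r}) : wedge2 K V q' r' ∈ Submodule.span K {wedge2 K V q r} := by
  obtain ⟨a, b, rfl⟩ := Submodule.mem_span_pair.1 h1
  obtain ⟨c, d, rfl⟩ := Submodule.mem_span_pair.1 h2
  rw [Submodule.mem_span_singleton]
  refine ⟨a * d - b * c, ?_⟩
  simp only [wedge2_add_left, wedge2_add_right, wedge2_smul_left, wedge2_smul_right, wedge2_self,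
    wedge2_swap q r]
  module

theorem wedge2_span_eq [FiniteDimensional K V] {q r q' r' : V} (h0 : wedge2 K V q' r' ≠ 0)
    (h : wedge2 K V q' r' ∈ Submodule.span K {wedge2 K V q r}) :
    Submodule.span K {q', r'} = Submodule.span K {q, r} := by
  obtain ⟨c, hc⟩ := Submodule.mem_span_singleton.1 h
  have h1 : wedge2 K V q r ≠ 0 := by
    intro h1; rw [h1, smul_zero] at hc; exact h0 hc.symm
  rw [wedge2_ne_iff] at h1
  have h2 := wedge2_ne_iff.1 h0
  have key : ∀ q' r' : V, wedge2 K V q' r' ≠ 0 →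
      wedge2 K V q' r' ∈ Submodule.span K {wedge2 K V q r} → q' ∈ Submodule.span K {q, r} := by
    intro q' r' h0 h
    have hr : r' ∉ Submodule.span K {q'} := by
      intro hr
      obtain ⟨c, rfl⟩ := Submodule.mem_span_singleton.1 hr
      rw [wedge2_smul_right, wedge2_self, smul_zero] at h0
      exact h0 rfl
    obtain ⟨c, hc⟩ := Submodule.mem_span_singleton.1 h
    obtain ⟨φ, h1, h2⟩ := sep_two hr
    obtain ⟨L, hL⟩ := wedge2_contract φ
    have := hL q' r'
    rw [← hc, map_smul, hL, h1, h2] at this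
    rw [Submodule.mem_span_pair]
    exact ⟨c * φ r, - c * φ q, by linear_combination (norm := module) -this⟩
  apply Submodule.eq_of_le_of_finrank_eq
  · rw [Submodule.span_le]
    intro x hx
    rcases hx with rfl | rfl
    · exact key _ _ h0 h
    · have h3 := wedge2_swap (K := K) q' x
      refine key _ q' ?_ ?_
      · rw [h3]; exact neg_ne_zero.2 h0
      · rw [h3]; exact neg_mem h
  · rw [h1, h2]

end Wedge

set_option linter.unusedSectionVars false
set_option linter.unusedVariables false
theorem sub_one {K M : Type*} [Field K] [AddCommGroup M] [Module K M] {z : Submodule K M}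
    (hz : Module.finrank K z = 1) : ∃ w ∈ z, w ≠ 0 ∧ z = Submodule.span K {w} := by
  obtain ⟨w, hw, hw'⟩ := finrank_eq_one_iff'.1 hz
  refine ⟨w, w.2, by simpa using hw, ?_⟩
  apply le_antisymm
  · intro t ht
    obtain ⟨c, hc⟩ := hw' ⟨t, ht⟩
    exact Submodule.mem_span_singleton.2 ⟨c, congrArg Subtype.val hc⟩
  · exact (Submodule.span_singleton_le_iff_mem _ _).2 w.2

section Reps
variable {K : Type*} {V : Type*} [Field K] [AddCommGroup V] [Module K V] [FiniteDimensional K V]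

/-- data representing a flag -/
def FDat (Φ : ProjFlag K V) (p q r : V) (e : Module.Dual K V) : Prop :=
  Submodule.span K {p} = Φ.pt ∧ Submodule.span K {q, r} = Φ.ln ∧ LinearMap.ker e = Φ.pl

/-- vector representing a flag -/
def FVec (Φ : ProjFlag K V) (u : FlagTensor K V) : Prop :=
  ∃ (p q r : V) (e : Module.Dual K V), FDat Φ p q r e ∧ u = p ⊗ₜ[K] wedge2 K V q r ⊗ₜ[K] e

theorem isFlagRep_iff {Φ : ProjFlag K V} {x : Submodule K (FlagTensor K V)} :
    IsFlagRep K V Φ x ↔ ∃ u, FVec Φ u ∧ x = Submodule.span K {u} := by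
  constructor
  · rintro ⟨p, q, r, e, h1, h2, h3, h4⟩
    exact ⟨_, ⟨p, q, r, e, ⟨h1, h2, h3⟩, rfl⟩, h4⟩
  · rintro ⟨u, ⟨p, q, r, e, ⟨h1, h2, h3⟩, rfl⟩, h4⟩
    exact ⟨p, q, r, e, h1, h2, h3, h4⟩

theorem FDat.p_ne {Φ : ProjFlag K V} {p q r : V} {e : Module.Dual K V} (h : FDat Φ p q r e) :
    p ≠ 0 := by
  rintro rfl
  have h1 := Φ.finrank_pt
  rw [← h.1, Submodule.span_zero_singleton, finrank_bot] at h1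
  omega

theorem FDat.w_ne {Φ : ProjFlag K V} {p q r : V} {e : Module.Dual K V} (h : FDat Φ p q r e) :
    wedge2 K V q r ≠ 0 := by
  rw [wedge2_ne_iff, h.2.1, Φ.finrank_ln]

theorem FDat.e_ne (hV : Module.finrank K V = 4) {Φ : ProjFlag K V} {p q r : V}
    {e : Module.Dual K V} (h : FDat Φ p q r e) : e ≠ 0 := by
  rintro rfl
  have h1 := Φ.finrank_pl
  rw [← h.2.2, LinearMap.ker_zero, finrank_top, hV] at h1
  omega

theorem finrank_ker_dual (hV : Module.finrank K V = 4) {e : Module.Dual K V} (he : e ≠ 0) :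
    Module.finrank K (LinearMap.ker e) = 3 := by
  have := Module.Dual.finrank_ker_add_one_of_ne_zero he
  omega

theorem mk_flag (hV : Module.finrank K V = 4) {p q r : V} {e : Module.Dual K V} (hp : p ≠ 0)
    (hw : wedge2 K V q r ≠ 0) (he : e ≠ 0) (h : p ∈ Submodule.span K {q, r}) (h1 : e q = 0)
    (h2 : e r = 0) : ∃ Φ : ProjFlag K V, FDat Φ p q r e :=
  ⟨⟨Submodule.span K {p}, Submodule.span K {q, r}, LinearMap.ker e, finrank_span_singleton hp,
    wedge2_ne_iff.1 hw, finrank_ker_dual hV he, (Submodule.span_singleton_le_iff_mem _ _).2 h, by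
      rw [Submodule.span_le]
      rintro x (rfl | rfl)
      · exact h1
      · exact h2⟩, rfl, rfl, rfl⟩

theorem FDat.mem {Φ : ProjFlag K V} {p q r : V} {e : Module.Dual K V} (h : FDat Φ p q r e) :
    p ∈ Submodule.span K {q, r} ∧ e q = 0 ∧ e r = 0 := by
  refine ⟨?_, ?_, ?_⟩
  · rw [h.2.1]; apply Φ.pt_le_ln; rw [← h.1]; exact Submodule.mem_span_singleton_self p
  · rw [← LinearMap.mem_ker, h.2.2]; apply Φ.ln_le_pl; rw [← h.2.1]
    exact Submodule.subset_span (by simp)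
  · rw [← LinearMap.mem_ker, h.2.2]; apply Φ.ln_le_pl; rw [← h.2.1]
    exact Submodule.subset_span (by simp)

theorem exists_span_pt (Φ : ProjFlag K V) : ∃ p, Submodule.span K {p} = Φ.pt := by
  obtain ⟨p, hp⟩ := finrank_le_one_iff.1 Φ.finrank_pt.le
  refine ⟨p, le_antisymm ((Submodule.span_singleton_le_iff_mem _ _).2 p.2) ?_⟩
  intro x hx
  obtain ⟨c, hc⟩ := hp ⟨x, hx⟩
  exact Submodule.mem_span_singleton.2 ⟨c, congrArg Subtype.val hc⟩

theorem exists_span_ln (Φ : ProjFlag K V) {p : V} (hp : Submodule.span K {p} = Φ.pt) :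
    ∃ q, Submodule.span K {p, q} = Φ.ln := by
  obtain ⟨q, hq, hq'⟩ := sub_exists (K := K) (S := Φ.pt) (T := Φ.ln)
    (by rw [Φ.finrank_pt, Φ.finrank_ln]; omega)
  refine ⟨q, ?_⟩
  apply Submodule.eq_of_le_of_finrank_eq
  · rw [Submodule.span_insert, hp]
    exact sup_le Φ.pt_le_ln ((Submodule.span_singleton_le_iff_mem _ _).2 hq)
  · rw [Submodule.span_insert, hp, sub_ext hq', Φ.finrank_pt, Φ.finrank_ln]

theorem exists_ker_pl (hV : Module.finrank K V = 4) (Φ : ProjFlag K V) :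
    ∃ e : Module.Dual K V, LinearMap.ker e = Φ.pl := by
  obtain ⟨x, -, hx⟩ := sub_exists (K := K) (S := Φ.pl) (T := ⊤)
    (by rw [Φ.finrank_pl, finrank_top]; omega)
  obtain ⟨f, hf, hf'⟩ := Submodule.exists_dual_map_eq_bot_of_notMem hx inferInstance
  refine ⟨f, (Submodule.eq_of_le_of_finrank_eq ?_ ?_).symm⟩
  · exact LinearMap.le_ker_iff_map.2 hf'
  · rw [Φ.finrank_pl, finrank_ker_dual hV]
    rintro rfl
    simp at hf

theorem exists_fdat (hV : Module.finrank K V = 4) (Φ : ProjFlag K V) :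
    ∃ p q e, FDat Φ p p q e := by
  obtain ⟨p, hp⟩ := exists_span_pt Φ
  obtain ⟨q, hq⟩ := exists_span_ln Φ hp
  obtain ⟨e, he⟩ := exists_ker_pl hV Φ
  exact ⟨p, q, e, hp, hq, he⟩

theorem FVec.ne (hV : Module.finrank K V = 4) {Φ : ProjFlag K V} {u : FlagTensor K V}
    (h : FVec Φ u) : u ≠ 0 := by
  obtain ⟨p, q, r, e, h, rfl⟩ := h
  exact tens_ne h.p_ne h.w_ne (h.e_ne hV)

theorem exists_fvec (hV : Module.finrank K V = 4) (Φ : ProjFlag K V) : ∃ u, FVec Φ u := by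
  obtain ⟨p, q, e, h⟩ := exists_fdat hV Φ
  exact ⟨_, p, p, q, e, h, rfl⟩

theorem dual_mem_span (hV : Module.finrank K V = 4) {e e' : Module.Dual K V} (he : e ≠ 0) (h : LinearMap.ker e ≤ LinearMap.ker e') :
    e' ∈ Submodule.span K {e} := by
  obtain ⟨x, hx⟩ : ∃ x, e x ≠ 0 := by
    by_contra! hn
    exact he (LinearMap.ext hn)
  rw [Submodule.mem_span_singleton]
  refine ⟨e' x / e x, LinearMap.ext fun y => ?_⟩
  have : y - (e y / e x) • x ∈ LinearMap.ker e := by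
    simp [hx]
  have := h this
  simp at this
  simp only [LinearMap.smul_apply, smul_eq_mul]
  field_simp
  field_simp at this
  linear_combination -this

theorem tens_span {A B C : Type*} [AddCommGroup A] [Module K A]
    [AddCommGroup B] [Module K B] [AddCommGroup C] [Module K C] {a a' : A} {b b' : B} {c c' : C}
    (h1 : a ∈ Submodule.span K {a'}) (h2 : b ∈ Submodule.span K {b'})
    (h3 : c ∈ Submodule.span K {c'}) :
    a ⊗ₜ[K] b ⊗ₜ[K] c ∈ Submodule.span K {a' ⊗ₜ[K] b' ⊗ₜ[K] c'} := by
  obtain ⟨x, rfl⟩ := Submodule.mem_span_singleton.1 h1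
  obtain ⟨y, rfl⟩ := Submodule.mem_span_singleton.1 h2
  obtain ⟨z, rfl⟩ := Submodule.mem_span_singleton.1 h3
  rw [Submodule.mem_span_singleton]
  refine ⟨x * y * z, ?_⟩
  simp only [TensorProduct.tmul_smul, ← TensorProduct.smul_tmul', smul_smul]
  congr 1
  ring

theorem FVec.span_eq (hV : Module.finrank K V = 4) {Φ : ProjFlag K V} {u u' : FlagTensor K V}
    (h : FVec Φ u) (h' : FVec Φ u') : Submodule.span K {u} = Submodule.span K {u'} := by
  apply span_eq_of_mem (h.ne hV)
  obtain ⟨p, q, r, e, h, rfl⟩ := h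
  obtain ⟨p', q', r', e', h', rfl⟩ := h'
  apply tens_span
  · rw [h'.1, ← h.1]; exact Submodule.mem_span_singleton_self p
  · apply wedge2_mem
    · rw [h'.2.1, ← h.2.1]; exact Submodule.subset_span (by simp)
    · rw [h'.2.1, ← h.2.1]; exact Submodule.subset_span (by simp)
  · apply dual_mem_span hV (h'.e_ne hV)
    rw [h.2.2, h'.2.2]

theorem ker_eq_of_mem {e e' : Module.Dual K V} (he : e ≠ 0) (h : e ∈ Submodule.span K {e'}) :
    LinearMap.ker e = LinearMap.ker e' := by
  obtain ⟨c, rfl⟩ := Submodule.mem_span_singleton.1 h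
  apply LinearMap.ker_smul
  rintro rfl
  simp at he

theorem FVec.inj (hV : Module.finrank K V = 4) {Φ Ψ : ProjFlag K V} {u u' : FlagTensor K V}
    (h : FVec Φ u) (h' : FVec Ψ u') (hu : u ∈ Submodule.span K {u'}) : Φ = Ψ := by
  obtain ⟨p, q, r, e, h, rfl⟩ := h
  obtain ⟨p', q', r', e', h', rfl⟩ := h'
  obtain ⟨h1, h2, h3⟩ := tens_inj h.p_ne h.w_ne (h.e_ne hV) hu
  apply ProjFlag.ext'
  · rw [← h.1, ← h'.1]; exact span_eq_of_mem h.p_ne h1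
  · rw [← h.2.1, ← h'.2.1]; exact wedge2_span_eq h.w_ne h2
  · rw [← h.2.2, ← h'.2.2]; exact ker_eq_of_mem (h.e_ne hV) h3

theorem fvec_join (hV : Module.finrank K V = 4) {Φ Ψ : ProjFlag K V} (h : FRel Φ Ψ) :
    ∃ u u', FVec Φ u ∧ FVec Ψ u' ∧ ∀ a b : K, a • u + b • u' ≠ 0 →
      ∃ X, FVec X (a • u + b • u') := by
  obtain ⟨p, q, e, h0⟩ := exists_fdat hV Φ
  rcases h with h | h | h
  · obtain ⟨p', hp'⟩ := exists_span_pt Ψ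
    have h1 : FDat Ψ p' p q e := ⟨hp', by rw [h0.2.1, h.1], by rw [h0.2.2, h.2]⟩
    refine ⟨_, _, ⟨_, _, _, _, h0, rfl⟩, ⟨_, _, _, _, h1, rfl⟩, fun a b hab => ?_⟩
    have e1 : a • (p ⊗ₜ[K] wedge2 K V p q ⊗ₜ[K] e) + b • (p' ⊗ₜ[K] wedge2 K V p q ⊗ₜ[K] e) =
      (a • p + b • p') ⊗ₜ[K] wedge2 K V p q ⊗ₜ[K] e := by
      simp only [TensorProduct.add_tmul, TensorProduct.smul_tmul']
    rw [e1] at hab ⊢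
    have h2 : a • p + b • p' ≠ 0 := by
      intro h; rw [h] at hab; simp at hab
    obtain ⟨X, hX⟩ := mk_flag hV h2 h0.w_ne (h0.e_ne hV)
      (add_mem (Submodule.smul_mem _ a h0.mem.1) (Submodule.smul_mem _ b h1.mem.1)) h0.mem.2.1 h0.mem.2.2
    exact ⟨X, _, _, _, _, hX, rfl⟩
  · obtain ⟨q', hq'⟩ := exists_span_ln Ψ (p := p) (h0.1.trans h.1)
    have h1 : FDat Ψ p p q' e := ⟨h0.1.trans h.1, hq', by rw [h0.2.2, h.2]⟩
    refine ⟨_, _, ⟨_, _, _, _, h0, rfl⟩, ⟨_, _, _, _, h1, rfl⟩, fun a b hab => ?_⟩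
    have e1 : a • (p ⊗ₜ[K] wedge2 K V p q ⊗ₜ[K] e) + b • (p ⊗ₜ[K] wedge2 K V p q' ⊗ₜ[K] e) =
      p ⊗ₜ[K] wedge2 K V p (a • q + b • q') ⊗ₜ[K] e := by
      simp only [wedge2_add_right, wedge2_smul_right, TensorProduct.tmul_add, TensorProduct.add_tmul,
        TensorProduct.tmul_smul, ← TensorProduct.smul_tmul']
    rw [e1] at hab ⊢
    have h2 : wedge2 K V p (a • q + b • q') ≠ 0 := by
      intro h; rw [h] at hab; simp at hab
    obtain ⟨X, hX⟩ := mk_flag hV h0.p_ne h2 (h0.e_ne hV)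
      (Submodule.subset_span (by simp)) h0.mem.2.1 (by simp [h0.mem.2.2, h1.mem.2.2])
    exact ⟨X, _, _, _, _, hX, rfl⟩
  · obtain ⟨e', he'⟩ := exists_ker_pl hV Ψ
    have h1 : FDat Ψ p p q e' := ⟨by rw [h0.1, h.1], by rw [h0.2.1, h.2], he'⟩
    refine ⟨_, _, ⟨_, _, _, _, h0, rfl⟩, ⟨_, _, _, _, h1, rfl⟩, fun a b hab => ?_⟩
    have e1 : a • (p ⊗ₜ[K] wedge2 K V p q ⊗ₜ[K] e) + b • (p ⊗ₜ[K] wedge2 K V p q ⊗ₜ[K] e') =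
      p ⊗ₜ[K] wedge2 K V p q ⊗ₜ[K] (a • e + b • e') := by
      simp only [TensorProduct.tmul_add, TensorProduct.tmul_smul]
    rw [e1] at hab ⊢
    have h2 : a • e + b • e' ≠ 0 := by
      intro h; rw [h] at hab; simp at hab
    obtain ⟨X, hX⟩ := mk_flag hV h0.p_ne h0.w_ne h2
      h0.mem.1 (by simp [h0.mem.2.1, h1.mem.2.1]) (by simp [h0.mem.2.2, h1.mem.2.2])
    exact ⟨X, _, _, _, _, hX, rfl⟩

theorem FVec.smul {Φ : ProjFlag K V} {u : FlagTensor K V} (h : FVec Φ u) {c : K} (hc : c ≠ 0) :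
    FVec Φ (c • u) := by
  obtain ⟨p, q, r, e, h, rfl⟩ := h
  refine ⟨c • p, q, r, e, ⟨?_, h.2⟩, by simp only [TensorProduct.smul_tmul']⟩
  rw [← h.1]
  exact Submodule.span_singleton_smul_eq (IsUnit.mk0 c hc) p

theorem FVec.of_span (hV : Module.finrank K V = 4) {Φ : ProjFlag K V} {u v : FlagTensor K V}
    (h : FVec Φ u) (hv : Submodule.span K {v} = Submodule.span K {u}) : FVec Φ v := by
  have : v ∈ Submodule.span K {u} := by rw [← hv]; exact Submodule.mem_span_singleton_self v
  obtain ⟨c, rfl⟩ := Submodule.mem_span_singleton.1 this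
  apply h.smul
  rintro rfl
  rw [zero_smul, Submodule.span_zero_singleton, eq_comm, Submodule.span_singleton_eq_bot] at hv
  exact h.ne hV hv

theorem frel_of_add (hV : Module.finrank K V = 4) {Φ Ψ X : ProjFlag K V} {u u' : FlagTensor K V}
    (h : FVec Φ u) (h' : FVec Ψ u') (hX : FVec X (u + u')) : FRel Φ Ψ := by
  obtain ⟨p, q, r, e, h, rfl⟩ := h
  obtain ⟨p', q', r', e', h', rfl⟩ := h'
  obtain ⟨p'', q'', r'', e'', h'', hh⟩ := hX
  rcases tens_add h.p_ne h.w_ne (h.e_ne hV) h'.p_ne h'.w_ne (h'.e_ne hV) hh with ⟨h1, h2⟩ | ⟨h1, h2⟩ | ⟨h1, h2⟩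
  · left
    constructor
    · rw [← h.2.1, ← h'.2.1]; exact wedge2_span_eq h.w_ne h1
    · rw [← h.2.2, ← h'.2.2]; exact ker_eq_of_mem (h.e_ne hV) h2
  · right; left
    constructor
    · rw [← h.1, ← h'.1]; exact span_eq_of_mem h.p_ne h1
    · rw [← h.2.2, ← h'.2.2]; exact ker_eq_of_mem (h.e_ne hV) h2
  · right; right
    constructor
    · rw [← h.1, ← h'.1]; exact span_eq_of_mem h.p_ne h1
    · rw [← h.2.1, ← h'.2.1]; exact wedge2_span_eq h.w_ne h2

theorem related_iff (hV : Module.finrank K V = 4) {Φ Ψ : ProjFlag K V}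
    {x y : Submodule K (FlagTensor K V)} (hx : IsFlagRep K V Φ x) (hy : IsFlagRep K V Ψ y) :
    RelatedPts K V x y ↔ FRel Φ Ψ := by
  obtain ⟨u, hu, rfl⟩ := isFlagRep_iff.1 hx
  obtain ⟨v, hv, rfl⟩ := isFlagRep_iff.1 hy
  constructor
  · rintro (h | ⟨hne, h⟩)
    · have : Φ = Ψ := hu.inj hV hv (by rw [← h]; exact Submodule.mem_span_singleton_self u)
      subst this
      exact Or.inl ⟨rfl, rfl⟩
    · have h0 : u + v ≠ 0 := by
        intro h0
        apply hne
        rw [eq_neg_of_add_eq_zero_left h0, ← neg_one_smul K v]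
        exact Submodule.span_singleton_smul_eq (IsUnit.mk0 (-1 : K) (by simp)) v
      obtain ⟨X, hX⟩ := h (Submodule.span K {u + v}) (finrank_span_singleton h0) (by
        rw [Submodule.span_singleton_le_iff_mem]
        exact Submodule.add_mem_sup (Submodule.mem_span_singleton_self u)
          (Submodule.mem_span_singleton_self v))
      obtain ⟨w, hw, hw'⟩ := isFlagRep_iff.1 hX
      exact frel_of_add hV hu hv (hw.of_span hV hw')
  · intro h
    by_cases hne : Submodule.span K {u} = Submodule.span K {v}
    · exact Or.inl hne
    refine Or.inr ⟨hne, fun z hz hle => ?_⟩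
    obtain ⟨u', v', hu', hv', h⟩ := fvec_join hV h
    rw [hu.span_eq hV hu', hv.span_eq hV hv'] at hle
    obtain ⟨w, hwz, hw, e1⟩ := sub_one hz
    obtain ⟨a, ha, b, hb, hab⟩ := Submodule.mem_sup.1 (hle hwz)
    obtain ⟨a, rfl⟩ := Submodule.mem_span_singleton.1 ha
    obtain ⟨b, rfl⟩ := Submodule.mem_span_singleton.1 hb
    obtain ⟨X, hX⟩ := h a b (by rw [hab]; exact hw)
    exact ⟨X, isFlagRep_iff.2 ⟨_, hX, by rw [e1, hab]⟩⟩

theorem flag_equiv (hV : Module.finrank K V = 4) :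
    ∃ t : ProjFlag K V ≃ flagVariety K V, ∀ Φ, IsFlagRep K V Φ (t Φ).1 := by
  have h : ∀ Φ : ProjFlag K V, ∃ x : flagVariety K V, IsFlagRep K V Φ x.1 := by
    intro Φ
    obtain ⟨u, hu⟩ := exists_fvec hV Φ
    have := isFlagRep_iff.2 ⟨u, hu, rfl⟩
    exact ⟨⟨_, Φ, this⟩, this⟩
  choose t ht using h
  refine ⟨Equiv.ofBijective t ⟨?_, ?_⟩, ht⟩
  · intro Φ Ψ h
    obtain ⟨u, hu, hu'⟩ := isFlagRep_iff.1 (ht Φ)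
    obtain ⟨v, hv, hv'⟩ := isFlagRep_iff.1 (ht Ψ)
    apply hu.inj hV hv
    rw [← hv', ← h, hu']
    exact Submodule.mem_span_singleton_self u
  · rintro ⟨x, Φ, hx⟩
    refine ⟨Φ, Subtype.ext ?_⟩
    obtain ⟨u, hu, hu'⟩ := isFlagRep_iff.1 (ht Φ)
    obtain ⟨v, hv, hv'⟩ := isFlagRep_iff.1 hx
    rw [hu']
    change _ = x
    rw [hv']
    exact hu.span_eq hV hv

theorem FVec.memW {Φ : ProjFlag K V} {u : FlagTensor K V} (h : FVec Φ u) :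
    u ∈ spanFlagVariety K V := by
  apply Submodule.subset_span
  simp only [Set.mem_iUnion]
  exact ⟨_, ⟨Φ, isFlagRep_iff.2 ⟨u, h, rfl⟩⟩, Submodule.mem_span_singleton_self u⟩

theorem spanW_induction {S : Submodule K (FlagTensor K V)} (h : ∀ Φ u, FVec Φ u → u ∈ S) :
    spanFlagVariety K V ≤ S := by
  apply Submodule.span_le.2
  intro x hx
  simp only [Set.mem_iUnion] at hx
  obtain ⟨y, ⟨Φ, hy⟩, hx⟩ := hx
  obtain ⟨u, hu, rfl⟩ := isFlagRep_iff.1 hy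
  exact (Submodule.span_singleton_le_iff_mem _ _).2 (h Φ u hu) hx

end Reps

section Uniq
variable {K : Type*} {V : Type*} [Field K] [AddCommGroup V] [Module K V] [FiniteDimensional K V]

theorem fvec_join_ind (hV : Module.finrank K V = 4) {Φ Ψ : ProjFlag K V} {u u' : FlagTensor K V}
    (hne : Φ ≠ Ψ) (hu : FVec Φ u) (hu' : FVec Ψ u') {a b : K} (h : a • u + b • u' = 0) :
    a = 0 ∧ b = 0 := by
  have ha : a = 0 := by
    by_contra ha
    apply hne
    apply hu.inj hV hu'
    rw [Submodule.mem_span_singleton]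
    refine ⟨-(a⁻¹ * b), ?_⟩
    have h2 : a⁻¹ • (a • u + b • u') = 0 := by rw [h, smul_zero]
    rw [smul_add, smul_smul, inv_mul_cancel₀ ha, smul_smul, one_smul] at h2
    rw [neg_smul]
    exact (eq_neg_of_add_eq_zero_left h2).symm
  refine ⟨ha, ?_⟩
  by_contra hb
  rw [ha, zero_smul, zero_add] at h
  exact (hu'.smul hb).ne hV h

theorem uniq_join (hV : Module.finrank K V = 4) {M : Type*} [AddCommGroup M] [Module K M]
    (ζ₁ ζ₂ : K ≃+* K)
    (f₁ : spanFlagVariety K V →ₛₗ[(ζ₁ : K →+* K)] M)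
    (f₂ : spanFlagVariety K V →ₛₗ[(ζ₂ : K →+* K)] M) (hinj : Function.Injective f₂)
    (h : ∀ Φ (v : spanFlagVariety K V), FVec Φ v.1 → ∃ c : K, c ≠ 0 ∧ f₁ v = c • f₂ v)
    {Φ Ψ : ProjFlag K V} (hne : Φ ≠ Ψ) (hr : FRel Φ Ψ) :
    ζ₁ = ζ₂ ∧ ∃ (c : K) (u u' : spanFlagVariety K V), FVec Φ u.1 ∧ FVec Ψ u'.1 ∧
      f₁ u = c • f₂ u ∧ f₁ u' = c • f₂ u' := by
  obtain ⟨u, u', hu, hu', hj⟩ := fvec_join hV hr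
  lift u to spanFlagVariety K V using hu.memW
  lift u' to spanFlagVariety K V using hu'.memW
  obtain ⟨c, -, hc⟩ := h Φ u hu
  obtain ⟨c', h2, hc'⟩ := h Ψ u' hu'
  have key : ∀ a : K, ζ₁ a * c' = ζ₂ a * c := by
    intro a
    have h0 : (1 : K) • (u : FlagTensor K V) + a • (u' : FlagTensor K V) ≠ 0 := fun h0 =>
      one_ne_zero (fvec_join_ind hV hne hu hu' h0).1
    obtain ⟨X, hX⟩ := hj 1 a h0
    obtain ⟨d, -, hd⟩ := h X (u + a • u') (by
      rw [one_smul] at hX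
      exact hX)
    rw [map_add, map_add, map_smulₛₗ, map_smulₛₗ, hc, hc'] at hd
    simp only [RingEquiv.coe_toRingHom] at hd
    have h1 : f₂ ((ζ₂.symm (c - d)) • u + (ζ₂.symm (ζ₁ a * c' - d * ζ₂ a)) • u') = 0 := by
      rw [map_add, map_smulₛₗ, map_smulₛₗ]
      simp only [RingEquiv.coe_toRingHom, RingEquiv.apply_symm_apply]
      linear_combination (norm := module) hd
    have h2 := hinj (h1.trans (map_zero f₂).symm)
    have h3 := fvec_join_ind hV hne hu hu' (congrArg Subtype.val h2)
    simp only [EmbeddingLike.map_eq_zero_iff] at h3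
    linear_combination h3.2 - ζ₂ a * h3.1
  have h1 := key 1
  simp only [map_one, one_mul] at h1
  subst h1
  refine ⟨?_, c', u, u', hu, hu', hc, hc'⟩
  ext a
  exact mul_right_cancel₀ h2 (key a)

theorem uniq_main (hV : Module.finrank K V = 4) {M : Type*} [AddCommGroup M] [Module K M]
    (ζ₁ ζ₂ : K ≃+* K)
    (f₁ : spanFlagVariety K V →ₛₗ[(ζ₁ : K →+* K)] M)
    (f₂ : spanFlagVariety K V →ₛₗ[(ζ₂ : K →+* K)] M) (hinj : Function.Injective f₂)
    (h : ∀ Φ (v : spanFlagVariety K V), FVec Φ v.1 → ∃ c : K, c ≠ 0 ∧ f₁ v = c • f₂ v) :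
    ∃ c : K, c ≠ 0 ∧ ∀ v, f₁ v = c • f₂ v := by
  obtain ⟨x, hx⟩ : ∃ x : V, x ≠ 0 := by
    have : Nontrivial V := Module.nontrivial_of_finrank_pos (R := K) (by omega)
    exact exists_ne 0
  obtain ⟨F, -⟩ := exists_flag_pt hV (Submodule.span K {x}) (finrank_span_singleton hx)
  have hζ : ζ₁ = ζ₂ := by
    obtain ⟨P, h1, h2, h3⟩ := F.exists_pt
    let G : ProjFlag K V := ⟨P, F.ln, F.pl, h1, F.finrank_ln, F.finrank_pl, h2, F.ln_le_pl⟩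
    exact (uniq_join hV ζ₁ ζ₂ f₁ f₂ hinj h (Φ := F) (Ψ := G) (fun h => h3 (by rw [h]))
      (Or.inl ⟨rfl, rfl⟩)).1
  subst hζ
  have hprop : ∀ Φ (u v : spanFlagVariety K V) (c : K), FVec Φ u.1 → FVec Φ v.1 →
      f₁ u = c • f₂ u → f₁ v = c • f₂ v := by
    intro Φ u v c hu hv hc
    have : v.1 ∈ Submodule.span K {u.1} := by
      rw [hu.span_eq hV hv]; exact Submodule.mem_span_singleton_self _
    obtain ⟨a, ha⟩ := Submodule.mem_span_singleton.1 this
    have : v = a • u := Subtype.ext ha.symm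
    rw [this, map_smulₛₗ, map_smulₛₗ, hc, smul_comm]
  choose u hu using exists_fvec (K := K) (V := V) hV
  choose c hc0 hc using fun Φ => h Φ ⟨u Φ, (hu Φ).memW⟩ (hu Φ)
  have hc' : ∀ Φ (v : spanFlagVariety K V), FVec Φ v.1 → f₁ v = c Φ • f₂ v := fun Φ v hv =>
    hprop Φ _ v (c Φ) (hu Φ) hv (hc Φ)
  have hf2 : ∀ Φ (v : spanFlagVariety K V), FVec Φ v.1 → f₂ v ≠ 0 := by
    intro Φ v hv h0
    have := hinj (h0.trans (map_zero f₂).symm)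
    exact hv.ne hV (by rw [this]; rfl)
  have hcc := FConn.all hV c (by
    intro Φ Ψ hr
    by_cases hne : Φ = Ψ
    · rw [hne]
    obtain ⟨-, d, v, v', hv, hv', e1, e2⟩ := uniq_join hV ζ₁ ζ₁ f₁ f₂ hinj h hne hr
    rw [hc' _ _ hv] at e1
    rw [hc' _ _ hv'] at e2
    have := smul_left_injective K (hf2 _ _ hv) e1
    have := smul_left_injective K (hf2 _ _ hv') e2
    simp_all)
  refine ⟨c F, hc0 F, ?_⟩
  let E : Submodule K (spanFlagVariety K V) :=
    { carrier := {v | f₁ v = c F • f₂ v}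
      add_mem' := by
        intro a b ha hb
        simp only [Set.mem_ofPred_eq] at *
        rw [map_add, map_add, ha, hb, smul_add]
      zero_mem' := by simp
      smul_mem' := by
        intro a b hb
        simp only [Set.mem_ofPred_eq] at *
        rw [map_smulₛₗ, map_smulₛₗ, hb, smul_comm] }
  have hE : spanFlagVariety K V ≤ E.map (Submodule.subtype _) := by
    apply spanW_induction
    intro Φ w hw
    refine ⟨⟨w, hw.memW⟩, ?_, rfl⟩
    change f₁ _ = c F • f₂ _
    rw [hc' Φ _ hw, hcc F Φ]
  intro v
  obtain ⟨w, hw, hw'⟩ := hE v.2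
  rw [← Subtype.ext hw']
  exact hw

end Uniq

section Ext
variable {K : Type*} {V : Type*} [Field K] [AddCommGroup V] [Module K V] [FiniteDimensional K V]

/-- map on flags induced by a semilinear map -/
def FInd (e : ProjFlag K V → ProjFlag K V) : Prop :=
  ∃ (ζ : K ≃+* K) (L : FlagTensor K V →ₛₗ[(ζ : K →+* K)] FlagTensor K V),
    ∀ Φ u, FVec Φ u → FVec (e Φ) (L u)

theorem FInd.comp {e e' : ProjFlag K V → ProjFlag K V} (h : FInd e) (h' : FInd e') :
    FInd (e ∘ e') := by
  obtain ⟨ζ, L, hL⟩ := h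
  obtain ⟨ζ', L', hL'⟩ := h'
  refine ⟨ζ'.trans ζ, { toFun := fun x => L (L' x), map_add' := ?_, map_smul' := ?_ }, ?_⟩
  · intro x y; rw [map_add, map_add]
  · intro c x; rw [map_smulₛₗ, map_smulₛₗ]; rfl
  · intro Φ u hu; exact hL _ _ (hL' _ _ hu)

theorem FInd.restrict {e : ProjFlag K V → ProjFlag K V} (h : FInd e) :
    ∃ (ζ : K ≃+* K) (f : spanFlagVariety K V →ₛₗ[(ζ : K →+* K)] spanFlagVariety K V),
      ∀ Φ (v : spanFlagVariety K V), FVec Φ v.1 → FVec (e Φ) (f v).1 := by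
  obtain ⟨ζ, L, hL⟩ := h
  have : spanFlagVariety K V ≤ (spanFlagVariety K V).comap L := by
    apply spanW_induction
    intro Φ u hu
    exact (hL Φ u hu).memW
  refine ⟨ζ, { toFun := fun v => ⟨L v.1, this v.2⟩, map_add' := ?_, map_smul' := ?_ }, ?_⟩
  · intro x y; exact Subtype.ext (map_add L x.1 y.1)
  · intro c x; exact Subtype.ext (map_smulₛₗ L c x.1)
  · intro Φ u hu; exact hL _ _ hu

theorem FInd.bij (hV : Module.finrank K V = 4) (e : ProjFlag K V ≃ ProjFlag K V)
    (h : FInd e) (h' : FInd e.symm) :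
    ∃ (ζ : K ≃+* K) (f : spanFlagVariety K V →ₛₗ[(ζ : K →+* K)] spanFlagVariety K V),
      Function.Bijective f ∧
      ∀ Φ (v : spanFlagVariety K V), FVec Φ v.1 → FVec (e Φ) (f v).1 := by
  obtain ⟨ζ, f, hf⟩ := h.restrict
  obtain ⟨ζ', f', hf'⟩ := h'.restrict
  have key : ∀ (ζ ζ' : K ≃+* K) (f : spanFlagVariety K V →ₛₗ[(ζ : K →+* K)] spanFlagVariety K V)
      (f' : spanFlagVariety K V →ₛₗ[(ζ' : K →+* K)] spanFlagVariety K V)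
      (e : ProjFlag K V ≃ ProjFlag K V)
      (hf : ∀ Φ (v : spanFlagVariety K V), FVec Φ v.1 → FVec (e Φ) (f v).1)
      (hf' : ∀ Φ (v : spanFlagVariety K V), FVec Φ v.1 → FVec (e.symm Φ) (f' v).1),
      ∃ c : K, c ≠ 0 ∧ ∀ v, f' (f v) = c • v := by
    intro ζ ζ' f f' e hf hf'
    let g : spanFlagVariety K V →ₛₗ[((ζ.trans ζ' : K ≃+* K) : K →+* K)] spanFlagVariety K V :=
      { toFun := fun x => f' (f x)
        map_add' := by intro x y; rw [map_add, map_add]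
        map_smul' := by intro c x; rw [map_smulₛₗ, map_smulₛₗ]; rfl }
    let i : spanFlagVariety K V →ₛₗ[((RingEquiv.refl K : K ≃+* K) : K →+* K)] spanFlagVariety K V :=
      { toFun := fun x => x
        map_add' := by intro x y; rfl
        map_smul' := by intro c x; rfl }
    have hi : Function.Injective i := fun x y h => h
    refine uniq_main hV (M := spanFlagVariety K V) (ζ.trans ζ') (RingEquiv.refl K) g i hi ?_
    intro Φ v hv
    have h1 := hf' _ _ (hf _ _ hv)
    rw [e.symm_apply_apply] at h1
    have h2 : (g v).1 ∈ Submodule.span K {v.1} := by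
      rw [hv.span_eq hV h1]; exact Submodule.mem_span_singleton_self _
    obtain ⟨c, hc⟩ := Submodule.mem_span_singleton.1 h2
    refine ⟨c, ?_, Subtype.ext hc.symm⟩
    rintro rfl
    rw [zero_smul] at hc
    exact h1.ne hV hc.symm
  obtain ⟨c, hc0, hc⟩ := key ζ ζ' f f' e hf hf'
  obtain ⟨d, hd0, hd⟩ := key ζ' ζ f' f e.symm hf' hf
  refine ⟨ζ, f, ⟨?_, ?_⟩, hf⟩
  · intro x y hxy
    have := hc x
    rw [hxy, hc y] at this
    exact smul_right_injective _ hc0 this.symm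
  · intro y
    refine ⟨f' (d⁻¹ • y), ?_⟩
    rw [hd, smul_inv_smul₀ hd0]

end Ext

section FtpInd
variable {K : Type*} {V : Type*} [Field K] [AddCommGroup V] [Module K V] [FiniteDimensional K V]

theorem exists_dual_map (ζ : K ≃+* K) (f : V →ₛₗ[(ζ : K →+* K)] V) (hf : Function.Bijective f) :
    ∃ D : Module.Dual K V →ₛₗ[(ζ : K →+* K)] Module.Dual K V, ∀ e x, D e (f x) = ζ (e x) := by
  obtain ⟨g, hg1, hg2⟩ := Function.bijective_iff_has_inverse.1 hf
  have ga : ∀ x y, g (x + y) = g x + g y := fun x y => hf.1 (by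
    rw [map_add, hg2, hg2, hg2])
  have gs : ∀ (c : K) y, g (c • y) = ζ.symm c • g y := fun x y => hf.1 (by
    rw [map_smulₛₗ, hg2, hg2]; simp)
  refine ⟨{ toFun := fun e => { toFun := fun x => ζ (e (g x)), map_add' := ?_, map_smul' := ?_ }, map_add' := ?_, map_smul' := ?_ }, ?_⟩
  · intro x y; simp [ga]
  · intro c y; simp [gs]
  · intro e e'; ext x; simp
  · intro c e; ext x; simp
  · intro e x; simp [hg1 x]

theorem ftp_ind (hV : Module.finrank K V = 4) {e : ProjFlag K V ≃ ProjFlag K V} (he : FTP e) :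
    FInd e := by
  obtain ⟨ζ, f, hf, h⟩ := ftp_semilinear hV he
  obtain ⟨D, hD⟩ := exists_dual_map ζ f hf
  obtain ⟨Λ, hΛ⟩ := wedge2_liftₛₗ (ζ : K →+* K) (fun q r : V => wedge2 K V (f q) (f r))
    (by intro x y z; simp only [map_add, wedge2_add_left])
    (by intro c x y; simp only [map_smulₛₗ, wedge2_smul_left])
    (by intro x y z; simp only [map_add, wedge2_add_right])
    (by intro c x y; simp only [map_smulₛₗ, wedge2_smul_right])
    (by intro x; exact wedge2_self _)
  refine ⟨ζ, TensorProduct.map (TensorProduct.map f Λ) D, ?_⟩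
  rintro Φ u ⟨p, q, r, ε, h0, rfl⟩
  refine ⟨f p, f q, f r, D ε, ⟨?_, ?_, ?_⟩, ?_⟩
  · exact ((h Φ p h0.p_ne).1 h0.1.symm).symm
  · have hw := h0.w_ne
    have hq : q ≠ 0 := by
      rintro rfl
      apply hw
      simpa using wedge2_smul_left (0 : K) 0 r
    have hr0 : r ≠ 0 := by
      rintro rfl
      apply hw
      simpa using wedge2_smul_right (0 : K) q 0
    have hr : f r ∉ Submodule.span K {f q} := by
      intro hr
      obtain ⟨c, hc⟩ := Submodule.mem_span_singleton.1 hr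
      have : r = ζ.symm c • q := hf.1 (by rw [map_smulₛₗ, ← hc]; simp)
      rw [this, wedge2_smul_right, wedge2_self, smul_zero] at hw
      exact hw rfl
    have hfq : f q ≠ 0 := fun h => hq (hf.1 (by rw [h, map_zero]))
    apply Submodule.eq_of_le_of_finrank_eq
    · rw [Submodule.span_le]
      rintro x (rfl | rfl)
      · exact (h Φ q hq).2.1 (by rw [← h0.2.1]; exact Submodule.subset_span (by simp))
      · exact (h Φ r hr0).2.1 (by rw [← h0.2.1]; exact Submodule.subset_span (by simp))
    · rw [(e Φ).finrank_ln]; exact wedge2_ne_iff.1 (wedge2_ne_of_notMem hfq hr)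
  · apply Submodule.eq_of_le_of_finrank_eq
    · intro y hy
      obtain ⟨x, rfl⟩ := hf.2 y
      rw [LinearMap.mem_ker, hD] at hy
      by_cases hx : x = 0
      · rw [hx, map_zero]; exact zero_mem _
      · apply (h Φ x hx).2.2
        rw [← h0.2.2, LinearMap.mem_ker]
        simpa using hy
    · rw [(e Φ).finrank_pl, finrank_ker_dual hV]
      intro hn
      apply h0.e_ne hV
      ext x
      have := hD ε x
      rw [hn] at this
      simpa using this.symm
  · rw [TensorProduct.map_tmul, TensorProduct.map_tmul, hΛ]

end FtpInd

section Dual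
variable {K : Type*} {V : Type*} [Field K] [AddCommGroup V] [Module K V] [FiniteDimensional K V]

theorem wedge_expand (b : Fin 4 → V) (x y : Fin 4 → K) :
    wedge2 K V (x 0 • b 0 + x 1 • b 1 + x 2 • b 2 + x 3 • b 3)
      (y 0 • b 0 + y 1 • b 1 + y 2 • b 2 + y 3 • b 3) =
    (x 0 * y 1 - x 1 * y 0) • wedge2 K V (b 0) (b 1) + (x 0 * y 2 - x 2 * y 0) • wedge2 K V (b 0) (b 2)
    + (x 0 * y 3 - x 3 * y 0) • wedge2 K V (b 0) (b 3) + (x 1 * y 2 - x 2 * y 1) • wedge2 K V (b 1) (b 2)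
    + (x 1 * y 3 - x 3 * y 1) • wedge2 K V (b 1) (b 3) + (x 2 * y 3 - x 3 * y 2) • wedge2 K V (b 2) (b 3) := by
  simp only [wedge2_add_left, wedge2_add_right, wedge2_smul_left, wedge2_smul_right, wedge2_self]
  rw [wedge2_swap (b 0) (b 1), wedge2_swap (b 0) (b 2), wedge2_swap (b 0) (b 3),
    wedge2_swap (b 1) (b 2), wedge2_swap (b 1) (b 3), wedge2_swap (b 2) (b 3)]
  module

/-- complementary minors -/
def cmin (x y : Fin 4 → K) : Fin 4 → Fin 4 → K :=
  ![![0, x 2 * y 3 - x 3 * y 2, -(x 1 * y 3 - x 3 * y 1), x 1 * y 2 - x 2 * y 1],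
    ![-(x 2 * y 3 - x 3 * y 2), 0, x 0 * y 3 - x 3 * y 0, -(x 0 * y 2 - x 2 * y 0)],
    ![x 1 * y 3 - x 3 * y 1, -(x 0 * y 3 - x 3 * y 0), 0, x 0 * y 1 - x 1 * y 0],
    ![-(x 1 * y 2 - x 2 * y 1), x 0 * y 2 - x 2 * y 0, -(x 0 * y 1 - x 1 * y 0), 0]]

theorem cmin_plucker (x y : Fin 4 → K) (a b k l : Fin 4) :
    cmin x y a k * cmin x y b l - cmin x y a l * cmin x y b k = cmin x y a b * cmin x y k l := by
  fin_cases a <;> fin_cases b <;> fin_cases k <;> fin_cases l <;> simp [cmin] <;> ring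

theorem cmin_orth (x y : Fin 4 → K) (a : Fin 4) :
    cmin x y a 0 * x 0 + cmin x y a 1 * x 1 + cmin x y a 2 * x 2 + cmin x y a 3 * x 3 = 0 ∧
    cmin x y a 0 * y 0 + cmin x y a 1 * y 1 + cmin x y a 2 * y 2 + cmin x y a 3 * y 3 = 0 := by
  fin_cases a <;> simp [cmin] <;> constructor <;> ring

theorem cmin_diag (x y : Fin 4 → K) (a b : Fin 4) : cmin x y a a = 0 ∧ cmin x y b a = - cmin x y a b := by
  fin_cases a <;> fin_cases b <;> simp [cmin]

theorem basis_expand (b : Module.Basis (Fin 4) K V) (x : V) :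
    b.repr x 0 • b 0 + b.repr x 1 • b 1 + b.repr x 2 • b 2 + b.repr x 3 • b 3 = x := by
  rw [← Fin.sum_univ_four (fun i => b.repr x i • b i)]
  exact b.sum_repr x

theorem toDual_eq (b : Module.Basis (Fin 4) K V) (x y : V) :
    b.toDual x y = b.repr x 0 * b.repr y 0 + b.repr x 1 * b.repr y 1 + b.repr x 2 * b.repr y 2 +
      b.repr x 3 * b.repr y 3 := by
  conv_lhs => rw [← basis_expand b y]
  simp only [map_add, map_smul, b.toDual_apply_left, smul_eq_mul]
  ring

theorem toDual_symm' (b : Module.Basis (Fin 4) K V) (x y : V) : b.toDual x y = b.toDual y x := by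
  rw [toDual_eq, toDual_eq]; ring

theorem exists_star (b : Module.Basis (Fin 4) K V) : ∃ S : ⋀[K]^2 V →ₗ[K] ⋀[K]^2 V,
    ∀ q r, wedge2 K V q r ≠ 0 → ∃ s t, S (wedge2 K V q r) = wedge2 K V s t ∧
      wedge2 K V s t ≠ 0 ∧ b.toDual s q = 0 ∧ b.toDual s r = 0 ∧ b.toDual t q = 0 ∧
      b.toDual t r = 0 := by
  obtain ⟨S, hS⟩ := wedge2_lift (K := K) (V := V) (fun q r =>
    cmin (b.repr q) (b.repr r) 0 1 • wedge2 K V (b 0) (b 1)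
    + cmin (b.repr q) (b.repr r) 0 2 • wedge2 K V (b 0) (b 2)
    + cmin (b.repr q) (b.repr r) 0 3 • wedge2 K V (b 0) (b 3)
    + cmin (b.repr q) (b.repr r) 1 2 • wedge2 K V (b 1) (b 2)
    + cmin (b.repr q) (b.repr r) 1 3 • wedge2 K V (b 1) (b 3)
    + cmin (b.repr q) (b.repr r) 2 3 • wedge2 K V (b 2) (b 3))
    (by intro x y z; simp [cmin]; module) (by intro c x y; simp [cmin]; module)
    (by intro x y z; simp [cmin]; module) (by intro c x y; simp [cmin]; module)
    (by intro x; simp [cmin]; module)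
  refine ⟨S, fun q r hw => ?_⟩
  set M := cmin (b.repr q) (b.repr r) with hM
  obtain ⟨i, j, hij⟩ : ∃ i j, M i j ≠ 0 := by
    by_contra! hn
    apply hw
    rw [← basis_expand b q, ← basis_expand b r, wedge_expand b (b.repr q) (b.repr r)]
    have h0 : b.repr q 0 * b.repr r 1 - b.repr q 1 * b.repr r 0 = 0 := hn 2 3
    have h1 : b.repr q 0 * b.repr r 2 - b.repr q 2 * b.repr r 0 = 0 := neg_eq_zero.1 (hn 1 3)
    have h2 : b.repr q 0 * b.repr r 3 - b.repr q 3 * b.repr r 0 = 0 := hn 1 2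
    have h3 : b.repr q 1 * b.repr r 2 - b.repr q 2 * b.repr r 1 = 0 := hn 0 3
    have h4 : b.repr q 1 * b.repr r 3 - b.repr q 3 * b.repr r 1 = 0 := neg_eq_zero.1 (hn 0 2)
    have h5 : b.repr q 2 * b.repr r 3 - b.repr q 3 * b.repr r 2 = 0 := hn 0 1
    rw [h0, h1, h2, h3, h4, h5]
    simp only [zero_smul, add_zero]
  let s : Fin 4 → V := fun a => M a 0 • b 0 + M a 1 • b 1 + M a 2 • b 2 + M a 3 • b 3
  have hs : ∀ a k, b.repr (s a) k = M a k := by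
    intro a k
    have : s a = ∑ k, M a k • b k := by rw [Fin.sum_univ_four]
    rw [this, b.repr_sum_self]
  have h0 : wedge2 K V (s i) (s j) ≠ 0 := by
    apply wedge2_ne_of_notMem
    · intro h
      apply hij
      rw [← hs, h]; simp
    · intro h
      obtain ⟨c, hc⟩ := Submodule.mem_span_singleton.1 h
      have := congrArg (fun x => b.repr x i) hc
      simp only [map_smul, Finsupp.smul_apply, hs, smul_eq_mul] at this
      rw [hM, (cmin_diag _ _ i j).1, (cmin_diag _ _ i j).2, mul_zero, eq_comm, neg_eq_zero] at this
      exact hij this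
  have h1 : wedge2 K V (s i) (s j) = M i j • S (wedge2 K V q r) := by
    rw [hS, wedge_expand b (M i) (M j)]
    simp only [hM, cmin_plucker]
    module
  have ho : ∀ a, b.toDual (s a) q = 0 ∧ b.toDual (s a) r = 0 := by
    intro a
    rw [toDual_eq, toDual_eq, hs, hs, hs, hs]
    exact cmin_orth _ _ a
  refine ⟨(M i j)⁻¹ • s i, s j, ?_, ?_, ?_, ?_, (ho j).1, (ho j).2⟩
  · rw [wedge2_smul_left, h1, inv_smul_smul₀ hij]
  · rw [wedge2_smul_left]; exact smul_ne_zero (inv_ne_zero hij) h0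
  · rw [map_smul, LinearMap.smul_apply, (ho i).1, smul_zero]
  · rw [map_smul, LinearMap.smul_apply, (ho i).2, smul_zero]

theorem exists_flip3 {A B C : Type*} [AddCommGroup A] [Module K A]
    [AddCommGroup B] [Module K B] [AddCommGroup C] [Module K C] :
    ∃ L : A ⊗[K] B ⊗[K] C →ₗ[K] C ⊗[K] B ⊗[K] A, ∀ a b c,
      L (a ⊗ₜ[K] b ⊗ₜ[K] c) = c ⊗ₜ[K] b ⊗ₜ[K] a :=
  ⟨(TensorProduct.assoc K C B A).symm.toLinearMap ∘ₗ
    TensorProduct.map LinearMap.id (TensorProduct.comm K A B).toLinearMap ∘ₗ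
    (TensorProduct.comm K (A ⊗[K] B) C).toLinearMap, fun a b c => by simp⟩

theorem dual_nondeg (b : Module.Basis (Fin 4) K V) :
    LinearMap.BilinForm.Nondegenerate (b.toDual : LinearMap.BilinForm K V) := by
  refine ⟨fun x hx => b.toDual_inj x (LinearMap.ext hx), fun x hx => b.toDual_inj x (LinearMap.ext fun y => ?_)⟩
  rw [toDual_symm']; exact hx y

/-- orthogonal complement for the standard form -/
noncomputable def perp (b : Module.Basis (Fin 4) K V) (W : Submodule K V) : Submodule K V :=
  LinearMap.BilinForm.orthogonal (b.toDual : LinearMap.BilinForm K V) W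

theorem mem_perp {b : Module.Basis (Fin 4) K V} {W : Submodule K V} {y : V} :
    y ∈ perp b W ↔ ∀ x ∈ W, b.toDual x y = 0 := Iff.rfl

theorem perp_finrank (hV : Module.finrank K V = 4) (b : Module.Basis (Fin 4) K V)
    (W : Submodule K V) : Module.finrank K (perp b W) = 4 - Module.finrank K W := by
  rw [← hV]; exact LinearMap.BilinForm.finrank_orthogonal (dual_nondeg b) W

theorem perp_perp (b : Module.Basis (Fin 4) K V) (W : Submodule K V) : perp b (perp b W) = W :=
  LinearMap.BilinForm.orthogonal_orthogonal (dual_nondeg b)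
    (fun x y h => by rw [toDual_symm']; exact h) W

theorem perp_le (b : Module.Basis (Fin 4) K V) {W W' : Submodule K V} (h : W ≤ W') :
    perp b W' ≤ perp b W := LinearMap.BilinForm.orthogonal_le h

theorem perp_inj (b : Module.Basis (Fin 4) K V) {W W' : Submodule K V} :
    perp b W = perp b W' ↔ W = W' :=
  ⟨fun h => by rw [← perp_perp b W, h, perp_perp], fun h => by rw [h]⟩

/-- the standard duality on flags -/
noncomputable def fdual (hV : Module.finrank K V = 4) (b : Module.Basis (Fin 4) K V) (Φ : ProjFlag K V) :
    ProjFlag K V where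
  pt := perp b Φ.pl
  ln := perp b Φ.ln
  pl := perp b Φ.pt
  finrank_pt := by rw [perp_finrank hV, Φ.finrank_pl]
  finrank_ln := by rw [perp_finrank hV, Φ.finrank_ln]
  finrank_pl := by rw [perp_finrank hV, Φ.finrank_pt]
  pt_le_ln := perp_le b Φ.ln_le_pl
  ln_le_pl := perp_le b Φ.pt_le_ln

theorem fdual_invol (hV : Module.finrank K V = 4) (b : Module.Basis (Fin 4) K V) :
    Function.Involutive (fdual hV b) := fun Φ =>
  ProjFlag.ext' (perp_perp b _) (perp_perp b _) (perp_perp b _)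

theorem fdual_ind (hV : Module.finrank K V = 4) (b : Module.Basis (Fin 4) K V) :
    FInd (fdual hV b) := by
  obtain ⟨S, hS⟩ := exists_star b
  obtain ⟨X, hX⟩ := exists_flip3 (K := K) (A := Module.Dual K V) (B := ⋀[K]^2 V) (C := V)
  let d := b.toDualEquiv
  have hd : ∀ x y, d x y = b.toDual x y := fun x y => rfl
  let L := X ∘ₗ TensorProduct.map (TensorProduct.map d.toLinearMap S) d.symm.toLinearMap
  refine ⟨RingEquiv.refl K, { toFun := L, map_add' := L.map_add, map_smul' := L.map_smul }, ?_⟩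
  rintro Φ u ⟨p, q, r, e, h0, rfl⟩
  obtain ⟨s, t, hst, hw, h1, h2, h3, h4⟩ := hS q r h0.w_ne
  refine ⟨d.symm e, s, t, d p, ⟨?_, ?_, ?_⟩, ?_⟩
  · apply Submodule.eq_of_le_of_finrank_eq
    · rw [Submodule.span_singleton_le_iff_mem]
      refine mem_perp.2 fun x hx => ?_
      rw [toDual_symm', ← hd, LinearEquiv.apply_symm_apply]
      rw [← h0.2.2] at hx
      exact hx
    · rw [(fdual hV b Φ).finrank_pt, finrank_span_singleton]
      simpa using h0.e_ne hV
  · apply Submodule.eq_of_le_of_finrank_eq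
    · have key : ∀ s, b.toDual s q = 0 → b.toDual s r = 0 → s ∈ perp b Φ.ln := by
        intro s h1 h2
        refine mem_perp.2 fun x hx => ?_
        rw [← h0.2.1] at hx
        obtain ⟨a, c, rfl⟩ := Submodule.mem_span_pair.1 hx
        rw [toDual_symm', map_add, map_smul, map_smul, h1, h2, smul_zero, smul_zero, add_zero]
      rw [Submodule.span_le]
      rintro x (rfl | rfl)
      · exact key _ h1 h2
      · exact key _ h3 h4
    · rw [(fdual hV b Φ).finrank_ln]; exact wedge2_ne_iff.1 hw
  · refine (Submodule.eq_of_le_of_finrank_eq ?_ ?_).symm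
    · intro y hy
      exact mem_perp.1 hy p (by rw [← h0.1]; exact Submodule.mem_span_singleton_self p)
    · rw [(fdual hV b Φ).finrank_pl, finrank_ker_dual hV]
      simpa using h0.p_ne
  · change L _ = _
    simp only [L, LinearMap.comp_apply, TensorProduct.map_tmul]
    rw [hX, hst]
    rfl

theorem faut_ind (hV : Module.finrank K V = 4) (e : ProjFlag K V ≃ ProjFlag K V)
    (he : ∀ F G, FRel F G ↔ FRel (e F) (e G)) : FInd e := by
  rcases faut_dichotomy hV e he with h | ⟨h1, h2, h3⟩
  · exact ftp_ind hV h
  let b : Module.Basis (Fin 4) K V := Module.finBasisOfFinrankEq K V hV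
  let δ : ProjFlag K V ≃ ProjFlag K V := (fdual_invol hV b).toPerm
  have hδ : ∀ F, δ F = fdual hV b F := fun F => rfl
  have d1 : ∀ F G : ProjFlag K V, FA1 F G ↔ FA3 (δ F) (δ G) := by
    intro F G
    simp only [FA1, FA3, hδ, fdual, perp_inj]
    tauto
  have d2 : ∀ F G : ProjFlag K V, FA2 F G ↔ FA2 (δ F) (δ G) := by
    intro F G
    simp only [FA2, hδ, fdual, perp_inj]
    tauto
  have d3 : ∀ F G : ProjFlag K V, FA3 F G ↔ FA1 (δ F) (δ G) := by
    intro F G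
    simp only [FA1, FA3, hδ, fdual, perp_inj]
    tauto
  have h4 : FTP (δ.trans e) := by
    apply ftp_of
    · intro F G; rw [d1, h3]; rfl
    · intro F G; rw [d2, h2]; rfl
    · intro F G; rw [d3, h1]; rfl
  have h5 := (ftp_ind hV h4).comp (fdual_ind hV b)
  have h6 : (e : ProjFlag K V → ProjFlag K V) = (δ.trans e) ∘ fdual hV b := by
    funext F
    simp only [Function.comp_apply, Equiv.trans_apply, hδ]
    rw [fdual_invol hV b F]
  rw [h6]
  exact h5

end Dual

/-- **Theorem 2.** Every bijection of the flag variety preserving relatedness of points in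
both directions is induced by a semilinear bijection of `W = span 𝒢`, and any two such
semilinear bijections induce the same map on 1-dimensional subspaces of `W`; that is, the
bijection extends to a unique collineation of the subspace spanned by `𝒢`. -/
theorem flagVariety_automorphism_extends_to_unique_collineation
    (hV : Module.finrank K V = 4)
    (η : flagVariety K V → flagVariety K V) (hbij : Function.Bijective η)
    (hη : ∀ x y : flagVariety K V,
      RelatedPts K V x.1 y.1 ↔ RelatedPts K V (η x).1 (η y).1) :
    (∃ (ζ : K ≃+* K)
        (f : spanFlagVariety K V →ₛₗ[(ζ : K →+* K)] spanFlagVariety K V),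
        Function.Bijective f ∧
        ∀ (x : flagVariety K V) (v : spanFlagVariety K V),
          Submodule.span K {(v : FlagTensor K V)} = x.1 →
          Submodule.span K {(f v : FlagTensor K V)} = (η x).1) ∧
    (∀ (ζ₁ ζ₂ : K ≃+* K)
        (f₁ : spanFlagVariety K V →ₛₗ[(ζ₁ : K →+* K)] spanFlagVariety K V)
        (f₂ : spanFlagVariety K V →ₛₗ[(ζ₂ : K →+* K)] spanFlagVariety K V),
        Function.Bijective f₁ → Function.Bijective f₂ →
        (∀ (x : flagVariety K V) (v : spanFlagVariety K V),
          Submodule.span K {(v : FlagTensor K V)} = x.1 →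
          Submodule.span K {(f₁ v : FlagTensor K V)} = (η x).1) →
        (∀ (x : flagVariety K V) (v : spanFlagVariety K V),
          Submodule.span K {(v : FlagTensor K V)} = x.1 →
          Submodule.span K {(f₂ v : FlagTensor K V)} = (η x).1) →
        ∀ v : spanFlagVariety K V,
          Submodule.span K {(f₁ v : FlagTensor K V)} =
          Submodule.span K {(f₂ v : FlagTensor K V)}) := by
  haveI : FiniteDimensional K V := FiniteDimensional.of_finrank_pos (by omega)
  obtain ⟨t, ht⟩ := flag_equiv (K := K) (V := V) hV
  let E : flagVariety K V ≃ flagVariety K V := Equiv.ofBijective η hbij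
  let e : ProjFlag K V ≃ ProjFlag K V := (t.trans E).trans t.symm
  have hte : ∀ Φ, t (e Φ) = η (t Φ) := fun Φ => by
    simp only [e, Equiv.trans_apply, Equiv.apply_symm_apply]
    rfl
  have he : ∀ F G, FRel F G ↔ FRel (e F) (e G) := by
    intro F G
    rw [← related_iff hV (ht F) (ht G), ← related_iff hV (ht (e F)) (ht (e G)), hte, hte]
    exact hη _ _
  have he' : ∀ F G, FRel F G ↔ FRel (e.symm F) (e.symm G) := by
    intro F G
    rw [he (e.symm F), e.apply_symm_apply, e.apply_symm_apply]
  have hspan : ∀ (x : flagVariety K V) (v : FlagTensor K V), Submodule.span K {v} = x.1 ↔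
      FVec (t.symm x) v := by
    intro x v
    obtain ⟨u, hu, hu'⟩ := isFlagRep_iff.1 (ht (t.symm x))
    rw [t.apply_symm_apply] at hu'
    constructor
    · intro h
      exact hu.of_span hV (h.trans hu')
    · intro h
      rw [hu']
      exact h.span_eq hV hu
  constructor
  · obtain ⟨ζ, f, hf, hfe⟩ := FInd.bij hV e (faut_ind hV e he) (faut_ind hV e.symm he')
    refine ⟨ζ, f, hf, fun x v hv => ?_⟩
    rw [hspan] at hv ⊢
    have h1 := hfe _ _ hv
    have h2 : e (t.symm x) = t.symm (η x) := by
      rw [Equiv.eq_symm_apply, hte, t.apply_symm_apply]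
    rw [h2] at h1
    exact h1
  · intro ζ₁ ζ₂ f₁ f₂ hf₁ hf₂ h1 h2
    have key : ∀ Φ (v : spanFlagVariety K V), FVec Φ v.1 → ∃ c : K, c ≠ 0 ∧ f₁ v = c • f₂ v := by
      intro Φ v hv
      have hv' : Submodule.span K {v.1} = (t Φ).1 := (hspan _ _).2 (by
        rw [t.symm_apply_apply]; exact hv)
      have e1 := h1 _ v hv'
      have e2 := h2 _ v hv'
      have h3 : (f₁ v).1 ∈ Submodule.span K {(f₂ v).1} := by
        rw [e2, ← e1]; exact Submodule.mem_span_singleton_self _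
      obtain ⟨c, hc⟩ := Submodule.mem_span_singleton.1 h3
      refine ⟨c, ?_, Subtype.ext hc.symm⟩
      rintro rfl
      rw [zero_smul] at hc
      exact ((hspan _ _).1 e1).ne hV hc.symm
    obtain ⟨c, hc0, hc⟩ := uniq_main (M := spanFlagVariety K V) hV ζ₁ ζ₂ f₁ f₂ hf₂.1 key
    intro v
    rw [hc v]
    exact Submodule.span_singleton_smul_eq (IsUnit.mk0 c hc0) _
end
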